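/- Let n ≥ 2 and γ ∈ (0,1). Let S be a simplex in ℝⁿ with affinely independent vertices x₁,…,x_{n+1}, relative width w(S) > γ, and barycenter x₀ = (1/(n+1))·Σᵢ xᵢ. There exist constants K = K(γ,n), c = c(γ,n) > 0, C = C(γ,n) ≥ K, r = r(γ,n) > 0 and N₀ = N₀(γ,n) such that: if W is measurable with |W| ≤ 1, u is a smooth solution of Δ²u = W·u on B₁(0) ⊂ ℝⁿ not identically zero, S ⊂ B_r(0), N > N₀, and for each i ∈ {1,…,n+1} there exists rᵢ ≤ K·diam(S)/2 with N(xᵢ, rᵢ) > N, then N(x₀, C·diam(S)) > (1+c)·N. -/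

import Mathlib

open MeasureTheory Metric Set
open scoped RealInnerProductSpace

noncomputable section

/-- The Euclidean Laplacian of `u : ℝⁿ → ℝ`. -/
def lap {n : ℕ} (u : EuclideanSpace ℝ (Fin n) → ℝ) (x : EuclideanSpace ℝ (Fin n)) : ℝ :=
  ∑ i : Fin n, iteratedFDeriv ℝ 2 u x ![EuclideanSpace.single i 1, EuclideanSpace.single i 1]

/-- `sup_s |u|`. -/
def supAbs {n : ℕ} (u : EuclideanSpace ℝ (Fin n) → ℝ) (s : Set (EuclideanSpace ℝ (Fin n))) : ℝ :=
  sSup ((fun y => |u y|) '' s)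

/-- The doubling index `N(x,r) = log₂ ( sup_{B_{2r}(x)} |u| / sup_{B_r(x)} |u| )`. -/
def dbIdx {n : ℕ} (u : EuclideanSpace ℝ (Fin n) → ℝ) (x : EuclideanSpace ℝ (Fin n)) (r : ℝ) : ℝ :=
  Real.logb 2 (supAbs u (ball x (2 * r)) / supAbs u (ball x r))

/-- The width of the simplex with vertices `x i`: the minimum over unit directions `v` of
`maxᵢ ⟪xᵢ, v⟫ - minᵢ ⟪xᵢ, v⟫`. -/
def simplexWidth {n : ℕ} (x : Fin (n + 1) → EuclideanSpace ℝ (Fin n)) : ℝ :=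
  sInf ((fun v => (Finset.univ.sup' Finset.univ_nonempty fun i => ⟪x i, v⟫)
      - Finset.univ.inf' Finset.univ_nonempty fun i => ⟪x i, v⟫) ''
    sphere (0 : EuclideanSpace ℝ (Fin n)) 1)

/-!
Conjugating `Δ` by the weight `|x| ^ (-τ - n / 2)`, with logarithmic factors that are large near
the edges of an annulus, and integrating by parts gives a Carleman inequality for `Δ`; iterating
it gives one for `Δ²`. Applied to a cut-off solution, with Caccioppoli bounds for the
commutators, it yields a three-ball inequality. Taking `τ` just below `N` there shows that growth
of order `N` around a point persists on all larger balls, with order at least `(1 - ε) ^ 2 * N`.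

At the vertices, the supremum of `|u|` over balls of radius `t * ρ` therefore exceeds the one
over balls of radius `ρ = K * diam S` by a factor `t ^ ((1 - ε) ^ 2 * N)`. Because the width is
bounded below, the vertex balls of radius `ρ` cover a ball of radius `(1 + δ) * ρ` around the
barycenter. Seen from there the same growth happens between radii whose ratio is smaller than
`t`, so the order is multiplied by a fixed factor larger than `1`, and this gain beats the losses
`1 - ε`.
-/

open scoped ContDiff

/-- Euclidean space `ℝⁿ`. -/
abbrev Euc (n : ℕ) : Type := EuclideanSpace ℝ (Fin n)

/-- Infinitely differentiable real functions on `ℝⁿ`. -/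
abbrev IsSmooth {n : ℕ} (f : Euc n → ℝ) : Prop := ContDiff ℝ ∞ f

/-- The `i`-th standard basis vector of `ℝⁿ`. -/
def stdVec {n : ℕ} (i : Fin n) : Euc n := EuclideanSpace.single i 1

/-- The derivative of `f` along the vector field `V`. -/
def derivAlong {n : ℕ} (V : Euc n → Euc n) (f : Euc n → ℝ) (x : Euc n) : ℝ := fderiv ℝ f x (V x)

/-- The directional derivative in the constant direction `v`. -/
local notation "∂[" v "]" => derivAlong (fun _ => v)

/-- The pointwise inner product `∇f · ∇g` of two gradients. -/
def gradInner {n : ℕ} (f g : Euc n → ℝ) (x : Euc n) : ℝ :=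
  ∑ i, ∂[stdVec i] f x * ∂[stdVec i] g x

section Calculus

variable {n : ℕ} {f g : Euc n → ℝ} {V W : Euc n → Euc n} {x : Euc n}

lemma stdVec_apply (i j : Fin n) : (stdVec i : Euc n) j = if j = i then 1 else 0 := by
  simp [stdVec]

lemma sum_smul_stdVec (x : Euc n) : ∑ i, x i • stdVec i = x := by
  simpa [stdVec] using (EuclideanSpace.basisFun (Fin n) ℝ).sum_repr x

lemma inner_stdVec (x : Euc n) (i : Fin n) : ⟪x, stdVec i⟫ = x i := by
  rw [real_inner_comm]
  simp [stdVec, EuclideanSpace.inner_single_left]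

protected lemma IsSmooth.differentiable (hf : IsSmooth f) : Differentiable ℝ f :=
  ContDiff.differentiable hf (by simp)

lemma IsSmooth.contDiff_fderiv (hf : IsSmooth f) : ContDiff ℝ ∞ (fderiv ℝ f) :=
  hf.fderiv_right (by exact_mod_cast le_rfl)

protected lemma IsSmooth.derivAlong (hf : IsSmooth f) (hV : ContDiff ℝ ∞ V) :
    IsSmooth (derivAlong V f) :=
  hf.contDiff_fderiv.clm_apply hV

lemma IsSmooth.dirDeriv (hf : IsSmooth f) (v : Euc n) : IsSmooth (∂[v] f) :=
  hf.derivAlong contDiff_const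

lemma IsSmooth.fderiv_fderiv_comm (hf : IsSmooth f) (x v w : Euc n) :
    fderiv ℝ (fderiv ℝ f) x v w = fderiv ℝ (fderiv ℝ f) x w v :=
  (ContDiffAt.isSymmSndFDerivAt hf.contDiffAt
    (by simpa using WithTop.coe_le_coe.2 (le_top : (2 : ℕ∞) ≤ ⊤))) v w

lemma derivAlong_mul (hf : DifferentiableAt ℝ f x) (hg : DifferentiableAt ℝ g x) :
    derivAlong V (fun y => f y * g y) x = f x * derivAlong V g x + derivAlong V f x * g x := by
  simp only [derivAlong, fderiv_fun_mul hf hg, add_apply, smul_apply, smul_eq_mul]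
  ring

lemma derivAlong_add (hf : DifferentiableAt ℝ f x) (hg : DifferentiableAt ℝ g x) :
    derivAlong V (fun y => f y + g y) x = derivAlong V f x + derivAlong V g x := by
  simp only [derivAlong, fderiv_fun_add hf hg, add_apply]

lemma derivAlong_const (c : ℝ) : derivAlong V (fun _ => c) x = 0 := by
  simp [derivAlong]

lemma derivAlong_const_mul (c : ℝ) (hf : DifferentiableAt ℝ f x) :
    derivAlong V (fun y => c * f y) x = c * derivAlong V f x := by
  rw [derivAlong_mul (by fun_prop) hf, derivAlong_const, zero_mul, add_zero]

lemma derivAlong_congr (h : f =ᶠ[nhds x] g) : derivAlong V f x = derivAlong V g x := by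
  rw [derivAlong, derivAlong, h.fderiv_eq]

lemma derivAlong_congr_of_isOpen {Ω : Set (Euc n)} (hΩ : IsOpen Ω) (h : ∀ x ∈ Ω, f x = g x)
    (hx : x ∈ Ω) : derivAlong V f x = derivAlong V g x :=
  derivAlong_congr (Filter.eventuallyEq_of_mem (hΩ.mem_nhds hx) h)

lemma derivAlong_eq_sum (x : Euc n) :
    derivAlong V f x = ∑ i, V x i * ∂[stdVec i] f x := by
  conv_lhs => rw [derivAlong, ← sum_smul_stdVec (V x)]
  simp [derivAlong]

lemma derivAlong_derivAlong (hf : IsSmooth f) (hW : DifferentiableAt ℝ W x) :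
    derivAlong V (derivAlong W f) x =
      fderiv ℝ (fderiv ℝ f) x (V x) (W x) + fderiv ℝ f x (fderiv ℝ W x (V x)) := by
  have h : HasFDerivAt (derivAlong W f) _ x :=
    (hf.contDiff_fderiv.differentiable (by simp) x).hasFDerivAt.clm_apply hW.hasFDerivAt
  rw [derivAlong, h.fderiv]
  simp [add_comm]

lemma dirDeriv_dirDeriv (hf : IsSmooth f) (v w x : Euc n) :
    ∂[v] (∂[w] f) x = fderiv ℝ (fderiv ℝ f) x v w := by
  simp [derivAlong_derivAlong hf]

lemma dirDeriv_fun_mul (v : Euc n) (hf : IsSmooth f) (hg : IsSmooth g) :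
    ∂[v] (fun y => f y * g y) = fun x => f x * ∂[v] g x + ∂[v] f x * g x :=
  funext fun x => derivAlong_mul (hf.differentiable x) (hg.differentiable x)

protected lemma IsSmooth.gradInner (hf : IsSmooth f) (hg : IsSmooth g) : IsSmooth (gradInner f g) :=
  ContDiff.sum fun _ _ => (hf.dirDeriv _).mul (hg.dirDeriv _)

lemma gradInner_comm (f g : Euc n → ℝ) (x : Euc n) : gradInner f g x = gradInner g f x := by
  simp only [gradInner, mul_comm]

lemma gradInner_self_nonneg (f : Euc n → ℝ) (x : Euc n) : 0 ≤ gradInner f f x :=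
  Finset.sum_nonneg fun _ _ => mul_self_nonneg _

lemma gradInner_sq_le (f g : Euc n → ℝ) (x : Euc n) :
    gradInner f g x ^ 2 ≤ gradInner f f x * gradInner g g x := by
  simpa [gradInner, sq] using Finset.sum_mul_sq_le_sq_mul_sq Finset.univ
    (fun i => ∂[stdVec i] f x) (fun i => ∂[stdVec i] g x)

lemma gradInner_congr_left (h : f =ᶠ[nhds x] g) (u : Euc n → ℝ) :
    gradInner f u x = gradInner g u x := by
  simp only [gradInner, derivAlong_congr h]

lemma gradInner_const_left (c : ℝ) (x : Euc n) : gradInner (fun _ => c) f x = 0 := by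
  simp [gradInner, derivAlong_const]

lemma lap_eq_sum_fderiv (f : Euc n → ℝ) (x : Euc n) :
    lap f x = ∑ i, fderiv ℝ (fderiv ℝ f) x (stdVec i) (stdVec i) := by
  simp [lap, stdVec, iteratedFDeriv_two_apply]

lemma lap_eq_sum_dirDeriv (hf : IsSmooth f) (x : Euc n) :
    lap f x = ∑ i, ∂[stdVec i] (∂[stdVec i] f) x := by
  simp only [lap_eq_sum_fderiv, dirDeriv_dirDeriv hf]

protected lemma IsSmooth.lap (hf : IsSmooth f) : IsSmooth (lap f) := by
  rw [show lap f = _ from funext (lap_eq_sum_dirDeriv hf)]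
  exact ContDiff.sum fun i _ => (hf.dirDeriv _).dirDeriv _

lemma lap_mul (hf : IsSmooth f) (hg : IsSmooth g) (x : Euc n) :
    lap (fun y => f y * g y) x = f x * lap g x + 2 * gradInner f g x + g x * lap f x := by
  rw [lap_eq_sum_dirDeriv (hf.mul hg), lap_eq_sum_dirDeriv hf, lap_eq_sum_dirDeriv hg, gradInner,
    Finset.mul_sum, Finset.mul_sum, Finset.mul_sum, ← Finset.sum_add_distrib,
    ← Finset.sum_add_distrib]
  refine Finset.sum_congr rfl fun i _ => ?_
  have hf' := hf.dirDeriv (stdVec i)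
  have hg' := hg.dirDeriv (stdVec i)
  rw [dirDeriv_fun_mul _ hf hg, derivAlong_add ((hf.mul hg').differentiable (by simp) x)
    ((hf'.mul hg).differentiable (by simp) x), dirDeriv_fun_mul _ hf hg', dirDeriv_fun_mul _ hf' hg]
  ring

lemma lap_congr (h : f =ᶠ[nhds x] g) : lap f x = lap g x := by
  simp only [lap, (h.iteratedFDeriv ℝ 2).eq_of_nhds]

lemma lap_const (c : ℝ) (x : Euc n) : lap (fun _ => c) x = 0 := by
  simp [lap, iteratedFDeriv_const_of_ne two_ne_zero]

lemma integral_dirDeriv_eq_zero (v : Euc n) (hf : IsSmooth f) (hc : HasCompactSupport f) :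
    ∫ x, ∂[v] f x = 0 := by
  have hint : Integrable fun x => fderiv ℝ f x v :=
    (hf.dirDeriv v).continuous.integrable_of_hasCompactSupport (hc.fderiv_apply ℝ v)
  have := integral_mul_fderiv_eq_neg_fderiv_mul_of_integrable (μ := volume)
    (f := fun _ : Euc n => (1 : ℝ)) (g := f) (v := v) (by simp) (by simpa using hint)
    (by simpa using hf.continuous.integrable_of_hasCompactSupport hc)
    (fun x _ => by fun_prop) (fun x _ => hf.differentiable x)
  simpa [derivAlong] using this

lemma integral_mul_dirDeriv (v : Euc n) (hf : IsSmooth f) (hg : IsSmooth g)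
    (hc : HasCompactSupport f) : ∫ x, f x * ∂[v] g x = -∫ x, ∂[v] f x * g x := by
  have h := integral_dirDeriv_eq_zero v (hf.mul hg) hc.mul_right
  rw [dirDeriv_fun_mul v hf hg, integral_add] at h
  · linarith
  · exact (hf.mul (hg.dirDeriv v)).continuous.integrable_of_hasCompactSupport hc.mul_right
  · exact ((hf.dirDeriv v).mul hg).continuous.integrable_of_hasCompactSupport
      (hc.fderiv_apply ℝ v).mul_right

lemma integral_mul_lap (hf : IsSmooth f) (hg : IsSmooth g) (hc : HasCompactSupport f) :
    ∫ x, f x * lap g x = -∫ x, gradInner f g x := by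
  simp_rw [lap_eq_sum_dirDeriv hg, gradInner, Finset.mul_sum]
  rw [integral_finsetSum, integral_finsetSum, ← Finset.sum_neg_distrib]
  · exact Finset.sum_congr rfl fun i _ => integral_mul_dirDeriv _ hf (hg.dirDeriv _) hc
  · intro i _
    exact ((hf.dirDeriv _).mul (hg.dirDeriv _)).continuous.integrable_of_hasCompactSupport
      (hc.fderiv_apply ℝ _).mul_right
  · intro i _
    exact (hf.mul ((hg.dirDeriv _).dirDeriv _)).continuous.integrable_of_hasCompactSupport
      hc.mul_right

end Calculus

/-- Test functions on `Ω`: smooth functions on `ℝⁿ` whose support is a compact subset of `Ω`. -/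
structure IsTestFun {n : ℕ} (Ω : Set (Euc n)) (f : Euc n → ℝ) : Prop where
  smooth : IsSmooth f
  hasCompactSupport : HasCompactSupport f
  tsupport_subset : tsupport f ⊆ Ω

namespace IsTestFun

variable {n : ℕ} {f g h : Euc n → ℝ} {Ω : Set (Euc n)} {V : Euc n → Euc n} {x : Euc n}

lemma eq_zero (hf : IsTestFun Ω f) (hx : x ∉ Ω) : f x = 0 :=
  image_eq_zero_of_notMem_tsupport fun h => hx (hf.tsupport_subset h)

protected lemma integrable (hf : IsTestFun Ω f) : Integrable f :=
  hf.smooth.continuous.integrable_of_hasCompactSupport hf.hasCompactSupport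

protected lemma differentiableAt (hf : IsTestFun Ω f) : DifferentiableAt ℝ f x :=
  hf.smooth.differentiable x

lemma of_tsupport_subset (hf : IsTestFun Ω f) (hg : IsSmooth g) (hs : tsupport g ⊆ tsupport f) :
    IsTestFun Ω g :=
  ⟨hg, hf.hasCompactSupport.of_isClosed_subset isClosed_closure hs, hs.trans hf.tsupport_subset⟩

lemma contDiffOn_mul (hΩ : IsOpen Ω) (hh : ContDiffOn ℝ ∞ h Ω) (hf : IsTestFun Ω f) :
    IsTestFun Ω fun x => h x * f x := by
  refine ⟨contDiff_iff_contDiffAt.2 fun x => ?_, hf.hasCompactSupport.mul_left,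
    tsupport_mul_subset_right.trans hf.tsupport_subset⟩
  by_cases hx : x ∈ tsupport f
  · exact (hh.contDiffAt (hΩ.mem_nhds (hf.tsupport_subset hx))).mul hf.smooth.contDiffAt
  · have : (fun x => h x * f x) =ᶠ[nhds x] fun _ => 0 := by
      filter_upwards [notMem_tsupport_iff_eventuallyEq.1 hx] with y hy
      simp [hy]
    exact contDiffAt_const.congr_of_eventuallyEq this

lemma smooth_mul (hh : IsSmooth h) (hf : IsTestFun Ω f) : IsTestFun Ω fun x => h x * f x :=
  hf.of_tsupport_subset (hh.mul hf.smooth) tsupport_mul_subset_right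

protected lemma add (hg : IsTestFun Ω g) (hf : IsTestFun Ω f) : IsTestFun Ω fun x => g x + f x :=
  ⟨hg.smooth.add hf.smooth, hg.hasCompactSupport.add hf.hasCompactSupport,
    (tsupport_add g f).trans (union_subset hg.tsupport_subset hf.tsupport_subset)⟩

lemma const_mul (c : ℝ) (hf : IsTestFun Ω f) : IsTestFun Ω fun x => c * f x :=
  smooth_mul contDiff_const hf

protected lemma derivAlong (hf : IsTestFun Ω f) (hV : ContDiff ℝ ∞ V) :
    IsTestFun Ω (derivAlong V f) := by
  refine hf.of_tsupport_subset (hf.smooth.derivAlong hV)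
    (closure_minimal (fun x hx => ?_) isClosed_closure)
  by_contra hn
  exact hx ((derivAlong_congr (notMem_tsupport_iff_eventuallyEq.1 hn)).trans (derivAlong_const 0))

protected lemma lap (hf : IsTestFun Ω f) : IsTestFun Ω (lap f) := by
  refine hf.of_tsupport_subset hf.smooth.lap (closure_minimal (fun x hx => ?_) isClosed_closure)
  by_contra hn
  exact hx ((lap_congr (notMem_tsupport_iff_eventuallyEq.1 hn)).trans (lap_const 0 x))

lemma integrable_sq (hf : IsTestFun Ω f) : Integrable fun x => f x ^ 2 := by
  simpa only [sq] using (smooth_mul hf.smooth hf).integrable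

end IsTestFun

/-- The rotation field `x ↦ xᵢ eⱼ - xⱼ eᵢ`. -/
def rotField {n : ℕ} (i j : Fin n) : Euc n →L[ℝ] Euc n :=
  (EuclideanSpace.proj i : Euc n →L[ℝ] ℝ).smulRight (stdVec j)
    - (EuclideanSpace.proj j : Euc n →L[ℝ] ℝ).smulRight (stdVec i)

/-- The Euler derivative `r ∂_r`, along the field `x ↦ x`. -/
local notation "∂ᵣ" => derivAlong id

/-- The angular derivative `xᵢ ∂ⱼ - xⱼ ∂ᵢ`. -/
local notation "∂θ[" i "," j "]" => derivAlong (rotField i j)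

section PolarCoordinates

variable {n : ℕ} {f : Euc n → ℝ} {V : Euc n → Euc n} {Ω : Set (Euc n)}

lemma rotField_apply (i j : Fin n) (x : Euc n) :
    rotField i j x = x i • stdVec j - x j • stdVec i := by
  simp [rotField]

lemma euler_rot_comm (hf : IsSmooth f) (i j : Fin n) (x : Euc n) :
    ∂ᵣ (∂θ[i, j] f) x = ∂θ[i, j] (∂ᵣ f) x := by
  rw [derivAlong_derivAlong hf (rotField i j).differentiableAt,
    derivAlong_derivAlong hf differentiableAt_id, hf.fderiv_fderiv_comm]
  simp

lemma rot_rot_eq (hf : IsSmooth f) {i j : Fin n} (hij : i ≠ j) (x : Euc n) :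
    ∂θ[i, j] (∂θ[i, j] f) x =
      x i ^ 2 * fderiv ℝ (fderiv ℝ f) x (stdVec j) (stdVec j)
        - 2 * (x i * x j * fderiv ℝ (fderiv ℝ f) x (stdVec i) (stdVec j))
        + x j ^ 2 * fderiv ℝ (fderiv ℝ f) x (stdVec i) (stdVec i)
        - (x i * ∂[stdVec i] f x + x j * ∂[stdVec j] f x) := by
  rw [derivAlong_derivAlong hf (rotField i j).differentiableAt, ContinuousLinearMap.fderiv]
  simp only [rotField_apply, sub_apply, smul_apply, map_sub, map_smul, smul_eq_mul, stdVec_apply,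
    if_true, if_neg hij, if_neg hij.symm, derivAlong]
  rw [hf.fderiv_fderiv_comm x (stdVec j) (stdVec i)]
  ring

lemma rot_rot_self (f : Euc n → ℝ) (i : Fin n) (x : Euc n) : ∂θ[i, i] (∂θ[i, i] f) x = 0 := by
  simp [derivAlong, rotField_apply]

lemma fderiv_fderiv_self_eq_sum (hf : IsSmooth f) (x : Euc n) :
    fderiv ℝ (fderiv ℝ f) x x x =
      ∑ i, ∑ j, x i * x j * fderiv ℝ (fderiv ℝ f) x (stdVec i) (stdVec j) := by
  set T := fderiv ℝ (fderiv ℝ f) x with hT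
  conv_lhs => rw [← sum_smul_stdVec x]
  simp only [map_sum, map_smul, sum_apply, smul_apply, smul_eq_mul,
    Finset.mul_sum]
  refine Finset.sum_congr rfl fun i _ => Finset.sum_congr rfl fun j _ => ?_
  rw [hT, hf.fderiv_fderiv_comm x (stdVec j)]
  ring

lemma euler_euler (hf : IsSmooth f) (x : Euc n) :
    ∂ᵣ (∂ᵣ f) x = fderiv ℝ (fderiv ℝ f) x x x + ∂ᵣ f x := by
  rw [derivAlong_derivAlong hf differentiableAt_id]
  simp [derivAlong]

lemma sum_rot_rot (hf : IsSmooth f) (x : Euc n) :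
    ∑ i, ∑ j, ∂θ[i, j] (∂θ[i, j] f) x = 2 * (‖x‖ ^ 2 * lap f x
      - fderiv ℝ (fderiv ℝ f) x x x - (n - 1) * ∂ᵣ f x) := by
  set T := fderiv ℝ (fderiv ℝ f) x
  set d : Fin n → ℝ := fun i => x i * ∂[stdVec i] f x
  have hrot : ∀ i j, ∂θ[i, j] (∂θ[i, j] f) x =
      (x i ^ 2 * T (stdVec j) (stdVec j) - 2 * (x i * x j * T (stdVec i) (stdVec j))
        + x j ^ 2 * T (stdVec i) (stdVec i) - (d i + d j)) + if i = j then 2 * d i else 0 := by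
    intro i j
    split_ifs with hij
    · subst hij
      rw [rot_rot_self]
      ring
    · rw [rot_rot_eq hf hij, add_zero]
  have hnorm : ‖x‖ ^ 2 = ∑ i, x i ^ 2 := by simp [EuclideanSpace.norm_sq_eq]
  have hdsum : ∑ i, d i = ∂ᵣ f x := (derivAlong_eq_sum (V := id) x).symm
  simp only [hrot, Finset.sum_add_distrib, Finset.sum_sub_distrib, Finset.sum_ite_eq,
    Finset.mem_univ, if_true, ← Finset.mul_sum, ← Finset.sum_mul, Finset.sum_const,
    Finset.card_univ, Fintype.card_fin, nsmul_eq_mul, hdsum, ← hnorm]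
  rw [lap_eq_sum_fderiv, fderiv_fderiv_self_eq_sum hf]
  ring

lemma norm_sq_mul_lap (hf : IsSmooth f) (x : Euc n) :
    ‖x‖ ^ 2 * lap f x = ∂ᵣ (∂ᵣ f) x + (n - 2) * ∂ᵣ f x
      + 1 / 2 * ∑ i, ∑ j, ∂θ[i, j] (∂θ[i, j] f) x := by
  rw [sum_rot_rot hf, euler_euler hf]
  ring

lemma integral_derivAlong (hf : IsTestFun Ω f) (hV : ContDiff ℝ ∞ V) :
    ∫ x, derivAlong V f x = -∫ x, f x * ∑ i, ∂[stdVec i] (fun y => V y i) x := by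
  have hVi : ∀ i, IsSmooth fun y => V y i := fun i =>
    (EuclideanSpace.proj i : Euc n →L[ℝ] ℝ).contDiff.comp hV
  have hsum : derivAlong V f = fun x => ∑ i, V x i * ∂[stdVec i] f x := funext derivAlong_eq_sum
  simp only [hsum, Finset.mul_sum]
  rw [integral_finsetSum, integral_finsetSum, ← Finset.sum_neg_distrib]
  · refine Finset.sum_congr rfl fun i _ => ?_
    rw [integral_mul_dirDeriv _ hf.smooth (hVi i) hf.hasCompactSupport, neg_neg]
    simp only [mul_comm]
  · exact fun i _ => (hf.smooth.mul ((hVi i).dirDeriv _)).continuous.integrable_of_hasCompactSupport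
      hf.hasCompactSupport.mul_right
  · exact fun i _ => (IsTestFun.smooth_mul (hVi i) (hf.derivAlong contDiff_const)).integrable

lemma dirDeriv_clm_apply (A : Euc n →L[ℝ] Euc n) (i : Fin n) (v x : Euc n) :
    ∂[v] (fun y => A y i) x = A v i := by
  have : (fun y => A y i) = ((EuclideanSpace.proj i : Euc n →L[ℝ] ℝ).comp A) := by ext; simp
  rw [this, derivAlong, ContinuousLinearMap.fderiv]
  simp

lemma integral_euler (hf : IsTestFun Ω f) : ∫ x, ∂ᵣ f x = -(n * ∫ x, f x) := by
  have hdiv (x : Euc n) : ∑ i, ∂[stdVec i] (fun y : Euc n => id y i) x = n :=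
    (Finset.sum_congr rfl fun i _ =>
      dirDeriv_clm_apply (ContinuousLinearMap.id ℝ (Euc n)) i (stdVec i) x).trans
      (by simp [stdVec_apply])
  rw [integral_derivAlong hf contDiff_id]
  simp only [hdiv, integral_mul_const, mul_comm]

lemma integral_rot (hf : IsTestFun Ω f) (i j : Fin n) : ∫ x, ∂θ[i, j] f x = 0 := by
  have hdiv (x : Euc n) : ∑ k, ∂[stdVec k] (fun y : Euc n => rotField i j y k) x = 0 := by
    rw [Finset.sum_congr rfl fun k _ => dirDeriv_clm_apply (rotField i j) k (stdVec k) x]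
    simp only [rotField_apply, PiLp.sub_apply, PiLp.smul_apply, stdVec_apply,
      Finset.sum_sub_distrib]
    simp [eq_comm]
  simp [integral_derivAlong hf (rotField i j).contDiff, hdiv]

end PolarCoordinates

/-- Integrable functions of integral zero, such as the divergences that are discarded in an
integration by parts. -/
structure HasZeroIntegral {α : Type*} [MeasurableSpace α] (μ : Measure α) (F : α → ℝ) : Prop where
  integrable : Integrable F μ
  integral_eq_zero : ∫ x, F x ∂μ = 0

namespace HasZeroIntegral

variable {α : Type*} [MeasurableSpace α] {μ : Measure α} {F G : α → ℝ}

protected lemma add (hF : HasZeroIntegral μ F) (hG : HasZeroIntegral μ G) :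
    HasZeroIntegral μ fun x => F x + G x :=
  ⟨hF.integrable.add hG.integrable, by
    rw [integral_add hF.integrable hG.integrable, hF.integral_eq_zero, hG.integral_eq_zero,
      add_zero]⟩

lemma const_mul (c : ℝ) (hF : HasZeroIntegral μ F) : HasZeroIntegral μ fun x => c * F x :=
  ⟨hF.integrable.const_mul c, by rw [integral_const_mul, hF.integral_eq_zero, mul_zero]⟩

protected lemma sum {ι : Type*} (s : Finset ι) {F : ι → α → ℝ}
    (hF : ∀ i ∈ s, HasZeroIntegral μ (F i)) : HasZeroIntegral μ fun x => ∑ i ∈ s, F i x :=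
  ⟨integrable_finsetSum _ fun i hi => (hF i hi).integrable, by
    rw [integral_finsetSum _ fun i hi => (hF i hi).integrable]
    exact Finset.sum_eq_zero fun i hi => (hF i hi).integral_eq_zero⟩

end HasZeroIntegral

/-- The divergence of the vector field `x ↦ h(x) x`. -/
def eulerDiv {n : ℕ} (h : Euc n → ℝ) (x : Euc n) : ℝ := ∂ᵣ h x + n * h x

section EulerDiv

variable {n : ℕ} {h k p q : Euc n → ℝ} {Ω : Set (Euc n)} {x : Euc n}

lemma IsTestFun.hasZeroIntegral_eulerDiv (hh : IsTestFun Ω h) :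
    HasZeroIntegral volume (eulerDiv h) := by
  have hE : Integrable (∂ᵣ h) := (hh.derivAlong contDiff_id).integrable
  refine ⟨hE.add (hh.integrable.const_mul _), ?_⟩
  simp only [eulerDiv]
  rw [integral_add hE (hh.integrable.const_mul _), integral_euler hh, integral_const_mul]
  ring

lemma IsTestFun.hasZeroIntegral_rot (hh : IsTestFun Ω h) (i j : Fin n) :
    HasZeroIntegral volume (∂θ[i, j] h) :=
  ⟨(hh.derivAlong (rotField i j).contDiff).integrable, integral_rot hh i j⟩

lemma IsTestFun.eulerDiv_eq_zero (hh : IsTestFun Ω h) (hx : x ∉ Ω) : eulerDiv h x = 0 := by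
  simp [eulerDiv, (hh.derivAlong contDiff_id).eq_zero hx, hh.eq_zero hx]

lemma eulerDiv_mul_mul (hk : DifferentiableAt ℝ k x) (hp : DifferentiableAt ℝ p x)
    (hq : DifferentiableAt ℝ q x) : eulerDiv (fun y => k y * (p y * q y)) x =
      ∂ᵣ k x * (p x * q x) + k x * (∂ᵣ p x * q x + p x * ∂ᵣ q x) + n * (k x * (p x * q x)) := by
  rw [eulerDiv, derivAlong_mul hk (hp.fun_mul hq), derivAlong_mul hp hq]
  ring

end EulerDiv

/-- A radial weight `w` on `Ω`, encoded by `β = r ∂_r (log w) + 1` and the iterated Euler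
derivatives `b₁ = r ∂_r β`, `b₂ = r ∂_r b₁`, `b₃ = r ∂_r b₂`. The condition `0 ≤ b₁` is the
convexity of `log w` in `log r`, which makes the Carleman estimate work. -/
structure RadialWeight {n : ℕ} (Ω : Set (Euc n)) (w β b₁ b₂ b₃ : Euc n → ℝ) : Prop where
  isOpen : IsOpen Ω
  contDiffOn_weight : ContDiffOn ℝ ∞ w Ω
  contDiffOn_β : ContDiffOn ℝ ∞ β Ω
  contDiffOn_b₁ : ContDiffOn ℝ ∞ b₁ Ω
  contDiffOn_b₂ : ContDiffOn ℝ ∞ b₂ Ω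
  contDiffOn_b₃ : ContDiffOn ℝ ∞ b₃ Ω
  euler_weight : ∀ x ∈ Ω, ∂ᵣ w x = (β x - 1) * w x
  euler_β : ∀ x ∈ Ω, ∂ᵣ β x = b₁ x
  euler_b₁ : ∀ x ∈ Ω, ∂ᵣ b₁ x = b₂ x
  euler_b₂ : ∀ x ∈ Ω, ∂ᵣ b₂ x = b₃ x
  rot_weight : ∀ i j, ∀ x ∈ Ω, ∂θ[i, j] w x = 0
  rot_β : ∀ i j, ∀ x ∈ Ω, ∂θ[i, j] β x = 0
  rot_b₁ : ∀ i j, ∀ x ∈ Ω, ∂θ[i, j] b₁ x = 0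
  b₁_nonneg : ∀ x ∈ Ω, 0 ≤ b₁ x

/-- The skew-adjoint operator `r ∂_r + n / 2`. -/
def skewEuler {n : ℕ} (g : Euc n → ℝ) (x : Euc n) : ℝ := ∂ᵣ g x + n / 2 * g x

/-- The skew-adjoint part (up to sign) of the conjugated operator `w |x|² Δ w⁻¹`. -/
def carlemanSkew {n : ℕ} (β b₁ g : Euc n → ℝ) (x : Euc n) : ℝ :=
  2 * (β x * skewEuler g x) + b₁ x * g x

/-- The self-adjoint part of the conjugated operator `w |x|² Δ w⁻¹`. -/
def carlemanSymm {n : ℕ} (β g : Euc n → ℝ) (x : Euc n) : ℝ :=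
  ∂ᵣ (skewEuler g) x + n / 2 * skewEuler g x + 1 / 2 * ∑ i, ∑ j, ∂θ[i, j] (∂θ[i, j] g) x
    + (β x ^ 2 - ((n - 2) / 2) ^ 2) * g x

/-- The divergence terms discarded when the cross term of the self-adjoint and skew-adjoint parts
is integrated by parts. -/
def carlemanFlux {n : ℕ} (β b₁ b₂ g : Euc n → ℝ) (x : Euc n) : ℝ :=
  -2 * (eulerDiv (fun y => β y * (skewEuler g y * skewEuler g y)) x
    + eulerDiv (fun y => b₁ y * (g y * skewEuler g y)) x
    + -1 / 2 * eulerDiv (fun y => b₂ y * (g y * g y)) x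
    + eulerDiv (fun y => (β y ^ 2 - ((n - 2) / 2) ^ 2) * β y * (g y * g y)) x
    + 1 / 2 * ∑ i, ∑ j, (∂θ[i, j] (fun y => ∂θ[i, j] g y * carlemanSkew β b₁ g y) x
      + -1 * eulerDiv (fun y => β y * (∂θ[i, j] g y * ∂θ[i, j] g y)) x))

protected lemma IsTestFun.skewEuler {n : ℕ} {Ω : Set (Euc n)} {g : Euc n → ℝ}
    (hg : IsTestFun Ω g) : IsTestFun Ω (skewEuler g) :=
  (hg.derivAlong contDiff_id).add (hg.const_mul _)

namespace RadialWeight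

variable {n : ℕ} {Ω : Set (Euc n)} {w β b₁ b₂ b₃ f g h : Euc n → ℝ} {x : Euc n}

lemma isTestFun_carlemanSkew (H : RadialWeight Ω w β b₁ b₂ b₃) (hg : IsTestFun Ω g) :
    IsTestFun Ω (carlemanSkew β b₁ g) :=
  ((hg.skewEuler.contDiffOn_mul H.isOpen H.contDiffOn_β).const_mul 2).add
    (hg.contDiffOn_mul H.isOpen H.contDiffOn_b₁)

lemma contDiffOn_cubic (H : RadialWeight Ω w β b₁ b₂ b₃) (c : ℝ) :
    ContDiffOn ℝ ∞ (fun y => (β y ^ 2 - c) * β y) Ω :=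
  ((H.contDiffOn_β.pow 2).sub contDiffOn_const).mul H.contDiffOn_β

lemma differentiableAt_of_contDiffOn (H : RadialWeight Ω w β b₁ b₂ b₃)
    (hh : ContDiffOn ℝ ∞ h Ω) (hx : x ∈ Ω) : DifferentiableAt ℝ h x :=
  (hh.contDiffAt (H.isOpen.mem_nhds hx)).differentiableAt (by simp)

lemma hasZeroIntegral_carlemanFlux (H : RadialWeight Ω w β b₁ b₂ b₃) (hg : IsTestFun Ω g) :
    HasZeroIntegral volume (carlemanFlux β b₁ b₂ g) := by
  have he := hg.skewEuler
  have hθ (i j) := hg.derivAlong (rotField i j).contDiff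
  have hdiv {k p q} (hk : ContDiffOn ℝ ∞ k Ω) (hp : IsTestFun Ω p) (hq : IsTestFun Ω q) :=
    ((hq.smooth_mul hp.smooth).contDiffOn_mul H.isOpen hk).hasZeroIntegral_eulerDiv
  refine ((((hdiv H.contDiffOn_β he he).add (hdiv H.contDiffOn_b₁ hg he)).add
    ((hdiv H.contDiffOn_b₂ hg hg).const_mul _)).add
    (hdiv (H.contDiffOn_cubic _) hg hg)).add (.const_mul _ ?_) |>.const_mul _
  refine HasZeroIntegral.sum _ fun i _ => HasZeroIntegral.sum _ fun j _ => ?_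
  exact (((H.isTestFun_carlemanSkew hg).smooth_mul (hθ i j).smooth).hasZeroIntegral_rot i j).add
    ((hdiv H.contDiffOn_β (hθ i j) (hθ i j)).const_mul _)

lemma carlemanFlux_eq_zero (H : RadialWeight Ω w β b₁ b₂ b₃) (hg : IsTestFun Ω g) (hx : x ∉ Ω) :
    carlemanFlux β b₁ b₂ g x = 0 := by
  have he := hg.skewEuler
  have hθ (i j) := hg.derivAlong (rotField i j).contDiff
  have hdiv {k p q} (hk : ContDiffOn ℝ ∞ k Ω) (hp : IsTestFun Ω p) (hq : IsTestFun Ω q) :=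
    ((hq.smooth_mul hp.smooth).contDiffOn_mul H.isOpen hk).eulerDiv_eq_zero hx
  have hrot (i j) : ∂θ[i, j] (fun y => ∂θ[i, j] g y * carlemanSkew β b₁ g y) x = 0 :=
    (((H.isTestFun_carlemanSkew hg).smooth_mul (hθ i j).smooth).derivAlong
      (rotField i j).contDiff).eq_zero hx
  simp [carlemanFlux, hdiv H.contDiffOn_β he he, hdiv H.contDiffOn_b₁ hg he,
    hdiv H.contDiffOn_b₂ hg hg, hdiv (H.contDiffOn_cubic _) hg hg, hrot,
    hdiv H.contDiffOn_β (hθ _ _) (hθ _ _)]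

lemma rot_carlemanSkew (H : RadialWeight Ω w β b₁ b₂ b₃) (hg : IsTestFun Ω g) (hx : x ∈ Ω)
    (i j : Fin n) : ∂θ[i, j] (carlemanSkew β b₁ g) x =
      2 * (β x * (∂ᵣ (∂θ[i, j] g) x + n / 2 * ∂θ[i, j] g x)) + b₁ x * ∂θ[i, j] g x := by
  have hβ := H.differentiableAt_of_contDiffOn H.contDiffOn_β hx
  have hb₁ := H.differentiableAt_of_contDiffOn H.contDiffOn_b₁ hx
  have he := hg.skewEuler.differentiableAt (x := x)
  have hre : ∂θ[i, j] (skewEuler g) x = ∂ᵣ (∂θ[i, j] g) x + n / 2 * ∂θ[i, j] g x := by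
    rw [euler_rot_comm hg.smooth, ← derivAlong_const_mul _ hg.differentiableAt]
    exact derivAlong_add (hg.derivAlong contDiff_id).differentiableAt
      (hg.const_mul _).differentiableAt
  rw [← hre]
  refine (derivAlong_add ((hβ.fun_mul he).const_mul 2) (hb₁.fun_mul hg.differentiableAt)).trans ?_
  rw [derivAlong_const_mul 2 (hβ.fun_mul he), derivAlong_mul hβ he,
    derivAlong_mul hb₁ hg.differentiableAt, H.rot_β i j x hx, H.rot_b₁ i j x hx]
  ring

lemma euler_cubic (H : RadialWeight Ω w β b₁ b₂ b₃) (c : ℝ) (hx : x ∈ Ω) :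
    ∂ᵣ (fun y => (β y ^ 2 - c) * β y) x = (3 * β x ^ 2 - c) * b₁ x := by
  have hβ := H.differentiableAt_of_contDiffOn H.contDiffOn_β hx
  have heq : (fun y => (β y ^ 2 - c) * β y) = fun y => (β y * β y + -c) * β y := by ext y; ring
  rw [heq, derivAlong_mul ((hβ.fun_mul hβ).fun_add (by fun_prop)) hβ,
    derivAlong_add (hβ.fun_mul hβ) (by fun_prop), derivAlong_mul hβ hβ, derivAlong_const,
    H.euler_β x hx]
  ring

/-- The commutator identity: up to divergences, `-2 ⟨symm, skew⟩` is a positive quadratic form. -/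
lemma carlemanFlux_eq (H : RadialWeight Ω w β b₁ b₂ b₃) (hg : IsTestFun Ω g) (hx : x ∈ Ω) :
    carlemanFlux β b₁ b₂ g x = -2 * (carlemanSymm β g x * carlemanSkew β b₁ g x)
      - 4 * b₁ x * skewEuler g x ^ 2 - (4 * β x ^ 2 * b₁ x - b₃ x) * g x ^ 2 := by
  have hd {k} (hk : ContDiffOn ℝ ∞ k Ω) := H.differentiableAt_of_contDiffOn hk hx
  have hg' := hg.differentiableAt (x := x)
  have he := hg.skewEuler.differentiableAt (x := x)
  have hθ (i j) := hg.derivAlong (rotField i j).contDiff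
  have hrot (i j) : ∂θ[i, j] (fun y => ∂θ[i, j] g y * carlemanSkew β b₁ g y) x
      + -1 * eulerDiv (fun y => β y * (∂θ[i, j] g y * ∂θ[i, j] g y)) x =
        ∂θ[i, j] (∂θ[i, j] g) x * carlemanSkew β b₁ g x := by
    have hθx := (hθ i j).differentiableAt (x := x)
    rw [derivAlong_mul hθx (H.isTestFun_carlemanSkew hg).differentiableAt,
      eulerDiv_mul_mul (hd H.contDiffOn_β) hθx hθx, H.rot_carlemanSkew hg hx, H.euler_β x hx]
    ring
  have hEg : ∂ᵣ g x = skewEuler g x - n / 2 * g x := by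
    rw [skewEuler]
    ring
  rw [carlemanFlux]
  simp only [hrot, ← Finset.sum_mul]
  rw [eulerDiv_mul_mul (hd H.contDiffOn_β) he he, eulerDiv_mul_mul (hd H.contDiffOn_b₁) hg' he,
    eulerDiv_mul_mul (hd H.contDiffOn_b₂) hg' hg',
    eulerDiv_mul_mul (hd (H.contDiffOn_cubic _)) hg' hg', H.euler_β x hx, H.euler_b₁ x hx,
    H.euler_b₂ x hx, H.euler_cubic _ hx, hEg, carlemanSymm, carlemanSkew]
  ring

lemma weight_mul_lap (H : RadialWeight Ω w β b₁ b₂ b₃) (hf : IsSmooth f)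
    (hg : IsTestFun Ω fun y => w y * f y) (hx : x ∈ Ω) :
    w x * (‖x‖ ^ 2 * lap f x) =
      carlemanSymm β (fun y => w y * f y) x - carlemanSkew β b₁ (fun y => w y * f y) x := by
  set g : Euc n → ℝ := fun y => w y * f y
  have hd {k} (hk : ContDiffOn ℝ ∞ k Ω) {y} (hy : y ∈ Ω) := H.differentiableAt_of_contDiffOn hk hy
  have hβ : DifferentiableAt ℝ (fun y => β y - 1) x := (hd H.contDiffOn_β hx).sub_const 1
  have hw := hd H.contDiffOn_weight hx
  have hf' := hf.differentiable x
  have hEf := (hf.derivAlong contDiff_id).differentiable x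
  have hEg (y) (hy : y ∈ Ω) : ∂ᵣ g y = w y * (∂ᵣ f y + (β y - 1) * f y) := by
    rw [derivAlong_mul (hd H.contDiffOn_weight hy) (hf.differentiable y), H.euler_weight y hy]
    ring
  have hEβ : ∂ᵣ (fun y => β y - 1) x = b₁ x := by
    simp only [sub_eq_add_neg]
    rw [derivAlong_add (hd H.contDiffOn_β hx) (by fun_prop), derivAlong_const, H.euler_β x hx,
      add_zero]
  have hEEg : ∂ᵣ (∂ᵣ g) x = w x * (∂ᵣ (∂ᵣ f) x + 2 * (β x - 1) * ∂ᵣ f x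
      + (β x - 1) ^ 2 * f x + b₁ x * f x) := by
    rw [derivAlong_congr_of_isOpen H.isOpen hEg hx, derivAlong_mul hw (hEf.fun_add
      (hβ.fun_mul hf')), H.euler_weight x hx, derivAlong_add hEf (hβ.fun_mul hf'),
      derivAlong_mul hβ hf', hEβ]
    ring
  have hθg (i j y) (hy : y ∈ Ω) : ∂θ[i, j] g y = w y * ∂θ[i, j] f y := by
    rw [derivAlong_mul (hd H.contDiffOn_weight hy) (hf.differentiable y), H.rot_weight i j y hy]
    ring
  have hθθg (i j) : ∂θ[i, j] (∂θ[i, j] g) x = w x * ∂θ[i, j] (∂θ[i, j] f) x := by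
    rw [derivAlong_congr_of_isOpen H.isOpen (hθg i j) hx, derivAlong_mul hw
      ((hf.derivAlong (rotField i j).contDiff).differentiable x), H.rot_weight i j x hx]
    ring
  have hEe : ∂ᵣ (skewEuler g) x = ∂ᵣ (∂ᵣ g) x + n / 2 * ∂ᵣ g x := by
    rw [← derivAlong_const_mul _ hg.differentiableAt]
    exact derivAlong_add (hg.derivAlong contDiff_id).differentiableAt
      (hg.const_mul _).differentiableAt
  rw [carlemanSymm, carlemanSkew, hEe, skewEuler, hEEg, hEg x hx, norm_sq_mul_lap hf]
  simp only [hθθg, ← Finset.mul_sum, g]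
  ring

theorem integral_le_integral_lap (H : RadialWeight Ω w β b₁ b₂ b₃) (hf : IsTestFun Ω f) :
    ∫ x, (4 * β x ^ 2 * b₁ x - b₃ x) * (w x * f x) ^ 2
      ≤ ∫ x, (w x * (‖x‖ ^ 2 * lap f x)) ^ 2 := by
  have hg : IsTestFun Ω fun y => w y * f y := hf.contDiffOn_mul H.isOpen H.contDiffOn_weight
  have hlap : IsTestFun Ω fun x => w x * (‖x‖ ^ 2 * lap f x) :=
    (hf.lap.smooth_mul (contDiff_norm_sq ℝ)).contDiffOn_mul H.isOpen H.contDiffOn_weight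
  have hflux := H.hasZeroIntegral_carlemanFlux hg
  have hpt (x) : carlemanFlux β b₁ b₂ (fun y => w y * f y) x ≤
      (w x * (‖x‖ ^ 2 * lap f x)) ^ 2 - (4 * β x ^ 2 * b₁ x - b₃ x) * (w x * f x) ^ 2 := by
    by_cases hx : x ∈ Ω
    · rw [H.carlemanFlux_eq hg hx, H.weight_mul_lap hf.smooth hg hx]
      have := mul_nonneg (H.b₁_nonneg x hx) (sq_nonneg (skewEuler (fun y => w y * f y) x))
      nlinarith [sq_nonneg (carlemanSymm β (fun y => w y * f y) x),
        sq_nonneg (carlemanSkew β b₁ (fun y => w y * f y) x)]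
    · rw [H.carlemanFlux_eq_zero hg hx, hlap.eq_zero hx, hf.eq_zero hx]
      simp
  have hint : Integrable fun x => (4 * β x ^ 2 * b₁ x - b₃ x) * (w x * f x) ^ 2 := by
    simp only [sq (w _ * f _)]
    exact ((hg.smooth_mul hg.smooth).contDiffOn_mul H.isOpen (((contDiffOn_const.mul
      (H.contDiffOn_β.pow 2)).mul H.contDiffOn_b₁).sub H.contDiffOn_b₃)).integrable
  have := integral_mono hflux.integrable (hlap.integrable_sq.sub hint) hpt
  simp only [Pi.sub_apply] at this
  rw [hflux.integral_eq_zero, integral_sub hlap.integrable_sq hint] at this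
  linarith

end RadialWeight

/-- The open annulus of radii `a < b` centred at the origin. -/
def annulus (n : ℕ) (a b : ℝ) : Set (Euc n) := {x | a < ‖x‖ ∧ ‖x‖ < b}

/-- The radial function with profile `φ` in the logarithmic radius. -/
def radial (n : ℕ) (φ : ℝ → ℝ) (x : Euc n) : ℝ := φ (Real.log ‖x‖)

section Radial

variable {n : ℕ} {a b φ' : ℝ} {φ : ℝ → ℝ} {x : Euc n}

lemma isOpen_annulus (n : ℕ) (a b : ℝ) : IsOpen (annulus n a b) :=
  (isOpen_lt continuous_const continuous_norm).inter (isOpen_lt continuous_norm continuous_const)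

lemma ne_zero_of_mem_annulus (ha : 0 < a) (hx : x ∈ annulus n a b) : x ≠ 0 :=
  norm_pos_iff.1 (ha.trans hx.1)

lemma log_norm_mem_Ioo (ha : 0 < a) (hx : x ∈ annulus n a b) :
    Real.log ‖x‖ ∈ Ioo (Real.log a) (Real.log b) :=
  ⟨Real.log_lt_log ha hx.1, Real.log_lt_log (ha.trans hx.1) hx.2⟩

lemma hasFDerivAt_log_norm (hx : x ≠ 0) :
    HasFDerivAt (fun y : Euc n => Real.log ‖y‖) ((‖x‖ ^ 2)⁻¹ • innerSL ℝ x) x := by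
  have hlog : (fun y : Euc n => Real.log ‖y‖) = fun y => 1 / 2 * Real.log (‖y‖ ^ 2) := by
    ext y
    rw [Real.log_pow]
    push_cast
    ring
  rw [hlog]
  refine (((hasStrictFDerivAt_norm_sq x).hasFDerivAt.log (by positivity)).const_mul
    (1 / 2 : ℝ)).congr_fderiv ?_
  ext v
  simp
  ring

lemma derivAlong_radial (hx : x ≠ 0) (hφ : HasDerivAt φ φ' (Real.log ‖x‖)) (V : Euc n → Euc n) :
    derivAlong V (radial n φ) x = φ' * ((‖x‖ ^ 2)⁻¹ * ⟪x, V x⟫) := by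
  have h : HasFDerivAt (radial n φ) _ x := hφ.comp_hasFDerivAt x (hasFDerivAt_log_norm hx)
  rw [derivAlong, h.fderiv]
  simp

lemma euler_radial (hx : x ≠ 0) (hφ : HasDerivAt φ φ' (Real.log ‖x‖)) :
    ∂ᵣ (radial n φ) x = φ' := by
  have : ‖x‖ ≠ 0 := norm_ne_zero_iff.2 hx
  rw [derivAlong_radial hx hφ, id, real_inner_self_eq_norm_sq]
  field_simp

lemma rot_radial (hx : x ≠ 0) (hφ : HasDerivAt φ φ' (Real.log ‖x‖)) (i j : Fin n) :
    ∂θ[i, j] (radial n φ) x = 0 := by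
  rw [derivAlong_radial hx hφ, rotField_apply, inner_sub_right, inner_smul_right, inner_smul_right,
    inner_stdVec, inner_stdVec]
  ring

lemma contDiffOn_radial (ha : 0 < a) (hφ : ContDiffOn ℝ ∞ φ (Ioo (Real.log a) (Real.log b))) :
    ContDiffOn ℝ ∞ (radial n φ) (annulus n a b) := by
  refine hφ.comp (fun x hx => ?_) fun x hx => log_norm_mem_Ioo ha hx
  have hx0 := ne_zero_of_mem_annulus ha hx
  exact ((contDiffAt_norm ℝ hx0).log (norm_ne_zero_iff.2 hx0)).contDiffWithinAt

end Radial

/-! ### The Carleman weight in logarithmic coordinates -/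

/-- Decays from `1` at the left end point of `(A, B)`. -/
def leftDecay (A t : ℝ) : ℝ := (1 + t - A)⁻¹

/-- Decays from `1` at the right end point of `(A, B)`. -/
def rightDecay (B t : ℝ) : ℝ := (1 + B - t)⁻¹

/-- The one-dimensional Carleman weight: an exponential, corrected by a power of
`leftDecay A + rightDecay B` so that its logarithm is strictly convex. -/
def logWeight (A B p σ t : ℝ) : ℝ :=
  Real.exp (σ * Real.log (leftDecay A t + rightDecay B t) - p * t)

/-- `β = 1 + (log W)'` for the weight `W = logWeight A B p σ`. -/
def logWeightβ (A B p σ t : ℝ) : ℝ := 1 - p + σ * (rightDecay B t - leftDecay A t)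

/-- The first derivative of `logWeightβ`. -/
def logWeightB₁ (A B σ t : ℝ) : ℝ := σ * (leftDecay A t ^ 2 + rightDecay B t ^ 2)

/-- The second derivative of `logWeightβ`. -/
def logWeightB₂ (A B σ t : ℝ) : ℝ := σ * (-2 * leftDecay A t ^ 3 + 2 * rightDecay B t ^ 3)

/-- The third derivative of `logWeightβ`. -/
def logWeightB₃ (A B σ t : ℝ) : ℝ := σ * (6 * leftDecay A t ^ 4 + 6 * rightDecay B t ^ 4)

section LogWeight

variable {A B p σ t : ℝ}

lemma leftDecay_pos (ht : t ∈ Ioo A B) : 0 < leftDecay A t :=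
  inv_pos.2 (by linarith [ht.1])

lemma rightDecay_pos (ht : t ∈ Ioo A B) : 0 < rightDecay B t :=
  inv_pos.2 (by linarith [ht.2])

lemma leftDecay_le_one (ht : t ∈ Ioo A B) : leftDecay A t ≤ 1 :=
  inv_le_one_of_one_le₀ (by linarith [ht.1])

lemma rightDecay_le_one (ht : t ∈ Ioo A B) : rightDecay B t ≤ 1 :=
  inv_le_one_of_one_le₀ (by linarith [ht.2])

lemma hasDerivAt_leftDecay (ht : t ∈ Ioo A B) :
    HasDerivAt (leftDecay A) (-leftDecay A t ^ 2) t := by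
  refine ((((hasDerivAt_id t).const_add 1).sub_const A).inv (by
    simp only [id]; linarith [ht.1])).congr_deriv ?_
  simp [leftDecay, div_eq_mul_inv]

lemma hasDerivAt_rightDecay (ht : t ∈ Ioo A B) :
    HasDerivAt (rightDecay B) (rightDecay B t ^ 2) t := by
  refine (((hasDerivAt_id t).const_sub (1 + B)).inv (by
    simp only [id]; linarith [ht.2])).congr_deriv ?_
  simp [rightDecay, div_eq_mul_inv]

lemma hasDerivAt_logWeight (ht : t ∈ Ioo A B) :
    HasDerivAt (logWeight A B p σ) ((logWeightβ A B p σ t - 1) * logWeight A B p σ t) t := by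
  have hpos := add_pos (leftDecay_pos ht) (rightDecay_pos ht)
  have hsum := (hasDerivAt_leftDecay ht).add (hasDerivAt_rightDecay ht)
  refine (((hsum.log hpos.ne').const_mul σ).sub ((hasDerivAt_id t).const_mul p)).exp.congr_deriv ?_
  simp only [logWeight, logWeightβ, Pi.add_apply, Pi.sub_apply, id]
  rw [mul_comm]
  congr 1
  field_simp
  ring

lemma hasDerivAt_logWeightβ (ht : t ∈ Ioo A B) :
    HasDerivAt (logWeightβ A B p σ) (logWeightB₁ A B σ t) t := by
  refine ((((hasDerivAt_rightDecay ht).sub (hasDerivAt_leftDecay ht)).const_mul σ).const_add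
    (1 - p)).congr_deriv ?_
  rw [logWeightB₁]
  ring

lemma hasDerivAt_logWeightB₁ (ht : t ∈ Ioo A B) :
    HasDerivAt (logWeightB₁ A B σ) (logWeightB₂ A B σ t) t := by
  refine ((((hasDerivAt_leftDecay ht).pow 2).add ((hasDerivAt_rightDecay ht).pow 2)).const_mul
    σ).congr_deriv ?_
  rw [logWeightB₂]
  push_cast
  ring

lemma hasDerivAt_logWeightB₂ (ht : t ∈ Ioo A B) :
    HasDerivAt (logWeightB₂ A B σ) (logWeightB₃ A B σ t) t := by
  refine (((((hasDerivAt_leftDecay ht).pow 3).const_mul (-2)).add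
    (((hasDerivAt_rightDecay ht).pow 3).const_mul 2)).const_mul σ).congr_deriv ?_
  rw [logWeightB₃]
  push_cast
  ring

lemma contDiffOn_leftDecay : ContDiffOn ℝ ∞ (leftDecay A) (Ioo A B) :=
  ContDiffOn.inv (by fun_prop) fun t ht => by linarith [ht.1]

lemma contDiffOn_rightDecay : ContDiffOn ℝ ∞ (rightDecay B) (Ioo A B) :=
  ContDiffOn.inv (by fun_prop) fun t ht => by linarith [ht.2]

lemma contDiffOn_logWeight : ContDiffOn ℝ ∞ (logWeight A B p σ) (Ioo A B) :=
  ((contDiffOn_const.mul ((contDiffOn_leftDecay.add contDiffOn_rightDecay).log fun _ ht =>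
    (add_pos (leftDecay_pos ht) (rightDecay_pos ht)).ne')).sub
    (contDiffOn_const.mul contDiffOn_id)).exp

lemma contDiffOn_logWeightβ : ContDiffOn ℝ ∞ (logWeightβ A B p σ) (Ioo A B) :=
  contDiffOn_const.add (contDiffOn_const.mul (contDiffOn_rightDecay.sub contDiffOn_leftDecay))

lemma contDiffOn_logWeightB₁ : ContDiffOn ℝ ∞ (logWeightB₁ A B σ) (Ioo A B) :=
  contDiffOn_const.mul ((contDiffOn_leftDecay.pow 2).add (contDiffOn_rightDecay.pow 2))

lemma contDiffOn_logWeightB₂ : ContDiffOn ℝ ∞ (logWeightB₂ A B σ) (Ioo A B) :=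
  contDiffOn_const.mul ((contDiffOn_const.mul (contDiffOn_leftDecay.pow 3)).add
    (contDiffOn_const.mul (contDiffOn_rightDecay.pow 3)))

lemma contDiffOn_logWeightB₃ : ContDiffOn ℝ ∞ (logWeightB₃ A B σ) (Ioo A B) :=
  contDiffOn_const.mul ((contDiffOn_const.mul (contDiffOn_leftDecay.pow 4)).add
    (contDiffOn_const.mul (contDiffOn_rightDecay.pow 4)))

lemma le_logWeight_coeff {τ ν : ℝ} (ht : t ∈ Ioo A B) (hτ : 4 ≤ τ) (hσ : 0 ≤ σ) (hστ : σ ≤ τ / 2)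
    (hν : 1 ≤ ν) : τ ^ 2 * σ / 4 * (leftDecay A t + rightDecay B t) ^ 2 ≤
      4 * logWeightβ A B (τ + ν) σ t ^ 2 * logWeightB₁ A B σ t - logWeightB₃ A B σ t := by
  rw [logWeightβ, logWeightB₁, logWeightB₃]
  have hl₀ := leftDecay_pos ht
  have hr₀ := rightDecay_pos ht
  have hl₁ := leftDecay_le_one ht
  have hr₁ := rightDecay_le_one ht
  set l := leftDecay A t
  set r := rightDecay B t
  have hβ : τ ^ 2 ≤ 4 * (1 - (τ + ν) + σ * (r - l)) ^ 2 := by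
    have : τ / 2 ≤ -(1 - (τ + ν) + σ * (r - l)) := by nlinarith
    nlinarith
  have hl₄ : l ^ 4 ≤ l ^ 2 := pow_le_pow_of_le_one hl₀.le hl₁ (by norm_num)
  have hr₄ : r ^ 4 ≤ r ^ 2 := pow_le_pow_of_le_one hr₀.le hr₁ (by norm_num)
  have hmain := mul_le_mul_of_nonneg_right hβ (by positivity : 0 ≤ σ * (l ^ 2 + r ^ 2))
  have herr : σ * (6 * l ^ 4 + 6 * r ^ 4) ≤ τ ^ 2 / 2 * (σ * (l ^ 2 + r ^ 2)) := calc
    _ ≤ 6 * (σ * (l ^ 2 + r ^ 2)) := by nlinarith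
    _ ≤ _ := mul_le_mul_of_nonneg_right (by nlinarith) (by positivity)
  have hsum : τ ^ 2 * σ / 4 * (l + r) ^ 2 ≤ τ ^ 2 * σ / 4 * (2 * (l ^ 2 + r ^ 2)) :=
    mul_le_mul_of_nonneg_left add_sq_le (by positivity)
  nlinarith

end LogWeight

/-- The factor `1 / (1 + log (|x| / a)) + 1 / (1 + log (b / |x|))`, which is bounded below by a
multiple of `1` only near the boundary of the annulus of radii `a < b`. -/
def edgeFactor (n : ℕ) (a b : ℝ) : Euc n → ℝ :=
  radial n fun t => leftDecay (Real.log a) t + rightDecay (Real.log b) t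

/-- The Carleman weight `|x| ^ (-τ - n / 2) * edgeFactor ^ σ` on the annulus of radii `a < b`. -/
def carlemanWeight (n : ℕ) (a b τ σ : ℝ) : Euc n → ℝ :=
  radial n (logWeight (Real.log a) (Real.log b) (τ + n / 2) σ)

section CarlemanWeight

variable {n : ℕ} {a b τ σ R : ℝ} {x : Euc n}

lemma contDiffOn_carlemanWeight (ha : 0 < a) :
    ContDiffOn ℝ ∞ (carlemanWeight n a b τ σ) (annulus n a b) :=
  contDiffOn_radial ha contDiffOn_logWeight

lemma contDiffOn_edgeFactor (ha : 0 < a) : ContDiffOn ℝ ∞ (edgeFactor n a b) (annulus n a b) :=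
  contDiffOn_radial ha (contDiffOn_leftDecay.add contDiffOn_rightDecay)

lemma carlemanWeight_pos : 0 < carlemanWeight n a b τ σ x := Real.exp_pos _

lemma edgeFactor_pos (ha : 0 < a) (hx : x ∈ annulus n a b) : 0 < edgeFactor n a b x :=
  add_pos (leftDecay_pos (log_norm_mem_Ioo ha hx)) (rightDecay_pos (log_norm_mem_Ioo ha hx))

lemma edgeFactor_le_two (ha : 0 < a) (hx : x ∈ annulus n a b) : edgeFactor n a b x ≤ 2 := by
  have hl := leftDecay_le_one (log_norm_mem_Ioo ha hx)
  have hr := rightDecay_le_one (log_norm_mem_Ioo ha hx)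
  simp only [edgeFactor, radial]
  linarith

lemma div_norm_le_edgeFactor (ha : 0 < a) (hx : x ∈ annulus n a b) :
    a / ‖x‖ ≤ edgeFactor n a b x := by
  have ht := log_norm_mem_Ioo ha hx
  have hx₀ : 0 < ‖x‖ := ha.trans hx.1
  calc a / ‖x‖ = (‖x‖ / a)⁻¹ := (inv_div _ _).symm
    _ ≤ leftDecay (Real.log a) (Real.log ‖x‖) := by
      refine inv_anti₀ (by linarith [ht.1]) ?_
      have := Real.log_le_sub_one_of_pos (div_pos hx₀ ha)
      rw [Real.log_div hx₀.ne' ha.ne'] at this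
      linarith
    _ ≤ edgeFactor n a b x := le_add_of_nonneg_right (rightDecay_pos ht).le

lemma norm_div_le_edgeFactor (ha : 0 < a) (hx : x ∈ annulus n a b) :
    ‖x‖ / b ≤ edgeFactor n a b x := by
  have ht := log_norm_mem_Ioo ha hx
  have hx₀ : 0 < ‖x‖ := ha.trans hx.1
  have hb : 0 < b := hx₀.trans hx.2
  calc ‖x‖ / b = (b / ‖x‖)⁻¹ := (inv_div _ _).symm
    _ ≤ rightDecay (Real.log b) (Real.log ‖x‖) := by
      refine inv_anti₀ (by linarith [ht.2]) ?_
      have := Real.log_le_sub_one_of_pos (div_pos hb hx₀)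
      rw [Real.log_div hb.ne' hx₀.ne'] at this
      linarith
    _ ≤ edgeFactor n a b x := le_add_of_nonneg_left (leftDecay_pos ht).le

lemma carlemanWeight_eq (ha : 0 < a) (hx : x ∈ annulus n a b) :
    carlemanWeight n a b τ σ x = ‖x‖ ^ (-(τ + n / 2)) * edgeFactor n a b x ^ σ := by
  rw [Real.rpow_def_of_pos (ha.trans hx.1), Real.rpow_def_of_pos (edgeFactor_pos ha hx),
    ← Real.exp_add, carlemanWeight, radial, logWeight, edgeFactor, radial]
  congr 1
  ring

lemma carlemanWeight_sub_two_sub_one (ha : 0 < a) (hx : x ∈ annulus n a b) :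
    carlemanWeight n a b (τ - 2) (σ - 1) x * edgeFactor n a b x =
      carlemanWeight n a b τ σ x * ‖x‖ ^ 2 := by
  have hr : 0 < ‖x‖ := ha.trans hx.1
  have hκ := edgeFactor_pos ha hx
  rw [carlemanWeight_eq ha hx, carlemanWeight_eq ha hx, mul_assoc, ← Real.rpow_add_one hκ.ne',
    sub_add_cancel, mul_right_comm, ← Real.rpow_natCast, ← Real.rpow_add hr]
  congr 2
  push_cast
  ring

lemma carlemanWeight_sq_eq (ha : 0 < a) (hx : x ∈ annulus n a b) :
    carlemanWeight n a b τ σ x ^ 2 = ‖x‖ ^ (-(2 * τ + n)) * edgeFactor n a b x ^ (2 * σ) := by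
  have hκ := edgeFactor_pos ha hx
  rw [carlemanWeight_eq ha hx, mul_pow, ← Real.rpow_mul_natCast (norm_nonneg x),
    ← Real.rpow_mul_natCast hκ.le]
  congr 2 <;> push_cast <;> ring

lemma carlemanWeight_sq_le (ha : 0 < a) (hx : x ∈ annulus n a b) (hR : 0 < R) (hRx : R ≤ ‖x‖)
    (hτ : 0 ≤ τ) (hσ : 0 ≤ σ) :
    carlemanWeight n a b τ σ x ^ 2 ≤ R ^ (-(2 * τ + n)) * 4 ^ σ := by
  have hκ := edgeFactor_pos ha hx
  have h₄ : (4 : ℝ) ^ σ = 2 ^ (2 * σ) := by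
    rw [Real.rpow_mul (by norm_num)]
    norm_num
  rw [carlemanWeight_sq_eq ha hx, h₄]
  gcongr ?_ * ?_
  · exact Real.rpow_le_rpow_of_nonpos hR hRx (neg_nonpos.2 (by positivity))
  · exact Real.rpow_le_rpow hκ.le (edgeFactor_le_two ha hx) (by positivity)

lemma le_carlemanWeight_mul_edgeFactor_sq (ha : 0 < a) (hx : x ∈ annulus n a b) (hR : ‖x‖ ≤ R)
    {κ : ℝ} (hκ₀ : 0 ≤ κ) (hκ : κ ≤ edgeFactor n a b x) (hτ : 0 ≤ τ) (hσ : 0 ≤ σ) :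
    R ^ (-(2 * τ + n)) * κ ^ (2 * σ + 2) ≤
      (carlemanWeight n a b τ σ x * edgeFactor n a b x) ^ 2 := by
  have hκ' := edgeFactor_pos ha hx
  rw [mul_pow, carlemanWeight_sq_eq ha hx, mul_assoc, ← Real.rpow_natCast, Nat.cast_ofNat,
    ← Real.rpow_add hκ']
  gcongr ?_ * ?_
  · exact Real.rpow_le_rpow_of_nonpos (ha.trans hx.1) hR (neg_nonpos.2 (by positivity))
  · exact Real.rpow_le_rpow hκ₀ hκ (by positivity)

lemma radialWeight_carlemanWeight (ha : 0 < a) (hσ : 0 ≤ σ) :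
    RadialWeight (annulus n a b) (carlemanWeight n a b τ σ)
      (radial n (logWeightβ (Real.log a) (Real.log b) (τ + n / 2) σ))
      (radial n (logWeightB₁ (Real.log a) (Real.log b) σ))
      (radial n (logWeightB₂ (Real.log a) (Real.log b) σ))
      (radial n (logWeightB₃ (Real.log a) (Real.log b) σ)) := by
  have h₀ (x) (hx : x ∈ annulus n a b) := ne_zero_of_mem_annulus ha hx
  have ht (x) (hx : x ∈ annulus n a b) := log_norm_mem_Ioo ha hx
  exact {
    isOpen := isOpen_annulus n a b
    contDiffOn_weight := contDiffOn_carlemanWeight ha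
    contDiffOn_β := contDiffOn_radial ha contDiffOn_logWeightβ
    contDiffOn_b₁ := contDiffOn_radial ha contDiffOn_logWeightB₁
    contDiffOn_b₂ := contDiffOn_radial ha contDiffOn_logWeightB₂
    contDiffOn_b₃ := contDiffOn_radial ha contDiffOn_logWeightB₃
    euler_weight := fun x hx => euler_radial (h₀ x hx) (hasDerivAt_logWeight (ht x hx))
    euler_β := fun x hx => euler_radial (h₀ x hx) (hasDerivAt_logWeightβ (ht x hx))
    euler_b₁ := fun x hx => euler_radial (h₀ x hx) (hasDerivAt_logWeightB₁ (ht x hx))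
    euler_b₂ := fun x hx => euler_radial (h₀ x hx) (hasDerivAt_logWeightB₂ (ht x hx))
    rot_weight := fun i j x hx => rot_radial (h₀ x hx) (hasDerivAt_logWeight (ht x hx)) i j
    rot_β := fun i j x hx => rot_radial (h₀ x hx) (hasDerivAt_logWeightβ (ht x hx)) i j
    rot_b₁ := fun i j x hx => rot_radial (h₀ x hx) (hasDerivAt_logWeightB₁ (ht x hx)) i j
    b₁_nonneg := fun x _ => mul_nonneg hσ (by positivity) }

theorem carleman_inequality (hn : 2 ≤ n) (ha : 0 < a) (hτ : 4 ≤ τ) (hσ : 0 ≤ σ) (hστ : σ ≤ τ / 2)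
    {f : Euc n → ℝ} (hf : IsTestFun (annulus n a b) f) :
    τ ^ 2 * σ / 4 * ∫ x, (carlemanWeight n a b τ σ x * edgeFactor n a b x * f x) ^ 2
      ≤ ∫ x, (carlemanWeight n a b τ σ x * (‖x‖ ^ 2 * lap f x)) ^ 2 := by
  have H := radialWeight_carlemanWeight (n := n) (b := b) (τ := τ) ha hσ
  have hν : (1 : ℝ) ≤ n / 2 := by
    have : (2 : ℝ) ≤ n := by exact_mod_cast hn
    linarith
  have hwf : IsTestFun (annulus n a b) fun x => carlemanWeight n a b τ σ x * f x :=
    hf.contDiffOn_mul H.isOpen H.contDiffOn_weight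
  rw [← integral_const_mul]
  refine (integral_mono_of_nonneg (.of_forall fun x => by positivity) ?_
    (.of_forall fun x => ?_)).trans (H.integral_le_integral_lap hf)
  · simp only [sq (carlemanWeight n a b τ σ _ * f _)]
    exact ((hwf.smooth_mul hwf.smooth).contDiffOn_mul H.isOpen (((contDiffOn_const.mul
      (H.contDiffOn_β.pow 2)).mul H.contDiffOn_b₁).sub H.contDiffOn_b₃)).integrable
  · by_cases hx : x ∈ annulus n a b
    · calc τ ^ 2 * σ / 4 * (carlemanWeight n a b τ σ x * edgeFactor n a b x * f x) ^ 2
          = τ ^ 2 * σ / 4 * edgeFactor n a b x ^ 2 * (carlemanWeight n a b τ σ x * f x) ^ 2 := by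
            ring
        _ ≤ _ := mul_le_mul_of_nonneg_right
            (le_logWeight_coeff (log_norm_mem_Ioo ha hx) hτ hσ hστ hν) (sq_nonneg _)
    · simp [hf.eq_zero hx]

end CarlemanWeight

/-- The commutator `[Δ, χ] u = Δ (χ u) - χ Δ u`. -/
def lapComm {n : ℕ} (χ u : Euc n → ℝ) (x : Euc n) : ℝ := 2 * gradInner χ u x + u x * lap χ x

section LapComm

variable {n : ℕ} {f g χ u : Euc n → ℝ} {Ω : Set (Euc n)}

lemma lap_mul_eq_add_lapComm (hχ : IsSmooth χ) (hu : IsSmooth u) (x : Euc n) :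
    lap (fun y => χ y * u y) x = χ x * lap u x + lapComm χ u x := by
  rw [lap_mul hχ hu, lapComm, add_assoc]

protected lemma IsTestFun.gradInner (hf : IsTestFun Ω f) (hg : IsSmooth g) :
    IsTestFun Ω (gradInner f g) := by
  refine hf.of_tsupport_subset (hf.smooth.gradInner hg)
    (closure_minimal (fun x hx => ?_) isClosed_closure)
  by_contra hn
  exact hx ((gradInner_congr_left (notMem_tsupport_iff_eventuallyEq.1 hn) g).trans
    (gradInner_const_left 0 x))

protected lemma IsTestFun.lapComm (hχ : IsTestFun Ω χ) (hu : IsSmooth u) :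
    IsTestFun Ω (lapComm χ u) :=
  ((hχ.gradInner hu).const_mul 2).add (hχ.lap.smooth_mul hu)

end LapComm

section DoubleCarleman

variable {n : ℕ} {a b τ σ : ℝ} {χ u : Euc n → ℝ}

lemma IsTestFun.integrable_carlemanWeight_sq (ha : 0 < a) {f : Euc n → ℝ}
    (hf : IsTestFun (annulus n a b) f) :
    Integrable fun x => (carlemanWeight n a b τ σ x * f x) ^ 2 :=
  (hf.contDiffOn_mul (isOpen_annulus n a b) (contDiffOn_carlemanWeight ha)).integrable_sq

lemma carleman_inequality_cutoff (hn : 2 ≤ n) (ha : 0 < a) (hτ : 4 ≤ τ) (hσ : 0 ≤ σ)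
    (hστ : σ ≤ τ / 2) (hχ : IsTestFun (annulus n a b) χ) (hu : IsSmooth u) :
    τ ^ 2 * σ / 4 * ∫ x, (carlemanWeight n a b τ σ x * edgeFactor n a b x * (χ x * u x)) ^ 2 ≤
      2 * (∫ x, (carlemanWeight n a b τ σ x * (‖x‖ ^ 2 * (χ x * lap u x))) ^ 2) +
      2 * ∫ x, (carlemanWeight n a b τ σ x * (‖x‖ ^ 2 * lapComm χ u x)) ^ 2 := by
  have hf (g : Euc n → ℝ) (hg : IsSmooth g) : IsTestFun (annulus n a b) fun x => χ x * g x := by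
    simpa only [mul_comm] using hχ.smooth_mul hg
  have hmain := ((hf _ hu.lap).smooth_mul (contDiff_norm_sq ℝ)).integrable_carlemanWeight_sq
    (τ := τ) (σ := σ) ha
  have hcomm := ((hχ.lapComm hu).smooth_mul (contDiff_norm_sq ℝ)).integrable_carlemanWeight_sq
    (τ := τ) (σ := σ) ha
  refine (carleman_inequality hn ha hτ hσ hστ (hf u hu)).trans ?_
  rw [← mul_add, ← integral_add hmain hcomm, ← integral_const_mul]
  refine integral_mono_of_nonneg (.of_forall fun x => by positivity)
    ((hmain.add hcomm).const_mul 2) (.of_forall fun x => ?_)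
  dsimp only
  rw [lap_mul_eq_add_lapComm hχ.smooth hu, mul_add, mul_add]
  exact add_sq_le

lemma norm_le_edgeFactor (ha : 0 < a) (hb : b ≤ 1) {x : Euc n} (hx : x ∈ annulus n a b) :
    ‖x‖ ≤ edgeFactor n a b x := by
  have hb₀ : 0 < b := (ha.trans hx.1).trans hx.2
  refine le_trans ?_ (norm_div_le_edgeFactor ha hx)
  rw [le_div_iff₀ hb₀]
  exact mul_le_of_le_one_right (norm_nonneg x) hb

lemma carlemanWeight_mul_le (ha : 0 < a) (hb : b ≤ 1) {x : Euc n} (hx : x ∈ annulus n a b) :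
    carlemanWeight n a b (τ - 2) (σ - 1) x * ‖x‖ ^ 2 ≤
      carlemanWeight n a b τ σ x * edgeFactor n a b x := by
  have hκ := edgeFactor_pos ha hx
  have hxκ := norm_le_edgeFactor ha hb hx
  have hx₁ : ‖x‖ ≤ 1 := hx.2.le.trans hb
  have hx₄ : ‖x‖ ^ 2 * ‖x‖ ^ 2 ≤ edgeFactor n a b x * edgeFactor n a b x := calc
    _ ≤ ‖x‖ ^ 2 * 1 := by gcongr; exact pow_le_one₀ (norm_nonneg x) hx₁
    _ = ‖x‖ * ‖x‖ := by ring
    _ ≤ _ := by gcongr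
  refine le_of_mul_le_mul_right ?_ hκ
  rw [mul_right_comm, carlemanWeight_sub_two_sub_one ha hx, mul_assoc, mul_assoc]
  exact mul_le_mul_of_nonneg_left hx₄ carlemanWeight_pos.le

lemma integral_carlemanWeight_bilaplacian_le (ha : 0 < a) (hb : b ≤ 1)
    (hχ : IsTestFun (annulus n a b) χ) (hu : IsSmooth u)
    (hL : ∀ x ∈ annulus n a b, |lap (lap u) x| ≤ |u x|) :
    ∫ x, (carlemanWeight n a b (τ - 2) (σ - 1) x * (‖x‖ ^ 2 * (χ x * lap (lap u) x))) ^ 2 ≤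
      ∫ x, (carlemanWeight n a b τ σ x * edgeFactor n a b x * (χ x * u x)) ^ 2 := by
  have hint := ((hχ.smooth_mul hu).contDiffOn_mul (isOpen_annulus n a b)
    (contDiffOn_edgeFactor ha)).integrable_carlemanWeight_sq (τ := τ) (σ := σ) ha
  refine integral_mono_of_nonneg (.of_forall fun x => by positivity)
    (by simpa only [mul_assoc, mul_comm (χ _)] using hint) (.of_forall fun x => ?_)
  by_cases hx : x ∈ annulus n a b
  · refine sq_le_sq.2 ?_
    rw [← mul_assoc, abs_mul, abs_mul _ (χ x * u x), abs_mul (χ x), abs_mul (χ x)]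
    have hw := carlemanWeight_mul_le (τ := τ) (σ := σ) ha hb hx
    have hw₀ := mul_nonneg (carlemanWeight_pos (n := n) (a := a) (b := b) (τ := τ - 2)
      (σ := σ - 1) (x := x)).le (sq_nonneg ‖x‖)
    exact mul_le_mul (abs_le_abs_of_nonneg hw₀ hw)
      (mul_le_mul_of_nonneg_left (hL x hx) (abs_nonneg _)) (by positivity) (abs_nonneg _)
  · simp [hχ.eq_zero hx]

/- The Carleman inequality is applied to `χ u` with parameters `(τ, σ)` and to `χ Δu` with
parameters `(τ - 2, σ - 1)`; the shift makes the right side of the first application match the left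
side of the second. -/
theorem carleman_inequality_bilaplacian (hn : 2 ≤ n) (ha : 0 < a) (hb : b ≤ 1) (hτ : 6 ≤ τ)
    (hσ : 3 ≤ σ) (hστ : σ ≤ τ / 2) (hχ : IsTestFun (annulus n a b) χ) (hu : IsSmooth u)
    (hL : ∀ x ∈ annulus n a b, |lap (lap u) x| ≤ |u x|) :
    ∫ x, (carlemanWeight n a b τ σ x * edgeFactor n a b x * (χ x * u x)) ^ 2 ≤
      (∫ x, (carlemanWeight n a b (τ - 2) (σ - 1) x * (‖x‖ ^ 2 * lapComm χ (lap u) x)) ^ 2) +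
      4 * ∫ x, (carlemanWeight n a b τ σ x * (‖x‖ ^ 2 * lapComm χ u x)) ^ 2 := by
  have hfirst := carleman_inequality_cutoff hn ha (by linarith) (by linarith) hστ hχ hu
  have hsecond := carleman_inequality_cutoff hn ha (by linarith : 4 ≤ τ - 2)
    (by linarith : 0 ≤ σ - 1) (by linarith) hχ hu.lap
  have hlink (x) : (carlemanWeight n a b (τ - 2) (σ - 1) x * edgeFactor n a b x *
      (χ x * lap u x)) ^ 2 = (carlemanWeight n a b τ σ x * (‖x‖ ^ 2 * (χ x * lap u x))) ^ 2 := by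
    by_cases hx : x ∈ annulus n a b
    · rw [carlemanWeight_sub_two_sub_one ha hx, mul_assoc]
    · simp [hχ.eq_zero hx]
  have hclose := integral_carlemanWeight_bilaplacian_le (τ := τ) (σ := σ) ha hb hχ hu hL
  simp only [hlink] at hsecond
  set I := ∫ x, (carlemanWeight n a b τ σ x * edgeFactor n a b x * (χ x * u x)) ^ 2
  set P := ∫ x, (carlemanWeight n a b τ σ x * (‖x‖ ^ 2 * (χ x * lap u x))) ^ 2
  have hI : 1 * I ≤ τ ^ 2 * σ / 4 * I :=
    mul_le_mul_of_nonneg_right (by nlinarith) (integral_nonneg fun x => sq_nonneg _)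
  have hP : 8 * P ≤ (τ - 2) ^ 2 * (σ - 1) / 4 * P :=
    mul_le_mul_of_nonneg_right (by nlinarith) (integral_nonneg fun x => sq_nonneg _)
  linarith

end DoubleCarleman

section Scaling

variable {n : ℕ} {f : Euc n → ℝ}

lemma IsSmooth.comp_smul (hf : IsSmooth f) (c : ℝ) : IsSmooth fun y => f (c • y) :=
  ContDiff.comp hf (contDiff_const_smul c)

lemma dirDeriv_comp_smul (f : Euc n → ℝ) (c : ℝ) (v x : Euc n) :
    ∂[v] (fun y => f (c • y)) x = c * ∂[v] f (c • x) := by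
  simp [derivAlong, fderiv_comp_smul]

lemma gradInner_comp_smul (f : Euc n → ℝ) (c : ℝ) (x : Euc n) :
    gradInner (fun y => f (c • y)) (fun y => f (c • y)) x = c ^ 2 * gradInner f f (c • x) := by
  simp only [gradInner, dirDeriv_comp_smul, Finset.mul_sum]
  exact Finset.sum_congr rfl fun i _ => by ring

lemma lap_comp_smul (hf : IsSmooth f) (c : ℝ) (x : Euc n) :
    lap (fun y => f (c • y)) x = c ^ 2 * lap f (c • x) := by
  simp only [lap_eq_sum_dirDeriv (hf.comp_smul c), lap_eq_sum_dirDeriv hf, Finset.mul_sum]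
  refine Finset.sum_congr rfl fun i _ => ?_
  rw [show ∂[stdVec i] (fun y => f (c • y)) = _ from funext fun y => dirDeriv_comp_smul f c _ y,
    derivAlong_const_mul c (((hf.dirDeriv _).comp_smul c).differentiable x), dirDeriv_comp_smul]
  ring

end Scaling

/-- A smooth cutoff at scale `ρ`: `ψ` equals `1` on the ball of radius `r₁ ρ`, vanishes outside the
ball of radius `r₂ ρ`, and its first and second derivatives are controlled by `C` in the units
imposed by the scale. -/
structure IsCutoff {n : ℕ} (r₁ r₂ C ρ : ℝ) (ψ : Euc n → ℝ) : Prop where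
  smooth : IsSmooth ψ
  nonneg : ∀ x, 0 ≤ ψ x
  le_one : ∀ x, ψ x ≤ 1
  eq_one : ∀ x, ‖x‖ ≤ r₁ * ρ → ψ x = 1
  eq_zero : ∀ x, r₂ * ρ ≤ ‖x‖ → ψ x = 0
  gradInner_le : ∀ x, gradInner ψ ψ x ≤ C / ρ ^ 2
  lap_sq_le : ∀ x, lap ψ x ^ 2 ≤ C / ρ ^ 4

namespace IsCutoff

variable {n : ℕ} {r₁ r₂ C ρ : ℝ} {ψ : Euc n → ℝ} {x : Euc n}

lemma comp_smul (h : IsCutoff r₁ r₂ C 1 ψ) (hρ : 0 < ρ) :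
    IsCutoff r₁ r₂ C ρ fun x => ψ (ρ⁻¹ • x) := by
  have hnorm (x : Euc n) : ‖ρ⁻¹ • x‖ = ‖x‖ / ρ := by
    rw [norm_smul, Real.norm_of_nonneg (by positivity), inv_mul_eq_div]
  refine ⟨h.smooth.comp_smul _, fun x => h.nonneg _, fun x => h.le_one _, fun x hx => ?_,
    fun x hx => ?_, fun x => ?_, fun x => ?_⟩
  · exact h.eq_one _ (by rwa [hnorm, mul_one, div_le_iff₀ hρ])
  · exact h.eq_zero _ (by rwa [hnorm, mul_one, le_div_iff₀ hρ])
  · rw [gradInner_comp_smul, div_eq_inv_mul, inv_pow]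
    gcongr
    simpa using h.gradInner_le (ρ⁻¹ • x)
  · rw [lap_comp_smul h.smooth, div_eq_inv_mul, mul_pow, ← pow_mul, inv_pow]
    gcongr
    simpa using h.lap_sq_le (ρ⁻¹ • x)

lemma tsupport_subset (h : IsCutoff r₁ r₂ C ρ ψ) : tsupport ψ ⊆ closedBall 0 (r₂ * ρ) := by
  refine closure_minimal (fun x hx => ?_) isClosed_closedBall
  by_contra hn
  rw [mem_closedBall_zero_iff, not_le] at hn
  exact hx (h.eq_zero x hn.le)

lemma hasCompactSupport (h : IsCutoff r₁ r₂ C ρ ψ) : HasCompactSupport ψ :=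
  (isCompact_closedBall _ _).of_isClosed_subset isClosed_closure h.tsupport_subset

lemma isTestFun {R : ℝ} (h : IsCutoff r₁ r₂ C ρ ψ) (hR : r₂ * ρ < R) :
    IsTestFun (ball 0 R) ψ :=
  ⟨h.smooth, h.hasCompactSupport, h.tsupport_subset.trans (closedBall_subset_ball hR)⟩

lemma eventuallyEq_one (h : IsCutoff r₁ r₂ C ρ ψ) (hx : ‖x‖ < r₁ * ρ) :
    ψ =ᶠ[nhds x] fun _ => 1 := by
  filter_upwards [(isOpen_lt continuous_norm continuous_const).mem_nhds hx] with y hy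
  exact h.eq_one y (le_of_lt hy)

lemma eventuallyEq_zero (h : IsCutoff r₁ r₂ C ρ ψ) (hx : r₂ * ρ < ‖x‖) :
    ψ =ᶠ[nhds x] fun _ => 0 := by
  filter_upwards [(isOpen_lt continuous_const continuous_norm).mem_nhds hx] with y hy
  exact h.eq_zero y (le_of_lt hy)

end IsCutoff

lemma IsTestFun.exists_forall_le {n : ℕ} {Ω : Set (Euc n)} {f : Euc n → ℝ} (hf : IsTestFun Ω f) :
    ∃ C, ∀ x, f x ≤ C := by
  obtain ⟨C, hC⟩ := hf.smooth.continuous.bounded_above_of_compact_support hf.hasCompactSupport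
  exact ⟨C, fun x => (le_abs_self _).trans (hC x)⟩

lemma exists_isCutoff (n : ℕ) {r₁ r₂ : ℝ} (h₁ : 0 < r₁) (h₂ : r₁ < r₂) :
    ∃ C : ℝ, 1 ≤ C ∧ ∀ ρ : ℝ, 0 < ρ → ∃ ψ : Euc n → ℝ, IsCutoff r₁ r₂ C ρ ψ := by
  let φ : ContDiffBump (0 : Euc n) := ⟨r₁, r₂, h₁, h₂⟩
  have hφ : IsTestFun univ φ := ⟨φ.contDiff, φ.hasCompactSupport, subset_univ _⟩
  obtain ⟨C₁, hC₁⟩ := (hφ.gradInner hφ.smooth).exists_forall_le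
  obtain ⟨C₂, hC₂⟩ := (hφ.lap.smooth_mul hφ.lap.smooth).exists_forall_le
  refine ⟨max 1 (max C₁ C₂), le_max_left _ _, fun ρ hρ => ⟨_, IsCutoff.comp_smul ⟨hφ.smooth,
    fun x => φ.nonneg, fun x => φ.le_one, fun x hx => ?_, fun x hx => ?_, fun x => ?_,
    fun x => ?_⟩ hρ⟩⟩
  · exact φ.one_of_mem_closedBall (by simpa using hx)
  · exact φ.zero_of_le_dist (by simpa using hx)
  · simpa using Or.inr (Or.inl (hC₁ x))
  · simpa [sq] using Or.inr (Or.inr (hC₂ x))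

section Caccioppoli

variable {n : ℕ} {f g h η u : Euc n → ℝ} {Ω : Set (Euc n)} {γ : ℝ}

lemma gradInner_mul_left (hf : IsSmooth f) (hg : IsSmooth g) (x : Euc n) :
    gradInner (fun y => f y * g y) h x = f x * gradInner g h x + g x * gradInner f h x := by
  simp only [gradInner, dirDeriv_fun_mul _ hf hg, Finset.mul_sum, ← Finset.sum_add_distrib]
  exact Finset.sum_congr rfl fun i _ => by ring

lemma dirDeriv_pow (hf : IsSmooth f) (k : ℕ) (v x : Euc n) :
    ∂[v] (fun y => f y ^ k) x = k * f x ^ (k - 1) * ∂[v] f x := by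
  simp [derivAlong, fderiv_fun_pow k (hf.differentiable x)]

lemma gradInner_pow_left (hf : IsSmooth f) (k : ℕ) (x : Euc n) :
    gradInner (fun y => f y ^ k) h x = k * f x ^ (k - 1) * gradInner f h x := by
  simp only [gradInner, dirDeriv_pow hf, Finset.mul_sum]
  exact Finset.sum_congr rfl fun i _ => by ring

lemma IsTestFun.pow_mul (hη : IsTestFun Ω η) (hf : IsSmooth f) (k : ℕ) :
    IsTestFun Ω fun x => η x ^ (k + 1) * f x := by
  simpa only [pow_succ, mul_assoc, mul_comm (η _) (f _), mul_left_comm] using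
    hη.smooth_mul ((hη.smooth.pow k).mul hf)

/- The integrand is the divergence of `η ^ (k + 1) f ∇h`. -/
lemma hasZeroIntegral_div (hη : IsTestFun Ω η) (hf : IsSmooth f) (hh : IsSmooth h)
    (k : ℕ) : HasZeroIntegral volume fun x => η x ^ (k + 1) * (gradInner f h x + f x * lap h x) +
      (k + 1) * (η x ^ k * (f x * gradInner η h x)) := by
  have hηf := hη.pow_mul hf k
  have hgrad := hηf.gradInner hh
  have hlap : Integrable fun x => (η x ^ (k + 1) * f x) * lap h x := by
    simpa only [mul_comm] using (hηf.smooth_mul hh.lap).integrable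
  have heq : (fun x => η x ^ (k + 1) * (gradInner f h x + f x * lap h x) +
      (k + 1) * (η x ^ k * (f x * gradInner η h x))) = fun x =>
      gradInner (fun y => η y ^ (k + 1) * f y) h x + (η x ^ (k + 1) * f x) * lap h x := by
    ext x
    rw [gradInner_mul_left (hη.smooth.pow _) hf, gradInner_pow_left hη.smooth]
    push_cast [Nat.add_sub_cancel]
    ring
  rw [heq]
  refine ⟨hgrad.integrable.add hlap, ?_⟩
  rw [integral_add hgrad.integrable hlap, integral_mul_lap hηf.smooth hh hηf.hasCompactSupport]
  ring

lemma HasZeroIntegral.integral_le {α : Type*} [MeasurableSpace α] {μ : Measure α}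
    {F P R₁ R₂ R₃ : α → ℝ} {a b c : ℝ} (hF : HasZeroIntegral μ F) (hP : Integrable P μ)
    (h₁ : Integrable R₁ μ) (h₂ : Integrable R₂ μ) (h₃ : Integrable R₃ μ)
    (h : ∀ x, P x ≤ a * R₁ x + b * R₂ x + c * R₃ x + F x) :
    ∫ x, P x ∂μ ≤ a * ∫ x, R₁ x ∂μ + b * ∫ x, R₂ x ∂μ + c * ∫ x, R₃ x ∂μ := by
  have h₁₂ := (h₁.const_mul a).add (h₂.const_mul b)
  have hR := h₁₂.add (h₃.const_mul c)
  refine (integral_mono hP (hR.add hF.integrable) h).trans_eq ?_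
  simp only [Pi.add_def] at h₁₂ hR ⊢
  rw [integral_add hR hF.integrable, hF.integral_eq_zero, add_zero,
    integral_add h₁₂ (h₃.const_mul c), integral_add (h₁.const_mul a) (h₂.const_mul b),
    integral_const_mul, integral_const_mul, integral_const_mul]

lemma neg_two_mul_le_add {s A B : ℝ} (hs : s ^ 2 ≤ A * B) (hA : 0 ≤ A) (hB : 0 ≤ B) :
    -(2 * s) ≤ A + B := by
  have h : (2 * s) ^ 2 ≤ (A + B) ^ 2 := by nlinarith [sq_nonneg (A - B)]
  linarith [abs_le_of_sq_le_sq h (by positivity), neg_abs_le (2 * s)]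

lemma neg_two_mul_gradInner_le {c ε A : ℝ} {x : Euc n} (hε : 0 ≤ ε)
    (hA : c ^ 2 * gradInner f f x ≤ ε * A) (h₀ : 0 ≤ A) :
    -(2 * (c * gradInner f h x)) ≤ ε * gradInner h h x + A := by
  have hh := gradInner_self_nonneg h x
  refine neg_two_mul_le_add ?_ (mul_nonneg hε hh) h₀
  calc (c * gradInner f h x) ^ 2 = c ^ 2 * gradInner f h x ^ 2 := by ring
    _ ≤ c ^ 2 * (gradInner f f x * gradInner h h x) := by
      gcongr
      exact gradInner_sq_le f h x
    _ = c ^ 2 * gradInner f f x * gradInner h h x := by ring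
    _ ≤ ε * A * gradInner h h x := by gcongr
    _ = _ := by ring

lemma IsTestFun.integral_gradInner_le (hη : IsTestFun Ω η) (hΩ : MeasurableSet Ω)
    (hu : IsSmooth u) (huΩ : IntegrableOn (fun x => u x ^ 2) Ω)
    (hγ : 0 < γ) (hgrad : ∀ x, gradInner η η x ≤ γ) :
    ∫ x, η x ^ 2 * gradInner u u x ≤ 1 / 2 * (∫ x, η x ^ 2 * gradInner u u x) +
      1 / (720 * γ) * (∫ x, η x ^ 4 * lap u x ^ 2) + 182 * γ * ∫ x in Ω, u x ^ 2 := by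
  have hY := (hη.pow_mul (hu.gradInner hu) 1).integrable
  have hX := (hη.pow_mul (hu.lap.pow 2) 3).integrable
  rw [← integral_indicator hΩ]
  refine (hasZeroIntegral_div hη hu hu 1).integral_le hY hY hX (huΩ.integrable_indicator hΩ)
    fun x => ?_
  by_cases hx : x ∈ Ω
  · have hcross : -(2 * (η x * u x * gradInner η u x)) ≤
        1 / 2 * η x ^ 2 * gradInner u u x + 2 * γ * u x ^ 2 := by
      refine neg_two_mul_gradInner_le (by positivity) ?_ (by positivity)
      nlinarith [mul_le_mul_of_nonneg_left (hgrad x) (sq_nonneg (η x * u x))]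
    have hmixed : -(2 * (η x ^ 2 * (u x * lap u x) / 2)) ≤
        1 / (720 * γ) * (η x ^ 4 * lap u x ^ 2) + 180 * γ * u x ^ 2 := by
      refine neg_two_mul_le_add (le_of_eq ?_) (by positivity) (by positivity)
      field_simp
      ring
    simp only [indicator_of_mem hx, Nat.cast_one]
    linarith
  · simp [hη.eq_zero hx, hx]

lemma IsTestFun.integral_lap_sq_le (hη : IsTestFun Ω η) (hu : IsSmooth u)
    (hγ : 0 < γ) (hgrad : ∀ x, gradInner η η x ≤ γ) :
    ∫ x, η x ^ 4 * lap u x ^ 2 ≤ 1 / (148 * γ) *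
      (∫ x, η x ^ 6 * gradInner (lap u) (lap u) x) +
      45 * γ * (∫ x, η x ^ 2 * gradInner u u x) + 1 / 2 * ∫ x, η x ^ 4 * lap u x ^ 2 := by
  have hY := (hη.pow_mul (hu.gradInner hu) 1).integrable
  have hX := (hη.pow_mul (hu.lap.pow 2) 3).integrable
  have hZ := (hη.pow_mul (hu.lap.gradInner hu.lap) 5).integrable
  refine (hasZeroIntegral_div hη hu.lap hu 3).integral_le hX hZ hY hX fun x => ?_
  have hv := gradInner_self_nonneg (lap u) x
  have hcross : -(2 * (2 * η x ^ 3 * lap u x * gradInner η u x)) ≤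
      8 * γ * η x ^ 2 * gradInner u u x + 1 / 2 * (η x ^ 4 * lap u x ^ 2) := by
    refine neg_two_mul_gradInner_le (by positivity) ?_ (by positivity)
    nlinarith [mul_le_mul_of_nonneg_left (hgrad x) (sq_nonneg (η x ^ 3 * lap u x))]
  have hmixed : -(2 * (η x ^ 4 / 2 * gradInner (lap u) u x)) ≤
      37 * γ * η x ^ 2 * gradInner u u x +
        1 / (148 * γ) * (η x ^ 6 * gradInner (lap u) (lap u) x) := by
    refine neg_two_mul_gradInner_le (by positivity) (le_of_eq ?_) (by positivity)
    field_simp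
    ring
  push_cast
  linarith

lemma IsTestFun.integral_gradInner_lap_le (hη : IsTestFun Ω η) (hη₁ : ∀ x, |η x| ≤ 1)
    (hΩ : MeasurableSet Ω) (hu : IsSmooth u) (huΩ : IntegrableOn (fun x => u x ^ 2) Ω)
    (hγ : 0 ≤ γ) (hgrad : ∀ x, gradInner η η x ≤ γ) (hlap : ∀ x ∈ Ω, |lap (lap u) x| ≤ |u x|) :
    ∫ x, η x ^ 6 * gradInner (lap u) (lap u) x ≤
      (1 / 2 + 18 * γ) * (∫ x, η x ^ 4 * lap u x ^ 2) +
      1 / 2 * (∫ x, η x ^ 6 * gradInner (lap u) (lap u) x) + 1 / 2 * ∫ x in Ω, u x ^ 2 := by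
  have hX := (hη.pow_mul (hu.lap.pow 2) 3).integrable
  have hZ := (hη.pow_mul (hu.lap.gradInner hu.lap) 5).integrable
  rw [← integral_indicator hΩ]
  refine (hasZeroIntegral_div hη hu.lap hu.lap 5).integral_le hZ hX hZ
    (huΩ.integrable_indicator hΩ) fun x => ?_
  by_cases hx : x ∈ Ω
  · have hcross : -(2 * (3 * η x ^ 5 * lap u x * gradInner η (lap u) x)) ≤
        1 / 2 * η x ^ 6 * gradInner (lap u) (lap u) x + 18 * γ * (η x ^ 4 * lap u x ^ 2) := by
      refine neg_two_mul_gradInner_le (by positivity) ?_ (by positivity)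
      nlinarith [mul_le_mul_of_nonneg_left (hgrad x) (sq_nonneg (η x ^ 5 * lap u x))]
    have hmixed : -(2 * (η x ^ 6 * (lap u x * lap (lap u) x) / 2)) ≤
        1 / 2 * (η x ^ 4 * lap u x ^ 2) + 1 / 2 * u x ^ 2 := by
      refine neg_two_mul_le_add ?_ (by positivity) (by positivity)
      have h₈ : η x ^ 8 ≤ 1 := by
        simpa only [Even.pow_abs (by decide : Even 8)] using
          pow_le_one₀ (n := 8) (abs_nonneg _) (hη₁ x)
      have hlap' : lap (lap u) x ^ 2 ≤ u x ^ 2 := sq_le_sq.mpr (hlap x hx)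
      have := mul_le_mul h₈ hlap' (sq_nonneg _) zero_le_one
      nlinarith [mul_le_mul_of_nonneg_left this
        (by positivity : 0 ≤ η x ^ 4 * lap u x ^ 2)]
    simp only [indicator_of_mem hx]
    push_cast
    linarith
  · simp [hη.eq_zero hx, hx]

theorem IsTestFun.caccioppoli_bilaplacian (hη : IsTestFun Ω η) (hη₁ : ∀ x, |η x| ≤ 1)
    (hΩ : MeasurableSet Ω) (hu : IsSmooth u) (huΩ : IntegrableOn (fun x => u x ^ 2) Ω)
    (hγ : 1 ≤ γ) (hgrad : ∀ x, gradInner η η x ≤ γ) (hlap : ∀ x ∈ Ω, |lap (lap u) x| ≤ |u x|) :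
    ∫ x, η x ^ 2 * gradInner u u x ≤ 740 * γ * (∫ x in Ω, u x ^ 2) ∧
    ∫ x, η x ^ 4 * lap u x ^ 2 ≤ 132000 * γ ^ 2 * (∫ x in Ω, u x ^ 2) ∧
    ∫ x, η x ^ 6 * gradInner (lap u) (lap u) x ≤ 5000000 * γ ^ 3 * ∫ x in Ω, u x ^ 2 := by
  have hγ₀ : 0 < γ := by linarith
  have h₁ := hη.integral_gradInner_le hΩ hu huΩ hγ₀ hgrad
  have h₂ := hη.integral_lap_sq_le hu hγ₀ hgrad
  have h₃ := hη.integral_gradInner_lap_le hη₁ hΩ hu huΩ hγ₀.le hgrad hlap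
  have hV : 0 ≤ ∫ x in Ω, u x ^ 2 := integral_nonneg fun x => sq_nonneg _
  have hX : 0 ≤ ∫ x, η x ^ 4 * lap u x ^ 2 := integral_nonneg fun x => by positivity
  generalize ∫ x, η x ^ 2 * gradInner u u x = Y at *
  generalize ∫ x, η x ^ 4 * lap u x ^ 2 = X at *
  generalize ∫ x, η x ^ 6 * gradInner (lap u) (lap u) x = Z at *
  generalize ∫ x in Ω, u x ^ 2 = V at *
  have hY' : γ * Y ≤ X / 360 + 364 * γ ^ 2 * V := by
    have := mul_le_mul_of_nonneg_left h₁ hγ₀.le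
    field_simp at this
    linarith
  have hZ' : Z ≤ 37 * γ * X + V := by nlinarith
  have hX' : γ * X ≤ (37 * γ * X + V) / 74 + 90 * γ * (X / 360 + 364 * γ ^ 2 * V) := by
    have := mul_le_mul_of_nonneg_left h₂ hγ₀.le
    field_simp at this
    nlinarith
  have hX'' : X ≤ 132000 * γ ^ 2 * V := by
    refine le_of_mul_le_mul_left ?_ hγ₀
    have : V ≤ γ ^ 3 * V := le_mul_of_one_le_left hV (one_le_pow₀ hγ)
    nlinarith
  refine ⟨le_of_mul_le_mul_left (b := Y) (a := γ) ?_ hγ₀, hX'', ?_⟩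
  · nlinarith
  · have : V ≤ γ ^ 3 * V := le_mul_of_one_le_left hV (one_le_pow₀ hγ)
    nlinarith [mul_le_mul_of_nonneg_left hX'' (by positivity : 0 ≤ 37 * γ)]

end Caccioppoli

section AnnulusCutoff

variable {n : ℕ} {f ψ ψ₁ ψ₂ : Euc n → ℝ} {δ C a b : ℝ}

lemma dirDeriv_one_sub (ψ : Euc n → ℝ) (v x : Euc n) :
    ∂[v] (fun y => 1 - ψ y) x = -∂[v] ψ x := by
  simp [derivAlong, fderiv_const_sub]

lemma gradInner_one_sub (ψ : Euc n → ℝ) (x : Euc n) :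
    gradInner (fun y => 1 - ψ y) (fun y => 1 - ψ y) x = gradInner ψ ψ x := by
  simp [gradInner, dirDeriv_one_sub]

lemma lap_one_sub (ψ : Euc n → ℝ) (x : Euc n) : lap (fun y => 1 - ψ y) x = -lap ψ x := by
  have h : fderiv ℝ (fun y => 1 - ψ y) = fun y => -fderiv ℝ ψ y := funext fun y =>
    fderiv_const_sub 1
  simp [lap_eq_sum_fderiv, h, fderiv_fun_neg]

lemma gradInner_self_congr {x : Euc n} {g : Euc n → ℝ} (h : f =ᶠ[nhds x] g) :
    gradInner f f x = gradInner g g x := by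
  rw [gradInner_congr_left h, gradInner_comm, gradInner_congr_left h]

lemma IsCutoff.isTestFun_annulus (h₁ : IsCutoff (1 - 2 * δ) (1 - δ) C a ψ₁)
    (h₂ : IsCutoff (1 - 2 * δ) (1 - δ) C b ψ₂) (hδ : 0 < δ) (hδ₈ : δ ≤ 1 / 8) (ha : 0 < a)
    (hb : 0 < b) : IsTestFun (annulus n (a / 2) b) fun x => (1 - ψ₁ x) * ψ₂ x := by
  have hsupp : tsupport (fun x => (1 - ψ₁ x) * ψ₂ x) ⊆
      {x | (1 - 2 * δ) * a ≤ ‖x‖ ∧ ‖x‖ ≤ (1 - δ) * b} := by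
    refine closure_minimal (fun x hx => ?_) ((isClosed_le continuous_const continuous_norm).inter
      (isClosed_le continuous_norm continuous_const))
    refine ⟨?_, ?_⟩ <;> by_contra! hlt
    · exact hx (by simp [h₁.eq_one x hlt.le])
    · exact hx (by simp [h₂.eq_zero x hlt.le])
  refine ⟨(contDiff_const.sub h₁.smooth).mul h₂.smooth, ?_, fun x hx => ?_⟩
  · exact (isCompact_closedBall 0 ((1 - δ) * b)).of_isClosed_subset isClosed_closure
      fun x hx => mem_closedBall_zero_iff.2 (hsupp hx).2
  · have := hsupp hx
    exact ⟨by nlinarith [this.1], by nlinarith [this.2]⟩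

lemma IsCutoff.annulus_eventuallyEq_or (h₁ : IsCutoff (1 - 2 * δ) (1 - δ) C a ψ₁)
    (h₂ : IsCutoff (1 - 2 * δ) (1 - δ) C b ψ₂) (hδ₈ : δ ≤ 1 / 8) (ha : 0 < a)
    (hab : 4 * a ≤ b) (x : Euc n) :
    (∃ c, (fun y => (1 - ψ₁ y) * ψ₂ y) =ᶠ[nhds x] fun _ => c) ∨
      ∃ ρ ∈ ({a, b} : Set ℝ), (1 - 2 * δ) * ρ ≤ ‖x‖ ∧ ‖x‖ ≤ (1 - δ) * ρ ∧
        gradInner (fun y => (1 - ψ₁ y) * ψ₂ y) (fun y => (1 - ψ₁ y) * ψ₂ y) x ≤ C / ρ ^ 2 ∧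
        lap (fun y => (1 - ψ₁ y) * ψ₂ y) x ^ 2 ≤ C / ρ ^ 4 := by
  rcases lt_or_ge ‖x‖ ((1 - 2 * δ) * b) with hxb | hxb
  · have hχ : (fun y => (1 - ψ₁ y) * ψ₂ y) =ᶠ[nhds x] fun y => 1 - ψ₁ y := by
      filter_upwards [h₂.eventuallyEq_one hxb] with y hy
      rw [hy, mul_one]
    rcases lt_or_ge ‖x‖ ((1 - 2 * δ) * a) with hxa | hxa
    · refine .inl ⟨0, hχ.trans ?_⟩
      filter_upwards [h₁.eventuallyEq_one hxa] with y hy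
      rw [hy, sub_self]
    rcases lt_or_ge ((1 - δ) * a) ‖x‖ with hxa' | hxa'
    · refine .inl ⟨1, hχ.trans ?_⟩
      filter_upwards [h₁.eventuallyEq_zero hxa'] with y hy
      rw [hy, sub_zero]
    · refine .inr ⟨a, .inl rfl, hxa, hxa', ?_, ?_⟩
      · rw [gradInner_self_congr hχ, gradInner_one_sub]
        exact h₁.gradInner_le x
      · rw [lap_congr hχ, lap_one_sub, neg_sq]
        exact h₁.lap_sq_le x
  · have hχ : (fun y => (1 - ψ₁ y) * ψ₂ y) =ᶠ[nhds x] ψ₂ := by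
      filter_upwards [h₁.eventuallyEq_zero (by nlinarith)] with y hy
      rw [hy, sub_zero, one_mul]
    rcases lt_or_ge ((1 - δ) * b) ‖x‖ with hxb' | hxb'
    · exact .inl ⟨0, hχ.trans (h₂.eventuallyEq_zero hxb')⟩
    · refine .inr ⟨b, .inr rfl, hxb, hxb', ?_, ?_⟩
      · rw [gradInner_self_congr hχ]
        exact h₂.gradInner_le x
      · rw [lap_congr hχ]
        exact h₂.lap_sq_le x

lemma exists_annulusCutoff (n : ℕ) (hδ : 0 < δ) (hδ₈ : δ ≤ 1 / 8) :
    ∃ C : ℝ, 1 ≤ C ∧ ∀ a b : ℝ, 0 < a → 4 * a ≤ b → ∃ χ : Euc n → ℝ,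
      IsTestFun (annulus n (a / 2) b) χ ∧
      (∀ x, (1 - δ) * a ≤ ‖x‖ → ‖x‖ ≤ (1 - 2 * δ) * b → χ x = 1) ∧
      ∀ x, (∃ c, χ =ᶠ[nhds x] fun _ => c) ∨
        ∃ ρ ∈ ({a, b} : Set ℝ), (1 - 2 * δ) * ρ ≤ ‖x‖ ∧ ‖x‖ ≤ (1 - δ) * ρ ∧
          gradInner χ χ x ≤ C / ρ ^ 2 ∧ lap χ x ^ 2 ≤ C / ρ ^ 4 := by
  obtain ⟨C, hC, hψ⟩ := exists_isCutoff n (r₁ := 1 - 2 * δ) (r₂ := 1 - δ) (by linarith)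
    (by linarith)
  refine ⟨C, hC, fun a b ha hab => ?_⟩
  have hb : 0 < b := by linarith
  obtain ⟨ψ₁, h₁⟩ := hψ a ha
  obtain ⟨ψ₂, h₂⟩ := hψ b hb
  refine ⟨_, h₁.isTestFun_annulus h₂ hδ hδ₈ ha hb, fun x hxa hxb => ?_,
    h₁.annulus_eventuallyEq_or h₂ hδ₈ ha hab⟩
  rw [h₁.eq_zero x hxa, h₂.eq_one x hxb, sub_zero, one_mul]

end AnnulusCutoff

section ScaledEnergy

variable {n : ℕ} {η u : Euc n → ℝ} {r₁ r₂ C ρ M : ℝ}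

/-- The localised energy density of `u` at scale `ρ`, made of the terms that a cutoff at scale `ρ`
produces in a commutator with the bi-Laplacian; `η` is the cutoff of the Caccioppoli inequality. -/
def scaledEnergy {n : ℕ} (ρ : ℝ) (η u : Euc n → ℝ) (x : Euc n) : ℝ :=
  ρ ^ 2 * (η x ^ 2 * gradInner u u x) + ρ ^ 4 * (η x ^ 4 * lap u x ^ 2) +
    ρ ^ 6 * (η x ^ 6 * gradInner (lap u) (lap u) x) + (ball 0 ρ).indicator (fun y => u y ^ 2) x

lemma scaledEnergy_nonneg (ρ : ℝ) (η u : Euc n → ℝ) (x : Euc n) : 0 ≤ scaledEnergy ρ η u x := by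
  have hu := gradInner_self_nonneg u x
  have hv := gradInner_self_nonneg (lap u) x
  have hD : 0 ≤ (ball 0 ρ).indicator (fun y => u y ^ 2) x :=
    indicator_nonneg (fun y _ => sq_nonneg (u y)) x
  unfold scaledEnergy
  positivity

lemma integrableOn_ball_of_continuous {f : Euc n → ℝ} (hf : Continuous f) (x : Euc n) (r : ℝ) :
    IntegrableOn f (ball x r) :=
  (hf.continuousOn.integrableOn_compact (isCompact_closedBall x r)).mono_set ball_subset_closedBall

lemma measureReal_ball {ρ : ℝ} (hρ : 0 < ρ) (x : Euc n) :
    volume.real (ball x ρ) = ρ ^ n * volume.real (ball (0 : Euc n) 1) := by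
  simp [measureReal_def, Measure.addHaar_ball_of_pos _ _ hρ, hρ.le]

lemma setIntegral_ball_sq_le (hu : Continuous u) (hρ : 0 < ρ) (hM : ∀ x, ‖x‖ < ρ → |u x| ≤ M) :
    ∫ x in ball 0 ρ, u x ^ 2 ≤ M ^ 2 * (ρ ^ n * volume.real (ball (0 : Euc n) 1)) := by
  rw [← measureReal_ball hρ 0, mul_comm, ← smul_eq_mul, ← setIntegral_const]
  refine setIntegral_mono_on (integrableOn_ball_of_continuous (hu.pow 2) _ _)
    (integrableOn_const measure_ball_lt_top.ne) measurableSet_ball fun x hx => ?_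
  exact sq_le_sq' (neg_le_of_abs_le (hM x (by simpa using hx)))
    (le_of_abs_le (hM x (by simpa using hx)))

lemma IsCutoff.hasIntegral_scaledEnergy (hη : IsCutoff r₁ r₂ C ρ η) (hr : r₂ * ρ < ρ)
    (hu : IsSmooth u) : Integrable (scaledEnergy ρ η u) ∧
      ∫ x, scaledEnergy ρ η u x = ρ ^ 2 * (∫ x, η x ^ 2 * gradInner u u x) +
        ρ ^ 4 * (∫ x, η x ^ 4 * lap u x ^ 2) +
        ρ ^ 6 * (∫ x, η x ^ 6 * gradInner (lap u) (lap u) x) + ∫ x in ball 0 ρ, u x ^ 2 := by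
  have hηt := hη.isTestFun hr
  have hY : Integrable fun x => ρ ^ 2 * (η x ^ 2 * gradInner u u x) :=
    (hηt.pow_mul (hu.gradInner hu) 1).integrable.const_mul _
  have hX : Integrable fun x => ρ ^ 4 * (η x ^ 4 * lap u x ^ 2) :=
    (hηt.pow_mul (hu.lap.pow 2) 3).integrable.const_mul _
  have hZ : Integrable fun x => ρ ^ 6 * (η x ^ 6 * gradInner (lap u) (lap u) x) :=
    (hηt.pow_mul (hu.lap.gradInner hu.lap) 5).integrable.const_mul _
  have hD : Integrable ((ball 0 ρ).indicator fun x => u x ^ 2) :=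
    (integrableOn_ball_of_continuous (hu.continuous.pow 2) 0 ρ).integrable_indicator
      measurableSet_ball
  refine ⟨((hY.add hX).add hZ).add hD, ?_⟩
  simp only [scaledEnergy]
  rw [integral_add (by exact (hY.add hX).add hZ) hD, integral_add (by exact hY.add hX) hZ,
    integral_add hY hX, integral_const_mul, integral_const_mul, integral_const_mul,
    integral_indicator measurableSet_ball]

lemma IsCutoff.integral_scaledEnergy_le (hη : IsCutoff r₁ r₂ C ρ η) (hr : r₂ * ρ < ρ)
    (hC : 1 ≤ C) (hρ : 0 < ρ) (hρ₁ : ρ ≤ 1) (hu : IsSmooth u)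
    (hlap : ∀ x, ‖x‖ < ρ → |lap (lap u) x| ≤ |u x|) :
    ∫ x, scaledEnergy ρ η u x ≤ 10 ^ 7 * C ^ 3 * ∫ x in ball 0 ρ, u x ^ 2 := by
  have hηt := hη.isTestFun hr
  have hγ : 1 ≤ C / ρ ^ 2 := by
    rw [one_le_div (by positivity)]
    exact (pow_le_one₀ hρ.le hρ₁).trans hC
  obtain ⟨hY', hX', hZ'⟩ := hηt.caccioppoli_bilaplacian
    (fun x => abs_le.2 ⟨by linarith [hη.nonneg x], hη.le_one x⟩) measurableSet_ball hu
    (integrableOn_ball_of_continuous (hu.continuous.pow 2) _ _) hγ hη.gradInner_le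
    fun x hx => hlap x (by simpa using hx)
  have hV : 0 ≤ ∫ x in ball 0 ρ, u x ^ 2 := integral_nonneg fun x => sq_nonneg _
  rw [(hη.hasIntegral_scaledEnergy hr hu).2]
  generalize ∫ x in ball 0 ρ, u x ^ 2 = V at *
  have hC₃ : C * V ≤ C ^ 3 * V ∧ C ^ 2 * V ≤ C ^ 3 * V ∧ V ≤ C ^ 3 * V :=
    ⟨mul_le_mul_of_nonneg_right (le_self_pow₀ hC (by norm_num)) hV,
      mul_le_mul_of_nonneg_right (pow_le_pow_right₀ hC (by norm_num)) hV,
      le_mul_of_one_le_left hV (one_le_pow₀ hC)⟩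
  calc _ ≤ ρ ^ 2 * (740 * (C / ρ ^ 2) * V) + ρ ^ 4 * (132000 * (C / ρ ^ 2) ^ 2 * V) +
        ρ ^ 6 * (5000000 * (C / ρ ^ 2) ^ 3 * V) + V := by gcongr
    _ = 740 * (C * V) + 132000 * (C ^ 2 * V) + 5000000 * (C ^ 3 * V) + V := by
      field_simp
    _ ≤ 10 ^ 7 * C ^ 3 * V := by linarith

lemma IsCutoff.rpow_mul_integral_scaledEnergy_le (hη : IsCutoff r₁ r₂ C ρ η) (hr : r₂ * ρ < ρ)
    (hC : 1 ≤ C) (hρ : 0 < ρ) (hρ₁ : ρ ≤ 1) (hu : IsSmooth u)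
    (hlap : ∀ x, ‖x‖ < ρ → |lap (lap u) x| ≤ |u x|) (hM : ∀ x, ‖x‖ < ρ → |u x| ≤ M) {θ : ℝ}
    (hθ : 0 < θ) (s : ℝ) :
    (θ * ρ) ^ (-(s + n)) * ∫ x, scaledEnergy ρ η u x ≤
      10 ^ 7 * C ^ 3 * volume.real (ball (0 : Euc n) 1) * (θ ^ n)⁻¹ *
        ((θ * ρ) ^ (-s) * M ^ 2) := by
  have hint := (hη.integral_scaledEnergy_le hr hC hρ hρ₁ hu hlap).trans
    (mul_le_mul_of_nonneg_left (setIntegral_ball_sq_le hu.continuous hρ hM) (by positivity))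
  have hpow : (θ * ρ) ^ (-(s + n)) = (θ * ρ) ^ (-s) * (θ ^ n * ρ ^ n)⁻¹ := by
    rw [neg_add, Real.rpow_add (by positivity), Real.rpow_neg _ n, Real.rpow_natCast, mul_pow]
    positivity
  refine (mul_le_mul_of_nonneg_left hint (by positivity)).trans_eq ?_
  rw [hpow]
  field_simp

end ScaledEnergy

section CutoffCarleman

variable {n : ℕ} {χ f u η : Euc n → ℝ} {C ρ Λ w w' δ a b τ σ : ℝ} {x : Euc n}

lemma lapComm_eq_zero {c : ℝ} (h : χ =ᶠ[nhds x] fun _ => c) : lapComm χ u x = 0 := by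
  rw [lapComm, gradInner_congr_left h, gradInner_const_left, lap_congr h, lap_const]
  ring

lemma lapComm_sq_le (hg : gradInner χ χ x ≤ C / ρ ^ 2) (hl : lap χ x ^ 2 ≤ C / ρ ^ 4) :
    lapComm χ f x ^ 2 ≤ C * (8 * (gradInner f f x / ρ ^ 2) + 2 * (f x ^ 2 / ρ ^ 4)) := by
  have hf := gradInner_self_nonneg f x
  calc lapComm χ f x ^ 2 ≤ 2 * ((2 * gradInner χ f x) ^ 2 + (f x * lap χ x) ^ 2) := add_sq_le
    _ = 8 * gradInner χ f x ^ 2 + 2 * (f x ^ 2 * lap χ x ^ 2) := by ring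
    _ ≤ 8 * (C / ρ ^ 2 * gradInner f f x) + 2 * (f x ^ 2 * (C / ρ ^ 4)) := by
      gcongr
      exact (gradInner_sq_le χ f x).trans (by gcongr)
    _ = _ := by ring

lemma weighted_lapComm_sq_le (hρ : 0 < ρ) (hxρ : ‖x‖ < ρ) (hη : η x = 1)
    (hw : w ^ 2 ≤ Λ) (hw' : w' ^ 2 ≤ Λ * ρ ^ 4) (hg : gradInner χ χ x ≤ C / ρ ^ 2)
    (hl : lap χ x ^ 2 ≤ C / ρ ^ 4) :
    (w' * (‖x‖ ^ 2 * lapComm χ (lap u) x)) ^ 2 + 4 * (w * (‖x‖ ^ 2 * lapComm χ u x)) ^ 2 ≤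
      32 * C * (Λ * scaledEnergy ρ η u x) := by
  have hv := gradInner_self_nonneg (lap u) x
  have hΛ : 0 ≤ Λ := (sq_nonneg w).trans hw
  have hC : 0 ≤ C := by
    have := (gradInner_self_nonneg χ x).trans hg
    by_contra! hC
    exact absurd this (not_le.2 (div_neg_of_neg_of_pos hC (by positivity)))
  have hfirst : (w * (‖x‖ ^ 2 * lapComm χ u x)) ^ 2 ≤
      Λ * (ρ ^ 4 * (C * (8 * (gradInner u u x / ρ ^ 2) + 2 * (u x ^ 2 / ρ ^ 4)))) := by
    rw [mul_pow, mul_pow, ← pow_mul]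
    gcongr
    exact lapComm_sq_le hg hl
  have hsecond : (w' * (‖x‖ ^ 2 * lapComm χ (lap u) x)) ^ 2 ≤ Λ * ρ ^ 4 * (ρ ^ 4 *
      (C * (8 * (gradInner (lap u) (lap u) x / ρ ^ 2) + 2 * (lap u x ^ 2 / ρ ^ 4)))) := by
    rw [mul_pow, mul_pow, ← pow_mul]
    gcongr
    exact lapComm_sq_le hg hl
  have hslack : 0 ≤ Λ * C * (ρ ^ 4 * lap u x ^ 2) ∧ 0 ≤ Λ * C * u x ^ 2 ∧
      0 ≤ Λ * C * (ρ ^ 6 * gradInner (lap u) (lap u) x) := by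
    refine ⟨?_, ?_, ?_⟩ <;> positivity
  rw [scaledEnergy, hη, indicator_of_mem (by simpa using hxρ)]
  field_simp at hfirst hsecond
  linarith

lemma carlemanWeight_sub_sq_le (ha : 0 < a) (hx : x ∈ annulus n a b) {R : ℝ} (hR : 0 < R)
    (hRx : R ≤ ‖x‖) (hRρ : R ≤ ρ) (hτ : 2 ≤ τ) (hσ : 1 ≤ σ) :
    carlemanWeight n a b (τ - 2) (σ - 1) x ^ 2 ≤ R ^ (-(2 * τ + n)) * 4 ^ σ * ρ ^ 4 := by
  refine (carlemanWeight_sq_le ha hx hR hRx (by linarith) (by linarith)).trans ?_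
  have hshift : R ^ (-(2 * (τ - 2) + n)) = R ^ (-(2 * τ + n)) * R ^ 4 := by
    rw [← Real.rpow_natCast, ← Real.rpow_add hR]
    congr 1
    push_cast
    ring
  rw [hshift, mul_right_comm]
  gcongr
  · norm_num
  · linarith

lemma weighted_lapComm_sq_le_add_scaledEnergy {η₁ η₂ : Euc n → ℝ} (hδ : 0 < δ) (hδ₈ : δ ≤ 1 / 8)
    (ha : 0 < a) (hab : 4 * a ≤ b) (hτ : 2 ≤ τ) (hσ : 1 ≤ σ) (hC : 0 ≤ C)
    (h₁ : ∀ x, ‖x‖ ≤ (1 - δ) * a → η₁ x = 1) (h₂ : ∀ x, ‖x‖ ≤ (1 - δ) * b → η₂ x = 1)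
    (hχ : (∃ c, χ =ᶠ[nhds x] fun _ => c) ∨
      ∃ ρ ∈ ({a, b} : Set ℝ), (1 - 2 * δ) * ρ ≤ ‖x‖ ∧ ‖x‖ ≤ (1 - δ) * ρ ∧
        gradInner χ χ x ≤ C / ρ ^ 2 ∧ lap χ x ^ 2 ≤ C / ρ ^ 4) :
    (carlemanWeight n (a / 2) b (τ - 2) (σ - 1) x * (‖x‖ ^ 2 * lapComm χ (lap u) x)) ^ 2 +
      4 * (carlemanWeight n (a / 2) b τ σ x * (‖x‖ ^ 2 * lapComm χ u x)) ^ 2 ≤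
    32 * C * (((1 - 2 * δ) * a) ^ (-(2 * τ + n)) * 4 ^ σ * scaledEnergy a η₁ u x) +
      32 * C * (((1 - 2 * δ) * b) ^ (-(2 * τ + n)) * 4 ^ σ * scaledEnergy b η₂ u x) := by
  have hδ₀ : 0 < 1 - 2 * δ := by linarith
  have hb : 0 < b := by linarith
  have hE₁ : 0 ≤ 32 * C * (((1 - 2 * δ) * a) ^ (-(2 * τ + n)) * 4 ^ σ * scaledEnergy a η₁ u x) := by
    have := scaledEnergy_nonneg a η₁ u x
    positivity
  have hE₂ : 0 ≤ 32 * C * (((1 - 2 * δ) * b) ^ (-(2 * τ + n)) * 4 ^ σ * scaledEnergy b η₂ u x) := by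
    have := scaledEnergy_nonneg b η₂ u x
    positivity
  have hbound {ρ : ℝ} {η : Euc n → ℝ} (hρ : 0 < ρ) (hη : ∀ x, ‖x‖ ≤ (1 - δ) * ρ → η x = 1)
      (hxA : x ∈ annulus n (a / 2) b) (hx₁ : (1 - 2 * δ) * ρ ≤ ‖x‖) (hx₂ : ‖x‖ ≤ (1 - δ) * ρ) :=
    weighted_lapComm_sq_le (u := u) (C := C) (χ := χ) hρ (by nlinarith : ‖x‖ < ρ) (hη x hx₂)
      (carlemanWeight_sq_le (by linarith) hxA (by positivity) hx₁ (by linarith) (by linarith))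
      (carlemanWeight_sub_sq_le (by linarith) hxA (by positivity) hx₁ (by nlinarith) hτ hσ)
  rcases hχ with ⟨c, hc⟩ | ⟨ρ, rfl | rfl, hx₁, hx₂, hg, hl⟩
  · simpa [lapComm_eq_zero hc] using add_nonneg hE₁ hE₂
  · exact (hbound ha h₁ ⟨by nlinarith, by nlinarith⟩ hx₁ hx₂ hg hl).trans
      (le_add_of_nonneg_right hE₂)
  · exact (hbound hb h₂ ⟨by nlinarith, by nlinarith⟩ hx₁ hx₂ hg hl).trans
      (le_add_of_nonneg_left hE₁)

lemma integral_weighted_lapComm_le {η₁ η₂ : Euc n → ℝ} {r : ℝ} (hδ : 0 < δ) (hδ₈ : δ ≤ 1 / 8)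
    (ha : 0 < a) (hab : 4 * a ≤ b) (hτ : 2 ≤ τ) (hσ : 1 ≤ σ) (hC : 0 ≤ C) (hr : r < 1)
    (hu : IsSmooth u) (h₁ : IsCutoff (1 - δ) r Λ a η₁) (h₂ : IsCutoff (1 - δ) r Λ b η₂)
    (hχ : IsTestFun (annulus n (a / 2) b) χ)
    (hχloc : ∀ x, (∃ c, χ =ᶠ[nhds x] fun _ => c) ∨
      ∃ ρ ∈ ({a, b} : Set ℝ), (1 - 2 * δ) * ρ ≤ ‖x‖ ∧ ‖x‖ ≤ (1 - δ) * ρ ∧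
        gradInner χ χ x ≤ C / ρ ^ 2 ∧ lap χ x ^ 2 ≤ C / ρ ^ 4) :
    (∫ x, (carlemanWeight n (a / 2) b (τ - 2) (σ - 1) x * (‖x‖ ^ 2 * lapComm χ (lap u) x)) ^ 2) +
      4 * ∫ x, (carlemanWeight n (a / 2) b τ σ x * (‖x‖ ^ 2 * lapComm χ u x)) ^ 2 ≤
    32 * C * (((1 - 2 * δ) * a) ^ (-(2 * τ + n)) * 4 ^ σ * ∫ x, scaledEnergy a η₁ u x) +
      32 * C * (((1 - 2 * δ) * b) ^ (-(2 * τ + n)) * 4 ^ σ * ∫ x, scaledEnergy b η₂ u x) := by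
  have hI₁ := (h₁.hasIntegral_scaledEnergy (by nlinarith) hu).1
  have hI₂ := (h₂.hasIntegral_scaledEnergy (by nlinarith) hu).1
  have hJ₁ := ((hχ.lapComm hu.lap).smooth_mul (contDiff_norm_sq ℝ)).integrable_carlemanWeight_sq
    (τ := τ - 2) (σ := σ - 1) (by linarith)
  have hJ₂ := ((hχ.lapComm hu).smooth_mul (contDiff_norm_sq ℝ)).integrable_carlemanWeight_sq
    (τ := τ) (σ := σ) (by linarith)
  rw [← integral_const_mul, ← integral_add hJ₁ (hJ₂.const_mul 4)]
  refine (integral_mono (hJ₁.add (hJ₂.const_mul 4)) (((hI₁.const_mul _).const_mul _).add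
    ((hI₂.const_mul _).const_mul _)) fun x => weighted_lapComm_sq_le_add_scaledEnergy hδ hδ₈ ha hab
      hτ hσ hC h₁.eq_one h₂.eq_one (hχloc x)).trans_eq ?_
  simp only [Pi.add_apply]
  rw [integral_add ((hI₁.const_mul _).const_mul _) ((hI₂.const_mul _).const_mul _),
    integral_const_mul, integral_const_mul, integral_const_mul, integral_const_mul]

/- Carleman's inequality for `χ u`, where `χ` cuts off near the two boundary spheres; each
commutator term lives in a shell of width `δ` near one of the spheres, where Caccioppoli's
inequality bounds it by the supremum of `u` on the corresponding ball. -/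
theorem exists_cutoff_integral_carlemanWeight_le (hn : 2 ≤ n) (hδ : 0 < δ) (hδ₈ : δ ≤ 1 / 8) :
    ∃ K : ℝ, 0 ≤ K ∧ ∀ (a b τ σ M₁ M₂ : ℝ) (u : Euc n → ℝ), 0 < a → 4 * a ≤ b → b ≤ 1 → 6 ≤ τ →
      3 ≤ σ → σ ≤ τ / 2 → IsSmooth u → (∀ x, ‖x‖ < b → |lap (lap u) x| ≤ |u x|) →
      (∀ x, ‖x‖ < a → |u x| ≤ M₁) → (∀ x, ‖x‖ < b → |u x| ≤ M₂) →
      ∃ χ : Euc n → ℝ, IsTestFun (annulus n (a / 2) b) χ ∧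
        (∀ x, (1 - δ) * a ≤ ‖x‖ → ‖x‖ ≤ (1 - 2 * δ) * b → χ x = 1) ∧
        ∫ x, (carlemanWeight n (a / 2) b τ σ x * edgeFactor n (a / 2) b x * (χ x * u x)) ^ 2 ≤
          K * 4 ^ σ * (((1 - 2 * δ) * a) ^ (-(2 * τ)) * M₁ ^ 2 +
            ((1 - 2 * δ) * b) ^ (-(2 * τ)) * M₂ ^ 2) := by
  obtain ⟨C₁, hC₁, hcut⟩ := exists_annulusCutoff n hδ hδ₈
  obtain ⟨C₂, hC₂, henergy⟩ := exists_isCutoff n (r₁ := 1 - δ) (r₂ := 1 - δ / 2) (by linarith)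
    (by linarith)
  have hδ₀ : 0 < 1 - 2 * δ := by linarith
  set vol := volume.real (ball (0 : Euc n) 1)
  refine ⟨32 * C₁ * (10 ^ 7 * C₂ ^ 3 * vol) * ((1 - 2 * δ) ^ n)⁻¹, by positivity, ?_⟩
  intro a b τ σ M₁ M₂ u ha hab hb₁ hτ hσ hστ hu hlap hM₁ hM₂
  have hb : 0 < b := by linarith
  obtain ⟨χ, hχ, hχ₁, hχloc⟩ := hcut a b ha hab
  obtain ⟨η₁, hη₁⟩ := henergy a ha
  obtain ⟨η₂, hη₂⟩ := henergy b hb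
  refine ⟨χ, hχ, hχ₁, ?_⟩
  have henergy_le {ρ M : ℝ} {η : Euc n → ℝ} (hη : IsCutoff (1 - δ) (1 - δ / 2) C₂ ρ η) (hρ : 0 < ρ)
      (hρb : ρ ≤ b) (hM : ∀ x, ‖x‖ < ρ → |u x| ≤ M) :=
    hη.rpow_mul_integral_scaledEnergy_le (by nlinarith) hC₂ hρ (hρb.trans hb₁) hu
      (fun x hx => hlap x (hx.trans_le hρb)) hM hδ₀ (2 * τ)
  have hcarleman := (carleman_inequality_bilaplacian hn (by linarith) hb₁ hτ hσ hστ hχ hu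
    fun x hx => hlap x hx.2).trans (integral_weighted_lapComm_le hδ hδ₈ ha hab (by linarith)
      (by linarith) (by linarith) (by linarith) hu hη₁ hη₂ hχ hχloc)
  have hle := mul_le_mul_of_nonneg_left (add_le_add (henergy_le hη₁ ha (by linarith) hM₁)
    (henergy_le hη₂ hb le_rfl hM₂)) (by positivity : 0 ≤ 32 * C₁ * 4 ^ σ)
  linarith

end CutoffCarleman

section RadialMean

/-- Radial profiles: for such an `h`, the function `z ↦ h (‖z‖ ^ 2)` is a smooth radial weight
supported in the closed unit ball. -/
structure IsRadialProfile (h : ℝ → ℝ) : Prop where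
  contDiff : ContDiff ℝ ∞ h
  eq_zero : ∀ s, 1 ≤ s → h s = 0

/-- The mean of `f` over the ball of radius `σ` centred at the origin with radial profile `h`; it is
not normalized, its total mass being `∫ z, h (‖z‖ ^ 2)`. -/
def radialMean {n : ℕ} (h : ℝ → ℝ) (f : Euc n → ℝ) (σ : ℝ) : ℝ :=
  ∫ z, f (σ • z) * h (‖z‖ ^ 2)

variable {n : ℕ} {h H : ℝ → ℝ} {f : Euc n → ℝ} {σ A B : ℝ}

lemma isRadialProfile_expNegInvGlue : IsRadialProfile fun s => expNegInvGlue (1 - s) :=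
  ⟨expNegInvGlue.contDiff.comp (contDiff_const.sub contDiff_id),
    fun _ hs => expNegInvGlue.zero_of_nonpos (by linarith)⟩

lemma IsRadialProfile.exists_antideriv (hh : IsRadialProfile h) :
    ∃ H, IsRadialProfile H ∧ ∀ s, HasDerivAt H (-h s / 2) s := by
  have hderiv (s : ℝ) : HasDerivAt (fun s => -(∫ t in (1 : ℝ)..s, h t) / 2) (-h s / 2) s :=
    (intervalIntegral.integral_hasDerivAt_right (hh.contDiff.continuous.intervalIntegrable 1 s)
      (hh.contDiff.continuous.stronglyMeasurableAtFilter _ _)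
      hh.contDiff.continuous.continuousAt).neg.div_const 2
  refine ⟨_, ⟨contDiff_infty_iff_deriv.2 ⟨fun s => (hderiv s).differentiableAt, ?_⟩,
    fun s hs => ?_⟩, hderiv⟩
  · rw [funext fun s => (hderiv s).deriv]
    exact hh.contDiff.neg.div_const 2
  · rw [intervalIntegral.integral_of_le hs,
      setIntegral_eq_zero_of_forall_eq_zero fun t ht => hh.eq_zero t ht.1.le, neg_zero, zero_div]

lemma IsRadialProfile.eq_zero_of_one_le_norm (hh : IsRadialProfile h) {z : Euc n} (hz : 1 ≤ ‖z‖) :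
    h (‖z‖ ^ 2) = 0 :=
  hh.eq_zero _ (one_le_pow₀ hz)

lemma IsRadialProfile.isTestFun (hh : IsRadialProfile h) :
    IsTestFun univ fun z : Euc n => h (‖z‖ ^ 2) := by
  refine ⟨hh.contDiff.comp (contDiff_norm_sq ℝ), ?_, subset_univ _⟩
  refine .of_support_subset_isCompact (isCompact_closedBall (0 : Euc n) 1) fun z hz => ?_
  rw [mem_closedBall_zero_iff]
  by_contra! hlt
  exact hz (hh.eq_zero_of_one_le_norm hlt.le)

lemma hasDerivAt_integral_comp_smul {η : Euc n → ℝ} (hf : IsSmooth f) (hη : IsTestFun univ η)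
    (σ : ℝ) :
    HasDerivAt (fun σ : ℝ => ∫ z, f (σ • z) * η z) (∫ z, fderiv ℝ f (σ • z) z * η z) σ := by
  have hcont : Continuous fun p : ℝ × Euc n => fderiv ℝ f (p.1 • p.2) p.2 := by
    have := hf.contDiff_fderiv.continuous
    fun_prop
  have hfc : Continuous f := ContDiff.continuous hf
  have hηc : Continuous η := hη.smooth.continuous
  obtain ⟨B, hB⟩ := ((isCompact_Icc (a := σ - 1) (b := σ + 1)).prod
    hη.hasCompactSupport).exists_bound_of_continuousOn hcont.continuousOn
  refine (hasDerivAt_integral_of_dominated_loc_of_deriv_le (s := Icc (σ - 1) (σ + 1))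
    (F := fun (s : ℝ) z => f (s • z) * η z) (F' := fun s z => fderiv ℝ f (s • z) z * η z)
    (bound := fun z => B * |η z|) (Icc_mem_nhds (by linarith) (by linarith))
    (.of_forall fun s => Continuous.aestronglyMeasurable (by fun_prop))
    (hη.smooth_mul (hf.comp_smul σ)).integrable ?_ (.of_forall fun z s hs => ?_)
    (hη.integrable.abs.const_mul B) (.of_forall fun z s _ => ?_)).2
  · exact ((hcont.comp (by fun_prop : Continuous fun z : Euc n => (σ, z))).mul
      hηc).aestronglyMeasurable
  · rw [norm_mul, Real.norm_eq_abs (η z)]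
    by_cases hz : z ∈ tsupport η
    · exact mul_le_mul_of_nonneg_right (hB (s, z) ⟨hs, hz⟩) (abs_nonneg _)
    · simp [image_eq_zero_of_notMem_tsupport hz]
  · have hsmul : HasDerivAt (fun s : ℝ => s • z) z s := by
      simpa using (hasDerivAt_id s).smul_const z
    exact ((hf.differentiable (s • z)).hasFDerivAt.comp_hasDerivAt s hsmul).mul_const _

lemma gradInner_comp_norm_sq (hd : ∀ s, HasDerivAt H (-h s / 2) s) (f : Euc n → ℝ) (z : Euc n) :
    gradInner (fun z => H (‖z‖ ^ 2)) f z = -(h (‖z‖ ^ 2) * ∂ᵣ f z) := by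
  have hH (i : Fin n) : ∂[stdVec i] (fun z => H (‖z‖ ^ 2)) z = -h (‖z‖ ^ 2) * z i := by
    have hderiv : HasFDerivAt (fun z => H (‖z‖ ^ 2)) _ z :=
      (hd (‖z‖ ^ 2)).comp_hasFDerivAt z (hasStrictFDerivAt_norm_sq z).hasFDerivAt
    rw [derivAlong, hderiv.fderiv]
    simp [stdVec, EuclideanSpace.inner_single_right]
    ring
  rw [gradInner, derivAlong_eq_sum (V := id), Finset.mul_sum, ← Finset.sum_neg_distrib]
  refine Finset.sum_congr rfl fun i _ => ?_
  rw [hH, id, neg_mul, neg_mul, mul_assoc]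

lemma integral_fderiv_comp_smul_mul (hf : IsSmooth f) (hH : IsRadialProfile H)
    (hd : ∀ s, HasDerivAt H (-h s / 2) s) (hσ : σ ≠ 0) :
    ∫ z, fderiv ℝ f (σ • z) z * h (‖z‖ ^ 2) = σ * radialMean H (lap f) σ := by
  have hgreen := integral_mul_lap hH.isTestFun.smooth (hf.comp_smul σ)
    (hH.isTestFun (n := n)).hasCompactSupport
  have hradial (z : Euc n) : ∂ᵣ (fun y => f (σ • y)) z = σ * fderiv ℝ f (σ • z) z := by
    simp [derivAlong, fderiv_comp_smul]
  simp only [lap_comp_smul hf, gradInner_comp_norm_sq hd, hradial, integral_neg, neg_neg] at hgreen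
  apply mul_left_cancel₀ hσ
  rw [← mul_assoc, radialMean, ← integral_const_mul, ← integral_const_mul]
  calc _ = ∫ z, h (‖z‖ ^ 2) * (σ * fderiv ℝ f (σ • z) z) := by congr 1 with z; ring
    _ = _ := by rw [← hgreen]; congr 1 with z; ring

lemma hasDerivAt_radialMean (hf : IsSmooth f) (hh : IsRadialProfile h) (hH : IsRadialProfile H)
    (hd : ∀ s, HasDerivAt H (-h s / 2) s) (hσ : σ ≠ 0) :
    HasDerivAt (radialMean h f) (σ * radialMean H (lap f) σ) σ :=
  integral_fderiv_comp_smul_mul hf hH hd hσ ▸ hasDerivAt_integral_comp_smul hf hh.isTestFun σ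

lemma continuous_radialMean (hf : IsSmooth f) (hh : IsRadialProfile h) :
    Continuous (radialMean h f) :=
  continuous_iff_continuousAt.2 fun σ =>
    (hasDerivAt_integral_comp_smul hf hh.isTestFun σ).continuousAt

lemma radialMean_zero_right (h : ℝ → ℝ) (f : Euc n → ℝ) :
    radialMean h f 0 = f 0 * ∫ z : Euc n, h (‖z‖ ^ 2) := by
  simp only [radialMean, zero_smul, integral_const_mul]

lemma abs_radialMean_le_of_abs_le (hh : IsRadialProfile h) (hσ : 0 < σ) (hσ₁ : σ ≤ 1)
    (hA : ∀ z, ‖z‖ < 1 → |f z| ≤ A) :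
    |radialMean h f σ| ≤ A * ∫ z : Euc n, |h (‖z‖ ^ 2)| := by
  rw [← Real.norm_eq_abs, ← integral_const_mul]
  refine norm_integral_le_of_norm_le ((hh.isTestFun.integrable).abs.const_mul A)
    (.of_forall fun z => ?_)
  rw [norm_mul, Real.norm_eq_abs, Real.norm_eq_abs]
  rcases lt_or_ge ‖z‖ 1 with hz | hz
  · refine mul_le_mul_of_nonneg_right (hA _ ?_) (abs_nonneg _)
    rw [norm_smul, Real.norm_of_nonneg hσ.le]
    exact (mul_le_of_le_one_left (norm_nonneg z) hσ₁).trans_lt hz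
  · simp [hh.eq_zero_of_one_le_norm hz]

lemma abs_radialMean_le_integral (hf : Continuous f) (hh : IsRadialProfile h)
    (hB : ∀ z : Euc n, |h (‖z‖ ^ 2)| ≤ B) (hσ : 0 < σ) (hσ₁ : σ ≤ 1) :
    |radialMean h f σ| ≤ B * ((σ ^ n)⁻¹ * ∫ z in ball (0 : Euc n) 1, |f z|) := by
  have hB₀ : 0 ≤ B := (abs_nonneg _).trans (hB 0)
  have hscale : ∫ z in ball (0 : Euc n) 1, |f (σ • z)| =
      (σ ^ n)⁻¹ * ∫ z in ball (0 : Euc n) σ, |f z| := by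
    simpa [smul_unitBall_of_pos hσ] using
      Measure.setIntegral_comp_smul_of_pos volume (fun z : Euc n => |f z|) (ball 0 1) hσ
  have hmono : ∫ z in ball (0 : Euc n) σ, |f z| ≤ ∫ z in ball (0 : Euc n) 1, |f z| :=
    setIntegral_mono_set (integrableOn_ball_of_continuous hf.abs 0 1)
      (.of_forall fun _ => abs_nonneg _) (ball_subset_ball hσ₁).eventuallyLE
  calc |radialMean h f σ| ≤ ∫ z in ball (0 : Euc n) 1, B * |f (σ • z)| := by
        rw [← integral_indicator measurableSet_ball, ← Real.norm_eq_abs]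
        refine norm_integral_le_of_norm_le ?_ (.of_forall fun z => ?_)
        · exact (integrableOn_ball_of_continuous (by fun_prop) 0 1).integrable_indicator
            measurableSet_ball
        rw [norm_mul, mul_comm, Real.norm_eq_abs, Real.norm_eq_abs]
        rcases lt_or_ge ‖z‖ 1 with hz | hz
        · rw [indicator_of_mem (by simpa using hz)]
          exact mul_le_mul_of_nonneg_right (hB z) (abs_nonneg _)
        · rw [indicator_of_notMem (by simpa using hz)]
          simp [hh.eq_zero_of_one_le_norm hz]
    _ = B * ((σ ^ n)⁻¹ * ∫ z in ball (0 : Euc n) σ, |f z|) := by rw [integral_const_mul, hscale]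
    _ ≤ _ := by gcongr

end RadialMean

lemma abs_sub_le_mul_of_hasDerivAt {F F' : ℝ → ℝ} {a b A : ℝ} (hab : a < b)
    (hF : ContinuousOn F (Icc a b)) (hF' : ∀ s ∈ Ioo a b, HasDerivAt F (F' s) s)
    (hA : ∀ s ∈ Ioo a b, |F' s| ≤ A) : |F b - F a| ≤ A * (b - a) := by
  obtain ⟨c, hc, hslope⟩ := exists_hasDerivAt_eq_slope F F' hab hF hF'
  rw [eq_div_iff (sub_pos.2 hab).ne'] at hslope
  rw [← hslope, abs_mul, abs_of_pos (sub_pos.2 hab)]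
  exact mul_le_mul_of_nonneg_right (hA c hc) (sub_pos.2 hab).le

/- `F s - G 0 * s ^ 2 / 2` is nearly constant on `[0, 1]`; the combination below eliminates `G 0`
from its values at `0`, `1 / 2` and `1`. -/
lemma abs_four_mul_half_sub_le {F G H : ℝ → ℝ} {A : ℝ} (hF : Continuous F) (hG : Continuous G)
    (hF' : ∀ s ∈ Ioo (0 : ℝ) 1, HasDerivAt F (s * G s) s)
    (hG' : ∀ s ∈ Ioo (0 : ℝ) 1, HasDerivAt G (s * H s) s) (hH : ∀ s ∈ Ioo (0 : ℝ) 1, |H s| ≤ A) :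
    |4 * F (1 / 2) - F 1 - 3 * F 0| ≤ 3 * A := by
  have hA : 0 ≤ A := (abs_nonneg _).trans (hH (1 / 2) ⟨by norm_num, by norm_num⟩)
  have hmul_le {t c : ℝ} (ht : t ∈ Ioo (0 : ℝ) 1) (hc : |c| ≤ A) : |t * c| ≤ A := by
    rw [abs_mul, abs_of_pos ht.1]
    exact (mul_le_of_le_one_left (abs_nonneg c) ht.2.le).trans hc
  have hGle (s : ℝ) (hs : s ∈ Ioo (0 : ℝ) 1) : |G s - G 0| ≤ A := by
    have := abs_sub_le_mul_of_hasDerivAt hs.1 hG.continuousOn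
      (fun t ht => hG' t ⟨ht.1, ht.2.trans hs.2⟩)
      fun t ht => hmul_le ⟨ht.1, ht.2.trans hs.2⟩ (hH t ⟨ht.1, ht.2.trans hs.2⟩)
    nlinarith [hs.2]
  have hFle (s : ℝ) (hs : 0 < s) (hs₁ : s ≤ 1) :
      |(F s - s ^ 2 * G 0 / 2) - (F 0 - 0 ^ 2 * G 0 / 2)| ≤ A * (s - 0) := by
    refine abs_sub_le_mul_of_hasDerivAt (F := fun s => F s - s ^ 2 * G 0 / 2)
      (F' := fun s => s * (G s - G 0)) hs (by fun_prop) (fun t ht => ?_) fun t ht => ?_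
    · have hsq := ((hasDerivAt_pow 2 t).mul_const (G 0)).div_const 2
      refine ((hF' t ⟨ht.1, ht.2.trans_le hs₁⟩).sub hsq).congr_deriv ?_
      push_cast
      ring
    · exact hmul_le ⟨ht.1, ht.2.trans_le hs₁⟩ (hGle t ⟨ht.1, ht.2.trans_le hs₁⟩)
  have hhalf := abs_le.1 (hFle (1 / 2) (by norm_num) (by norm_num))
  have hone := abs_le.1 (hFle 1 (by norm_num) le_rfl)
  rw [abs_le]
  constructor <;> linarith [hhalf.1, hhalf.2, hone.1, hone.2]

section InteriorEstimate

variable {n : ℕ} {f u : Euc n → ℝ}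

lemma exists_abs_zero_le (n : ℕ) : ∃ C : ℝ, 1 ≤ C ∧ ∀ (f : Euc n → ℝ) (A : ℝ), IsSmooth f →
    (∀ z, ‖z‖ < 1 → |lap (lap f) z| ≤ A) →
    |f 0| ≤ C * ((∫ z in ball (0 : Euc n) 1, |f z|) + A) := by
  have hh := isRadialProfile_expNegInvGlue
  obtain ⟨h₁, hh₁, hd₁⟩ := hh.exists_antideriv
  obtain ⟨h₂, hh₂, hd₂⟩ := hh₁.exists_antideriv
  have htest := hh.isTestFun (n := n)
  obtain ⟨B, hB⟩ := htest.hasCompactSupport.exists_bound_of_continuous htest.smooth.continuous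
  have hB₀ : 0 ≤ B := (norm_nonneg _).trans (hB 0)
  have hI : 0 < ∫ z : Euc n, expNegInvGlue (1 - ‖z‖ ^ 2) :=
    Continuous.integral_pos_of_hasCompactSupport_nonneg_nonzero (x := 0) htest.smooth.continuous
      htest.hasCompactSupport (fun z => expNegInvGlue.nonneg _)
      (expNegInvGlue.pos_of_pos (by simp)).ne'
  have hJ : 0 ≤ ∫ z : Euc n, |h₂ (‖z‖ ^ 2)| := integral_nonneg fun _ => abs_nonneg _
  set I := ∫ z : Euc n, expNegInvGlue (1 - ‖z‖ ^ 2)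
  set J := ∫ z : Euc n, |h₂ (‖z‖ ^ 2)|
  set K := (4 * (B * 2 ^ n) + B + 3 * J) / I
  have hK : 0 ≤ K := by positivity
  refine ⟨1 + K, by linarith, fun f A hf hA => ?_⟩
  have hA₀ : 0 ≤ A := (abs_nonneg _).trans (hA 0 (by simp))
  have htaylor := abs_four_mul_half_sub_le (continuous_radialMean hf hh)
    (continuous_radialMean hf.lap hh₁)
    (fun s hs => hasDerivAt_radialMean hf hh hh₁ hd₁ hs.1.ne')
    (fun s hs => hasDerivAt_radialMean hf.lap hh₁ hh₂ hd₂ hs.1.ne')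
    (fun s hs => abs_radialMean_le_of_abs_le hh₂ hs.1 hs.2.le hA)
  have hhalf := abs_radialMean_le_integral hf.continuous hh hB (σ := 1 / 2) (by norm_num)
    (by norm_num)
  have hone := abs_radialMean_le_integral hf.continuous hh hB one_pos le_rfl
  have hX : 0 ≤ ∫ z in ball (0 : Euc n) 1, |f z| := integral_nonneg fun _ => abs_nonneg _
  rw [radialMean_zero_right] at htaylor
  generalize ∫ z in ball (0 : Euc n) 1, |f z| = X at *
  have hfI : |f 0 * I| ≤ (4 * (B * 2 ^ n) + B) * X + 3 * J * A := by
    rw [one_div, inv_pow, inv_inv] at hhalf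
    rw [one_pow, inv_one, one_mul] at hone
    rw [one_div, abs_le] at *
    constructor <;> linarith [hhalf.1, hhalf.2, hone.1, hone.2, htaylor.1, htaylor.2]
  calc |f 0| = |f 0 * I| / I := by rw [abs_mul, abs_of_pos hI, mul_div_cancel_right₀ _ hI.ne']
    _ ≤ K * (X + A) := by
      rw [div_mul_eq_mul_div]
      gcongr
      linarith [mul_nonneg (by positivity : 0 ≤ 4 * (B * 2 ^ n) + B) hA₀, mul_nonneg hJ hX]
    _ ≤ (1 + K) * (X + A) := by gcongr; linarith

lemma IsSmooth.comp_add_left (hf : IsSmooth f) (y : Euc n) : IsSmooth fun z => f (y + z) :=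
  ContDiff.comp hf (contDiff_const.add contDiff_id)

lemma lap_comp_add_left (f : Euc n → ℝ) (y x : Euc n) :
    lap (fun z => f (y + z)) x = lap f (y + x) := by
  simp only [lap, iteratedFDeriv_comp_add_left]

lemma lap_const_mul (c : ℝ) (hf : IsSmooth f) (x : Euc n) :
    lap (fun z => c * f z) x = c * lap f x := by
  rw [lap_mul contDiff_const hf, gradInner_const_left, lap_const]
  ring

lemma lap_lap_comp_add_smul (hf : IsSmooth f) (y : Euc n) (ρ : ℝ) (x : Euc n) :
    lap (lap fun z => f (y + ρ • z)) x = ρ ^ 4 * lap (lap f) (y + ρ • x) := by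
  have hlap {g : Euc n → ℝ} (hg : IsSmooth g) :
      lap (fun z => g (y + ρ • z)) = fun z => ρ ^ 2 * lap g (y + ρ • z) := by
    ext z
    rw [lap_comp_smul (hg.comp_add_left y), lap_comp_add_left]
  rw [hlap hf, lap_const_mul _ ((hf.lap.comp_add_left y).comp_smul ρ), hlap hf.lap]
  ring

lemma setIntegral_ball_comp_add_smul {ρ : ℝ} (hρ : 0 < ρ) (f : Euc n → ℝ) (y : Euc n) :
    ∫ z in ball (0 : Euc n) 1, f (y + ρ • z) = (ρ ^ n)⁻¹ * ∫ z in ball y ρ, f z := by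
  have hscale := Measure.setIntegral_comp_smul_of_pos volume (fun z => f (y + z)) (ball 0 1) hρ
  have htrans := (measurePreserving_add_left volume y).setIntegral_preimage_emb
    (measurableEmbedding_addLeft y) f (ball y ρ)
  rw [hscale, smul_unitBall_of_pos hρ, ← htrans]
  simp

lemma exists_abs_le_integral_add (n : ℕ) : ∃ C : ℝ, 1 ≤ C ∧
    ∀ (u : Euc n → ℝ) (A ρ : ℝ) (y : Euc n), IsSmooth u → 0 < ρ →
      (∀ z ∈ ball y ρ, |lap (lap u) z| ≤ A) →
      |u y| ≤ C * ((ρ ^ n)⁻¹ * (∫ z in ball y ρ, |u z|) + ρ ^ 4 * A) := by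
  obtain ⟨C, hC, hle⟩ := exists_abs_zero_le n
  refine ⟨C, hC, fun u A ρ y hu hρ hA => ?_⟩
  have hunit := hle (fun z => u (y + ρ • z)) (ρ ^ 4 * A) ((hu.comp_add_left y).comp_smul ρ)
    fun z hz => ?_
  · rwa [setIntegral_ball_comp_add_smul hρ (fun z => |u z|), smul_zero, add_zero] at hunit
  · rw [lap_lap_comp_add_smul hu, abs_mul, abs_of_pos (by positivity)]
    refine mul_le_mul_of_nonneg_left (hA _ ?_) (by positivity)
    rw [mem_ball, dist_self_add_left, norm_smul, Real.norm_of_nonneg hρ.le]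
    exact mul_lt_of_lt_one_right hρ hz

/- Maximize `(ρ - dist z y) ^ n * |u z|`: on the ball of half the remaining radius around a maximum
point, `|u|` is at most `2 ^ n` times its value at the centre. -/
lemma pow_mul_abs_le_of_absorb {E : Type*} [PseudoMetricSpace E] [ProperSpace E] {u : E → ℝ} {y : E}
    {ρ K : ℝ} {m : ℕ} (hm : m ≠ 0) (hu : Continuous u) (hρ : 0 < ρ) (hK : 0 ≤ K)
    (habsorb : ∀ z d M, 0 < d → d ≤ ρ → ball z d ⊆ ball y ρ →
      (∀ x ∈ ball z d, |u x| ≤ M) → d ^ m * |u z| ≤ K + d ^ m * (M / 2 ^ (m + 1))) :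
    ρ ^ m * |u y| ≤ 2 ^ (m + 1) * K := by
  obtain ⟨z, hz, hmax⟩ := (isCompact_closedBall y ρ).exists_isMaxOn ⟨y, by simp [hρ.le]⟩
    (f := fun z => (ρ - dist z y) ^ m * |u z|) (by fun_prop)
  have hy : ρ ^ m * |u y| ≤ (ρ - dist z y) ^ m * |u z| := by
    simpa using hmax (mem_closedBall_self hρ.le)
  refine hy.trans ?_
  obtain ⟨d, hd⟩ : ∃ d, ρ - dist z y = 2 * d := ⟨(ρ - dist z y) / 2, by ring⟩
  rcases (by linarith [mem_closedBall.1 hz] : 0 ≤ d).eq_or_lt with rfl | hd₀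
  · rw [hd, mul_zero, zero_pow hm, zero_mul]
    positivity
  have hsub : ball z d ⊆ ball y ρ := ball_subset_ball' (by linarith)
  have hdouble (x : E) (hx : x ∈ ball z d) : |u x| ≤ 2 ^ m * |u z| := by
    have hdist : d ≤ ρ - dist x y := by linarith [dist_triangle x z y, mem_ball.1 hx]
    have hle : d ^ m * |u x| ≤ (2 * d) ^ m * |u z| :=
      (mul_le_mul_of_nonneg_right (pow_le_pow_left₀ hd₀.le hdist m) (abs_nonneg _)).trans
        (hd ▸ hmax (ball_subset_closedBall (hsub hx)))
    refine le_of_mul_le_mul_left (hle.trans_eq ?_) (pow_pos hd₀ m)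
    ring
  have habs := habsorb z d _ hd₀ (by linarith [dist_nonneg (x := z) (y := y)]) hsub hdouble
  have hhalf : 2 ^ m * |u z| / 2 ^ (m + 1) = |u z| / 2 := by
    field_simp
    ring
  rw [hhalf] at habs
  calc (ρ - dist z y) ^ m * |u z| = 2 ^ m * (d ^ m * |u z|) := by
        rw [hd]
        ring
    _ ≤ 2 ^ m * (2 * K) := mul_le_mul_of_nonneg_left (by linarith) (by positivity)
    _ = _ := by ring

lemma sq_setIntegral_le {α : Type*} [MeasurableSpace α] {μ : Measure α} {s : Set α} {f : α → ℝ}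
    (hs : μ s ≠ ⊤) (hf : IntegrableOn f s μ) (hf₂ : IntegrableOn (fun x => f x ^ 2) s μ) :
    (∫ x in s, f x ∂μ) ^ 2 ≤ μ.real s * ∫ x in s, f x ^ 2 ∂μ := by
  have hquad (t : ℝ) : 0 ≤ μ.real s * (t * t) + -2 * (∫ x in s, f x ∂μ) * t +
      ∫ x in s, f x ^ 2 ∂μ := by
    have hconst : IntegrableOn (fun _ => t * t) s μ := integrableOn_const hs
    have hlin : IntegrableOn (fun x => t * t + -2 * t * f x) s μ := hconst.add (hf.const_mul _)
    calc 0 ≤ ∫ x in s, (t - f x) ^ 2 ∂μ := integral_nonneg fun x => sq_nonneg _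
      _ = ∫ x in s, (t * t + -2 * t * f x + f x ^ 2) ∂μ := by congr 1 with x; ring
      _ = _ := by
        rw [integral_add hlin hf₂, integral_add hconst (hf.const_mul _),
          integral_const_mul (-2 * t), setIntegral_const, smul_eq_mul]
        ring
  have hdiscrim := discrim_le_zero hquad
  rw [discrim] at hdiscrim
  linarith

theorem exists_sq_le_integral_sq {n : ℕ} (hn : n ≠ 0) : ∃ C ρ₀ : ℝ, 0 ≤ C ∧ 0 < ρ₀ ∧
    ∀ (u : Euc n → ℝ) (ρ : ℝ) (y : Euc n), IsSmooth u → 0 < ρ → ρ ≤ ρ₀ →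
      (∀ z ∈ ball y ρ, |lap (lap u) z| ≤ |u z|) →
      u y ^ 2 ≤ C * (ρ ^ n)⁻¹ * ∫ z in ball y ρ, u z ^ 2 := by
  obtain ⟨C, hC, hle⟩ := exists_abs_le_integral_add n
  set vol := volume.real (ball (0 : Euc n) 1)
  refine ⟨(2 ^ (n + 1) * C) ^ 2 * vol, (2 ^ (n + 1) * C)⁻¹, by positivity, by positivity,
    fun u ρ y hu hρ hρ₀ hlap => ?_⟩
  have hρ₁ : ρ ≤ 1 :=
    hρ₀.trans (inv_le_one_of_one_le₀ (one_le_mul_of_one_le_of_one_le (one_le_pow₀ (by simp)) hC))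
  have hint : IntegrableOn (fun z => |u z|) (ball y ρ) :=
    integrableOn_ball_of_continuous hu.continuous.abs y ρ
  have hX : 0 ≤ ∫ z in ball y ρ, |u z| := integral_nonneg fun _ => abs_nonneg _
  have hL₁ : ρ ^ n * |u y| ≤ 2 ^ (n + 1) * (C * ∫ z in ball y ρ, |u z|) := by
    refine pow_mul_abs_le_of_absorb hn hu.continuous hρ (mul_nonneg (by linarith) hX) fun z d M
      hd hdρ hsub hM => ?_
    have hM₀ : 0 ≤ M := (abs_nonneg _).trans (hM z (mem_ball_self hd))
    have hCd : C * d ^ 4 ≤ (2 ^ (n + 1))⁻¹ := by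
      calc C * d ^ 4 ≤ C * ρ := by
            gcongr
            exact (pow_le_of_le_one hd.le (hdρ.trans hρ₁) (by norm_num)).trans hdρ
        _ ≤ C * (2 ^ (n + 1) * C)⁻¹ := by gcongr
        _ = _ := by field_simp
    have hmono : ∫ x in ball z d, |u x| ≤ ∫ x in ball y ρ, |u x| :=
      setIntegral_mono_set hint (.of_forall fun _ => abs_nonneg _) hsub.eventuallyLE
    calc d ^ n * |u z| ≤ d ^ n * (C * ((d ^ n)⁻¹ * (∫ x in ball y ρ, |u x|) + d ^ 4 * M)) := by
          gcongr
          refine (hle u M d z hu hd fun x hx => (hlap x (hsub hx)).trans (hM x hx)).trans ?_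
          gcongr
      _ = C * (∫ x in ball y ρ, |u x|) + d ^ n * (C * d ^ 4 * M) := by field_simp
      _ ≤ _ := by rw [div_eq_inv_mul]; gcongr
  have hL₂ := sq_setIntegral_le measure_ball_lt_top.ne hint
    (integrableOn_ball_of_continuous (hu.continuous.abs.pow 2) y ρ)
  simp only [sq_abs, measureReal_ball hρ] at hL₂
  have hsq : (ρ ^ n * |u y|) ^ 2 ≤
      (2 ^ (n + 1) * C) ^ 2 * (ρ ^ n * vol * ∫ z in ball y ρ, u z ^ 2) :=
    calc _ ≤ (2 ^ (n + 1) * (C * ∫ z in ball y ρ, |u z|)) ^ 2 := by gcongr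
      _ = (2 ^ (n + 1) * C) ^ 2 * (∫ z in ball y ρ, |u z|) ^ 2 := by ring
      _ ≤ _ := by gcongr
  rw [mul_pow, sq_abs] at hsq
  refine le_of_mul_le_mul_left (hsq.trans_eq ?_) (pow_pos (pow_pos hρ n) 2)
  field_simp

end InteriorEstimate

section ThreeBalls

variable {n : ℕ} {δ : ℝ}

lemma rpow_mul_setIntegral_sq_le {a b τ σ R κ : ℝ} {u χ : Euc n → ℝ} {s : Set (Euc n)}
    (ha : 0 < a) (hτ : 0 ≤ τ) (hσ : 0 ≤ σ) (hκ₀ : 0 ≤ κ) (hu : IsSmooth u)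
    (hχ : IsTestFun (annulus n a b) χ) (hs : MeasurableSet s) (hsub : s ⊆ annulus n a b)
    (hχs : ∀ z ∈ s, χ z = 1) (hR : ∀ z ∈ s, ‖z‖ ≤ R) (hκ : ∀ z ∈ s, κ ≤ edgeFactor n a b z) :
    R ^ (-(2 * τ + n)) * κ ^ (2 * σ + 2) * ∫ z in s, u z ^ 2 ≤
      ∫ z, (carlemanWeight n a b τ σ z * edgeFactor n a b z * (χ z * u z)) ^ 2 := by
  have hχu : IsTestFun (annulus n a b) fun z => χ z * u z := by
    simpa only [mul_comm] using hχ.smooth_mul hu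
  have hint : Integrable fun z =>
      (carlemanWeight n a b τ σ z * edgeFactor n a b z * (χ z * u z)) ^ 2 :=
    (hχu.contDiffOn_mul (isOpen_annulus n a b)
      ((contDiffOn_carlemanWeight ha).mul (contDiffOn_edgeFactor ha))).integrable_sq
  have hu₂ : IntegrableOn (fun z => u z ^ 2) s :=
    hχu.integrable_sq.integrableOn.congr_fun (fun z hz => by simp [hχs z hz]) hs
  calc _ = ∫ z in s, R ^ (-(2 * τ + n)) * κ ^ (2 * σ + 2) * u z ^ 2 :=
        (integral_const_mul _ _).symm
    _ ≤ ∫ z in s, (carlemanWeight n a b τ σ z * edgeFactor n a b z * (χ z * u z)) ^ 2 := by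
      refine setIntegral_mono_on (hu₂.const_mul _) hint.integrableOn hs fun z hz => ?_
      rw [hχs z hz, one_mul, mul_pow _ (u z)]
      gcongr
      exact le_carlemanWeight_mul_edgeFactor_sq ha (hsub hz) (hR z hz) hκ₀ (hκ z hz) hτ hσ
    _ ≤ _ := setIntegral_le_integral hint (.of_forall fun _ => sq_nonneg _)

lemma mul_norm_le_norm_le_of_mem_ball {y z : Euc n} (hz : z ∈ ball y (δ * ‖y‖)) :
    (1 - δ) * ‖y‖ ≤ ‖z‖ ∧ ‖z‖ ≤ (1 + δ) * ‖y‖ := by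
  rw [mem_ball, dist_eq_norm] at hz
  constructor <;> linarith [norm_sub_norm_le z y, norm_sub_norm_le y z, norm_sub_rev z y]

lemma max_le_edgeFactor {a b : ℝ} {y z : Euc n} (hδ : 0 < δ) (hδ₂ : δ ≤ 1 / 2) (ha : 0 < a)
    (hz : z ∈ ball y (δ * ‖y‖)) (hza : z ∈ annulus n (a / 2) b) :
    max (4 * (‖y‖ / a))⁻¹ (2 * (b / ‖y‖))⁻¹ ≤ edgeFactor n (a / 2) b z := by
  obtain ⟨hz₁, hz₂⟩ := mul_norm_le_norm_le_of_mem_ball hz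
  have hz₀ : 0 < ‖z‖ := (half_pos ha).trans hza.1
  have hb : 0 < b := hz₀.trans hza.2
  refine max_le ?_ ?_
  · refine le_trans ?_ (div_norm_le_edgeFactor (half_pos ha) hza)
    calc (4 * (‖y‖ / a))⁻¹ = a / 2 / (2 * ‖y‖) := by field_simp; norm_num
      _ ≤ _ := by gcongr; nlinarith [norm_nonneg y]
  · refine le_trans ?_ (norm_div_le_edgeFactor (half_pos ha) hza)
    calc (2 * (b / ‖y‖))⁻¹ = ‖y‖ / 2 / b := by field_simp
      _ ≤ _ := by gcongr; nlinarith [norm_nonneg y]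

/-- The expression dominating `u y ^ 2` when `|u| ≤ M₁` on the ball of radius `a` and `|u| ≤ M₂` on
the ball of radius `b`, where `t` is the norm of `y`; the Carleman inequality is the source of the
powers `2 * τ` of the ratios of the radii. -/
def threeBallBound (δ τ σ a t b M₁ M₂ : ℝ) : ℝ :=
  4 ^ σ * ((4 * (t / a)) ^ (2 * σ + 2) * ((1 + δ) / (1 - 2 * δ) * (t / a)) ^ (2 * τ) * M₁ ^ 2 +
    (2 * (b / t)) ^ (2 * σ + 2) * ((1 + δ) / (1 - 2 * δ) * (b / t)⁻¹) ^ (2 * τ) * M₂ ^ 2)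

lemma rpow_mul_le_threeBallBound {τ σ a t b κ : ℝ} (hδ : 0 < δ) (hδ₂ : 2 * δ < 1) (hσ : 0 ≤ σ)
    (ha : 0 < a) (ht : 0 < t) (hb : 0 < b) (hκ₁ : (4 * (t / a))⁻¹ ≤ κ) (hκ₂ : (2 * (b / t))⁻¹ ≤ κ)
    (M₁ M₂ : ℝ) :
    ((1 + δ) * t) ^ (2 * τ) * (κ ^ (2 * σ + 2))⁻¹ * (4 ^ σ *
      (((1 - 2 * δ) * a) ^ (-(2 * τ)) * M₁ ^ 2 + ((1 - 2 * δ) * b) ^ (-(2 * τ)) * M₂ ^ 2)) ≤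
      threeBallBound δ τ σ a t b M₁ M₂ := by
  have hδ₀ : 0 < 1 - 2 * δ := by linarith
  have hκ : 0 < κ := lt_of_lt_of_le (by positivity) hκ₁
  have hratio {c : ℝ} (hc : 0 < c) : ((1 + δ) * t) ^ (2 * τ) * ((1 - 2 * δ) * c) ^ (-(2 * τ)) =
      ((1 + δ) / (1 - 2 * δ) * (t / c)) ^ (2 * τ) := by
    rw [Real.rpow_neg (by positivity), ← div_eq_mul_inv,
      ← Real.div_rpow (by positivity) (mul_nonneg hδ₀.le hc.le), div_mul_div_comm]
  have hinv {c : ℝ} (hc : 0 < c) (hcκ : c⁻¹ ≤ κ) : (κ ^ (2 * σ + 2))⁻¹ ≤ c ^ (2 * σ + 2) := by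
    rw [← Real.inv_rpow hκ.le]
    gcongr
    exact inv_le_of_inv_le₀ hc hcκ
  have hi₁ := hinv (by positivity) hκ₁
  have hi₂ := hinv (by positivity) hκ₂
  rw [threeBallBound, inv_div, ← hratio ha, ← hratio hb]
  calc _ = 4 ^ σ * ((κ ^ (2 * σ + 2))⁻¹ * (((1 + δ) * t) ^ (2 * τ) *
          ((1 - 2 * δ) * a) ^ (-(2 * τ))) * M₁ ^ 2 + (κ ^ (2 * σ + 2))⁻¹ *
          (((1 + δ) * t) ^ (2 * τ) * ((1 - 2 * δ) * b) ^ (-(2 * τ))) * M₂ ^ 2) := by ring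
    _ ≤ _ := by gcongr

lemma le_threeBallBound_of_rpow_mul_le {τ σ a t b κ K I M₁ M₂ : ℝ} {n : ℕ} (hδ : 0 < δ)
    (hδ₂ : 2 * δ < 1) (hσ : 0 ≤ σ) (ha : 0 < a) (ht : 0 < t) (hb : 0 < b)
    (hκ₁ : (4 * (t / a))⁻¹ ≤ κ) (hκ₂ : (2 * (b / t))⁻¹ ≤ κ) (hK : 0 ≤ K)
    (hI : ((1 + δ) * t) ^ (-(2 * τ + n)) * κ ^ (2 * σ + 2) * I ≤ K * 4 ^ σ *
      (((1 - 2 * δ) * a) ^ (-(2 * τ)) * M₁ ^ 2 + ((1 - 2 * δ) * b) ^ (-(2 * τ)) * M₂ ^ 2)) :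
    I ≤ ((1 + δ) * t) ^ n * (K * threeBallBound δ τ σ a t b M₁ M₂) := by
  have hκ : 0 < κ := lt_of_lt_of_le (by positivity) hκ₁
  have hbound := rpow_mul_le_threeBallBound (τ := τ) hδ hδ₂ hσ ha ht hb hκ₁ hκ₂ M₁ M₂
  set E := ((1 - 2 * δ) * a) ^ (-(2 * τ)) * M₁ ^ 2 + ((1 - 2 * δ) * b) ^ (-(2 * τ)) * M₂ ^ 2
  have hR : 0 < (1 + δ) * t := by positivity
  rw [Real.rpow_neg hR.le, Real.rpow_add hR, Real.rpow_natCast] at hI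
  generalize (1 + δ) * t = R at *
  calc I = R ^ n * (R ^ (2 * τ) * (κ ^ (2 * σ + 2))⁻¹ *
        ((R ^ (2 * τ) * R ^ n)⁻¹ * κ ^ (2 * σ + 2) * I)) := by field_simp
    _ ≤ R ^ n * (R ^ (2 * τ) * (κ ^ (2 * σ + 2))⁻¹ * (K * 4 ^ σ * E)) := by gcongr
    _ = R ^ n * (K * (R ^ (2 * τ) * (κ ^ (2 * σ + 2))⁻¹ * (4 ^ σ * E))) := by ring
    _ ≤ _ := by gcongr

theorem exists_sq_le_threeBallBound_zero (hn : 2 ≤ n) (hδ : 0 < δ) (hδ₈ : δ ≤ 1 / 8) :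
    ∃ C ρ₀ : ℝ, 0 ≤ C ∧ 0 < ρ₀ ∧ ρ₀ ≤ 1 ∧
      ∀ (a b τ σ M₁ M₂ : ℝ) (u : Euc n → ℝ) (y : Euc n), 0 < a → 4 * a ≤ b → b ≤ ρ₀ → 6 ≤ τ →
        3 ≤ σ → σ ≤ τ / 2 → IsSmooth u → (∀ x, ‖x‖ < b → |lap (lap u) x| ≤ |u x|) →
        (∀ x, ‖x‖ < a → |u x| ≤ M₁) → (∀ x, ‖x‖ < b → |u x| ≤ M₂) → a ≤ ‖y‖ → ‖y‖ ≤ b / 2 →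
        u y ^ 2 ≤ C * threeBallBound δ τ σ a ‖y‖ b M₁ M₂ := by
  obtain ⟨K, hK, hcarleman⟩ := exists_cutoff_integral_carlemanWeight_le hn hδ hδ₈
  obtain ⟨C, ρ₀, hC, hρ₀, hinterior⟩ := exists_sq_le_integral_sq (n := n) (by lia)
  refine ⟨C * (δ ^ n)⁻¹ * (1 + δ) ^ n * K, min ρ₀ 1, by positivity, by positivity,
    min_le_right _ _, fun a b τ σ M₁ M₂ u y ha hab hb hτ hσ hστ hu hlap hM₁ hM₂ hay hyb => ?_⟩
  obtain ⟨χ, hχ, hχ₁, hE⟩ := hcarleman a b τ σ M₁ M₂ u ha hab (hb.trans (min_le_right _ _)) hτ hσ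
    hστ hu hlap hM₁ hM₂
  have hy₀ : 0 < ‖y‖ := by linarith
  have hb₀ : 0 < b := by linarith
  have hnorm {z : Euc n} (hz : z ∈ ball y (δ * ‖y‖)) := mul_norm_le_norm_le_of_mem_ball hz
  have hann : ball y (δ * ‖y‖) ⊆ annulus n (a / 2) b := fun z hz =>
    ⟨by nlinarith [(hnorm hz).1], by nlinarith [(hnorm hz).2]⟩
  have hpoint := hinterior u (δ * ‖y‖) y hu (by positivity)
    (by nlinarith [hb.trans (min_le_left _ _)]) fun z hz => hlap z (hann hz).2
  set κ := max (4 * (‖y‖ / a))⁻¹ (2 * (b / ‖y‖))⁻¹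
  have hκ : 0 < κ := by positivity
  have hmass := (rpow_mul_setIntegral_sq_le (τ := τ) (σ := σ) (half_pos ha) (by linarith)
    (by linarith) hκ.le hu hχ measurableSet_ball hann
    (fun z hz => hχ₁ z (by nlinarith [(hnorm hz).1]) (by nlinarith [(hnorm hz).2]))
    (fun z hz => (hnorm hz).2)
    fun z hz => max_le_edgeFactor hδ (by linarith) ha hz (hann hz)).trans hE
  have hI := le_threeBallBound_of_rpow_mul_le hδ (by linarith) (by linarith) ha hy₀ hb₀
    (le_max_left _ _) (le_max_right _ _) hK hmass
  calc u y ^ 2 ≤ C * ((δ * ‖y‖) ^ n)⁻¹ * (((1 + δ) * ‖y‖) ^ n *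
        (K * threeBallBound δ τ σ a ‖y‖ b M₁ M₂)) := hpoint.trans (by gcongr)
    _ = _ := by
      rw [mul_pow, mul_pow]
      field_simp

end ThreeBalls

section SupAbs

variable {n : ℕ} {u : Euc n → ℝ} {p q : Euc n} {r s c : ℝ}

lemma abs_le_supAbs_ball (hu : Continuous u) {x : Euc n} (hx : x ∈ ball p r) :
    |u x| ≤ supAbs u (ball p r) :=
  le_csSup (((isCompact_closedBall p r).bddAbove_image hu.abs.continuousOn).mono
    (image_mono ball_subset_closedBall)) ⟨x, hx, rfl⟩

lemma supAbs_ball_le (hr : 0 < r) (h : ∀ x ∈ ball p r, |u x| ≤ c) : supAbs u (ball p r) ≤ c :=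
  csSup_le ((nonempty_ball.2 hr).image _) (forall_mem_image.2 h)

lemma supAbs_nonneg (u : Euc n → ℝ) (s : Set (Euc n)) : 0 ≤ supAbs u s :=
  Real.sSup_nonneg (forall_mem_image.2 fun _ _ => abs_nonneg _)

lemma supAbs_ball_mono (hu : Continuous u) (hr : 0 < r) (h : ball p r ⊆ ball q s) :
    supAbs u (ball p r) ≤ supAbs u (ball q s) :=
  supAbs_ball_le hr fun _ hx => abs_le_supAbs_ball hu (h hx)

lemma exists_lt_abs_of_lt_supAbs_ball (hr : 0 < r) (hc : c < supAbs u (ball p r)) :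
    ∃ x ∈ ball p r, c < |u x| := by
  simpa using exists_lt_of_lt_csSup ((nonempty_ball.2 hr).image _) hc

end SupAbs

section GrowthPropagation

variable {n : ℕ} {δ : ℝ}

theorem exists_sq_le_threeBallBound (hn : 2 ≤ n) (hδ : 0 < δ) (hδ₈ : δ ≤ 1 / 8) :
    ∃ C ρ₀ : ℝ, 0 ≤ C ∧ 0 < ρ₀ ∧ ρ₀ ≤ 1 ∧
      ∀ (u : Euc n → ℝ) (p q : Euc n) (a b τ σ : ℝ), IsSmooth u → 0 < a → 4 * a ≤ b → b ≤ ρ₀ →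
        6 ≤ τ → 3 ≤ σ → σ ≤ τ / 2 → (∀ x ∈ ball p b, |lap (lap u) x| ≤ |u x|) → a ≤ dist q p →
        dist q p ≤ b / 2 → u q ^ 2 ≤ C *
          threeBallBound δ τ σ a (dist q p) b (supAbs u (ball p a)) (supAbs u (ball p b)) := by
  obtain ⟨C, ρ₀, hC, hρ₀, hρ₁, hle⟩ := exists_sq_le_threeBallBound_zero hn hδ hδ₈
  refine ⟨C, ρ₀, hC, hρ₀, hρ₁, fun u p q a b τ σ hu ha hab hb hτ hσ hστ hlap hqa hqb => ?_⟩
  have hmem {r : ℝ} {x : Euc n} (hx : ‖x‖ < r) : p + x ∈ ball p r := by simpa using hx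
  have hlap' (x : Euc n) : lap (lap fun z => u (p + z)) x = lap (lap u) (p + x) := by
    rw [funext (lap_comp_add_left u p), lap_comp_add_left]
  rw [dist_eq_norm] at hqa hqb ⊢
  simpa using hle a b τ σ _ _ _ (q - p) ha hab hb hτ hσ hστ (hu.comp_add_left p)
    (fun x hx => (hlap' x).symm ▸ hlap _ (hmem hx))
    (fun x hx => abs_le_supAbs_ball hu.continuous (hmem hx))
    (fun x hx => abs_le_supAbs_ball hu.continuous (hmem hx)) hqa hqb

lemma one_add_half_le_two_rpow {e : ℝ} (he : 0 ≤ e) : 1 + e / 2 ≤ 2 ^ e := by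
  rw [Real.rpow_def_of_pos two_pos]
  nlinarith [Real.add_one_le_exp (Real.log 2 * e), Real.log_two_gt_d9]

lemma mul_rpow_mul_rpow_le {C m τ σ X P Q k l : ℝ} (hX : 2 ≤ X) (hm : 0 ≤ m) (hC : 16 * C ≤ 2 ^ m)
    (hτ : 0 ≤ τ) (hσ : 0 ≤ σ) (hP₀ : 0 ≤ P) (hP : P ≤ X ^ k) (hQ₀ : 0 ≤ Q) (hQ : Q ≤ X ^ l) :
    16 * (C * 4 ^ σ * (P ^ (2 * σ + 2) * Q ^ (2 * τ))) ≤
      X ^ (m + 2 * σ + k * (2 * σ + 2) + l * (2 * τ)) := by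
  have hX₀ : 0 < X := by linarith
  have hfour : (4 : ℝ) ^ σ ≤ X ^ (2 * σ) := by
    rw [Real.rpow_mul hX₀.le, Real.rpow_two]
    gcongr
    nlinarith
  calc _ = 16 * C * 4 ^ σ * (P ^ (2 * σ + 2) * Q ^ (2 * τ)) := by ring
    _ ≤ X ^ m * X ^ (2 * σ) * ((X ^ k) ^ (2 * σ + 2) * (X ^ l) ^ (2 * τ)) := by
      gcongr
      exact hC.trans (by gcongr)
    _ = _ := by
      simp only [← Real.rpow_mul hX₀.le, ← Real.rpow_add hX₀]
      ring_nf

lemma threeBallBound_inner_le {C m e τ σ N S T θ : ℝ} (hS : 2 ≤ S) (hT₀ : 0 < T) (hT : T ≤ S)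
    (hm : 0 ≤ m) (hC : 16 * C ≤ 2 ^ m) (hθ₀ : 0 < θ) (hθ : θ ≤ 2 ^ e) (he : 0 ≤ e) (hτ : 0 ≤ τ)
    (hσ : 0 ≤ σ) (hN : m + 2 * σ + 3 * (2 * σ + 2) + (1 + e) * (2 * τ) ≤ 2 * N) :
    16 * (C * 4 ^ σ * ((4 * T) ^ (2 * σ + 2) * (θ * T) ^ (2 * τ))) ≤ (S ^ N) ^ 2 := by
  have hS₀ : 0 < S := by linarith
  have hP : 4 * T ≤ S ^ (3 : ℝ) := by
    rw [show (3 : ℝ) = (3 : ℕ) by norm_num, Real.rpow_natCast]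
    nlinarith [mul_nonneg hS₀.le (by nlinarith : 0 ≤ S ^ 2 - 4)]
  have hQ : θ * T ≤ S ^ (1 + e) := by
    rw [add_comm, Real.rpow_add hS₀, Real.rpow_one]
    gcongr
    exact hθ.trans (by gcongr)
  refine (mul_rpow_mul_rpow_le hS hm hC hτ hσ (by positivity) hP (by positivity) hQ).trans ?_
  rw [← Real.rpow_two, ← Real.rpow_mul hS₀.le, mul_comm N]
  gcongr
  linarith

lemma threeBallBound_outer_le {C m e τ σ N S T θ : ℝ} (hS : 2 ≤ S) (hT : S ≤ T) (hm : 0 ≤ m)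
    (hC : 16 * C ≤ 2 ^ m) (hθ₀ : 0 < θ) (hθ : θ ≤ 2 ^ e) (he : 0 ≤ e) (hτ : 0 ≤ τ) (hσ : 0 ≤ σ)
    (hN₀ : 0 ≤ N)
    (hN : m + 2 * σ + 2 * (2 * σ + 2) + (e - 1) * (2 * τ) ≤ -(2 * N)) :
    16 * (C * 4 ^ σ * ((2 * T) ^ (2 * σ + 2) * (θ * T⁻¹) ^ (2 * τ))) * (S ^ N) ^ 2 ≤ 1 := by
  have hS₀ : 0 < S := by linarith
  have hT₂ : 2 ≤ T := hS.trans hT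
  have hT₀ : 0 < T := hS₀.trans_le hT
  have hP : 2 * T ≤ T ^ (2 : ℝ) := by
    rw [Real.rpow_two]
    nlinarith
  have hQ : θ * T⁻¹ ≤ T ^ (e - 1) := by
    rw [Real.rpow_sub hT₀, Real.rpow_one, ← div_eq_mul_inv]
    gcongr
    exact hθ.trans (by gcongr)
  calc _ ≤ T ^ (-(2 * N)) * (T ^ N) ^ 2 := by
        gcongr ?_ * (?_ ^ N) ^ 2
        refine (mul_rpow_mul_rpow_le hT₂ hm hC hτ hσ (by positivity) hP (by positivity) hQ).trans ?_
        gcongr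
        linarith
    _ = 1 := by
      rw [← Real.rpow_two, ← Real.rpow_mul hT₀.le, ← Real.rpow_add hT₀, mul_comm N,
        neg_add_cancel, Real.rpow_zero]

lemma exists_carleman_exponents {e m N : ℝ} (he : 0 < e) (he₁ : e ≤ 1 / 20) (hm : 0 ≤ m)
    (hN : 12 + m ≤ e ^ 2 * N) : ∃ τ σ : ℝ, 6 ≤ τ ∧ 3 ≤ σ ∧ σ ≤ τ / 2 ∧
      m + 2 * σ + 3 * (2 * σ + 2) + (1 + e) * (2 * τ) ≤ 2 * N ∧
      m + 2 * σ + 2 * (2 * σ + 2) + (e - 1) * (2 * τ) ≤ -(2 * ((1 - 20 * e) * N)) := by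
  have hN₀ : 0 < N := pos_of_mul_pos_right (by linarith : 0 < e ^ 2 * N) (sq_nonneg e)
  have heN : e ^ 2 * N ≤ e * N / 20 := by nlinarith [mul_pos he hN₀]
  have heN₁ : e * N ≤ N / 20 := by nlinarith
  refine ⟨(1 - 6 * e) * N, e * ((1 - 6 * e) * N), ?_, ?_, ?_, ?_, ?_⟩ <;> nlinarith

lemma exists_half_supAbs_lt {u : Euc n → ℝ} {p : Euc n} {a s : ℝ} (hu : Continuous u) (hs : 0 < s)
    (hpos : 0 < supAbs u (ball p s)) (has : 2 * supAbs u (ball p a) ≤ supAbs u (ball p s)) :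
    ∃ q, a ≤ dist q p ∧ dist q p < s ∧ supAbs u (ball p s) / 2 < |u q| := by
  obtain ⟨q, hqs, hq⟩ := exists_lt_abs_of_lt_supAbs_ball hs (half_lt_self hpos)
  refine ⟨q, le_of_not_gt fun hqa => ?_, hqs, hq⟩
  linarith [abs_le_supAbs_ball hu hqa]

lemma mul_le_of_sq_half_le {A₁ A₂ G P M₁ M₂ M₃ : ℝ} (hle : (M₂ / 2) ^ 2 ≤ A₁ * M₁ ^ 2 + A₂ * M₃ ^ 2)
    (hA₁ : 16 * A₁ ≤ G ^ 2) (hG : G * M₁ ≤ M₂) (hA₂ : 16 * A₂ * P ^ 2 ≤ 1) (hGM : 0 ≤ G * M₁)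
    (hM₃ : 0 ≤ M₃) : P * M₂ ≤ M₃ := by
  have hinner : 16 * A₁ * M₁ ^ 2 ≤ M₂ ^ 2 :=
    calc 16 * A₁ * M₁ ^ 2 ≤ G ^ 2 * M₁ ^ 2 := by gcongr
      _ = (G * M₁) ^ 2 := by ring
      _ ≤ M₂ ^ 2 := by gcongr
  have hM₂ : M₂ ^ 2 ≤ 16 * A₂ * M₃ ^ 2 := by nlinarith
  refine le_of_sq_le_sq ?_ hM₃
  calc (P * M₂) ^ 2 = P ^ 2 * M₂ ^ 2 := by ring
    _ ≤ P ^ 2 * (16 * A₂ * M₃ ^ 2) := by gcongr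
    _ = 16 * A₂ * P ^ 2 * M₃ ^ 2 := by ring
    _ ≤ 1 * M₃ ^ 2 := by gcongr
    _ = M₃ ^ 2 := one_mul _

lemma rpow_mul_le_of_sq_le_threeBallBound {C m e τ σ a t s b N L M₁ M₂ M₃ : ℝ} (ha : 0 < a)
    (hat : a ≤ t) (hts : t ≤ s) (has : 2 * a ≤ s) (hsb : 2 * s ≤ b) (hm : 0 ≤ m)
    (hC : 16 * C ≤ 2 ^ m) (he : 0 < e) (he₁ : e ≤ 1) (hτ : 0 ≤ τ) (hσ : 0 ≤ σ) (hL : 0 ≤ L)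
    (hinner : m + 2 * σ + 3 * (2 * σ + 2) + (1 + e) * (2 * τ) ≤ 2 * N)
    (houter : m + 2 * σ + 2 * (2 * σ + 2) + (e - 1) * (2 * τ) ≤ -(2 * L)) (hM₁ : 0 ≤ M₁)
    (hM₃ : 0 ≤ M₃) (hgrowth : (s / a) ^ N * M₁ ≤ M₂)
    (hle : (M₂ / 2) ^ 2 ≤ C * threeBallBound (e / 8) τ σ a t b M₁ M₃) : (b / s) ^ L * M₂ ≤ M₃ := by
  have ht : 0 < t := ha.trans_le hat
  have hs : 0 < s := ht.trans_le hts
  have hδ : 0 < 1 - 2 * (e / 8) := by linarith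
  have hθ : (1 + e / 8) / (1 - 2 * (e / 8)) ≤ 2 ^ e := by
    refine le_trans ?_ (one_add_half_le_two_rpow he.le)
    rw [div_le_iff₀ hδ]
    nlinarith
  have hθ₀ : 0 < (1 + e / 8) / (1 - 2 * (e / 8)) := div_pos (by linarith) hδ
  have hA₁ := threeBallBound_inner_le ((le_div_iff₀ ha).2 has) (div_pos ht ha) (by gcongr) hm hC hθ₀
    hθ he.le hτ hσ hinner
  have hA₂ := threeBallBound_outer_le ((le_div_iff₀ hs).2 hsb) (T := b / t)
    (div_le_div_of_nonneg_left (by linarith) ht hts) hm hC hθ₀ hθ he.le hτ hσ hL houter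
  refine mul_le_of_sq_half_le (hle.trans_eq ?_) hA₁ hgrowth hA₂ (by positivity) hM₃
  rw [threeBallBound]
  ring

/- The Carleman exponent is tied to the growth: `τ` slightly below `N` makes the contribution of the
inner ball negligible at a point where `|u|` nearly attains its supremum over the middle ball, so
that the outer ball has to carry the inequality. -/
theorem exists_rpow_mul_supAbs_le (hn : 2 ≤ n) {ε : ℝ} (hε : 0 < ε) (hε₁ : ε ≤ 1) :
    ∃ N₀ ρ₀ : ℝ, 0 < N₀ ∧ 0 < ρ₀ ∧ ρ₀ ≤ 1 ∧ ∀ (u : Euc n → ℝ) (p : Euc n) (a s b N : ℝ),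
      IsSmooth u → 0 < a → 2 * a ≤ s → 2 * s ≤ b → b ≤ ρ₀ → N₀ ≤ N →
      (∀ x ∈ ball p b, |lap (lap u) x| ≤ |u x|) → 0 < supAbs u (ball p a) →
      (s / a) ^ N * supAbs u (ball p a) ≤ supAbs u (ball p s) →
      (b / s) ^ ((1 - ε) * N) * supAbs u (ball p s) ≤ supAbs u (ball p b) := by
  obtain ⟨e, rfl⟩ : ∃ e, ε = 20 * e := ⟨ε / 20, by ring⟩
  have he : 0 < e := by linarith
  obtain ⟨C, ρ₀, hC, hρ₀, hρ₁, hle⟩ := exists_sq_le_threeBallBound hn (δ := e / 8) (by linarith)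
    (by linarith)
  obtain ⟨m, hm, hCm⟩ : ∃ m : ℝ, 0 ≤ m ∧ 16 * C ≤ 2 ^ m :=
    ⟨Real.logb 2 (16 * C + 1), Real.logb_nonneg one_lt_two (by linarith), by
      rw [Real.rpow_logb two_pos (by norm_num) (by linarith)]; linarith⟩
  refine ⟨(12 + m) / e ^ 2, ρ₀, by positivity, hρ₀, hρ₁,
    fun u p a s b N hu ha has hsb hb hN hlap hpos hgrowth => ?_⟩
  rw [div_le_iff₀' (by positivity)] at hN
  have hN₁ : 1 ≤ N := by nlinarith
  obtain ⟨τ, σ, hτ, hσ, hστ, hinner, houter⟩ := exists_carleman_exponents he (by linarith) hm hN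
  have hdouble : 2 * supAbs u (ball p a) ≤ supAbs u (ball p s) := by
    refine (mul_le_mul_of_nonneg_right ?_ hpos.le).trans hgrowth
    have hratio : 2 ≤ s / a := (le_div_iff₀ ha).2 has
    exact hratio.trans (Real.self_le_rpow_of_one_le (by linarith) hN₁)
  obtain ⟨q, hqa, hqs, hq⟩ :=
    exists_half_supAbs_lt hu.continuous (by linarith) (by linarith) hdouble
  have hsq := hle u p q a b τ σ hu ha (by linarith) hb hτ hσ hστ hlap hqa (by linarith)
  refine rpow_mul_le_of_sq_le_threeBallBound ha hqa hqs.le has hsb hm hCm he (by linarith)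
    (by linarith) (by linarith) (mul_nonneg (by linarith) (by linarith)) hinner houter hpos.le
    (supAbs_nonneg _ _) hgrowth (le_trans ?_ hsq)
  rw [← sq_abs (u q)]
  exact pow_le_pow_left₀ (div_nonneg (supAbs_nonneg _ _) two_pos.le) hq.le 2

end GrowthPropagation

section Doubling

variable {n : ℕ} {u : Euc n → ℝ} {p : Euc n} {r N : ℝ}

lemma supAbs_pos_of_lt_dbIdx (hN : 0 ≤ N) (h : N < dbIdx u p r) :
    0 < supAbs u (ball p r) ∧ 0 < supAbs u (ball p (2 * r)) := by
  refine ⟨(supAbs_nonneg _ _).lt_of_ne' fun h₀ => ?_, (supAbs_nonneg _ _).lt_of_ne' fun h₀ => ?_⟩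
  all_goals
    simp only [dbIdx, h₀, div_zero, zero_div, Real.logb_zero] at h
    linarith

lemma rpow_mul_supAbs_le_of_lt_dbIdx (hN : 0 ≤ N) (h : N < dbIdx u p r) :
    2 ^ N * supAbs u (ball p r) ≤ supAbs u (ball p (2 * r)) := by
  obtain ⟨hpos, hpos₂⟩ := supAbs_pos_of_lt_dbIdx hN h
  rw [dbIdx, Real.lt_logb_iff_rpow_lt one_lt_two (div_pos hpos₂ hpos), lt_div_iff₀ hpos] at h
  exact h.le

lemma le_dbIdx_of_rpow_mul_supAbs_le (hpos : 0 < supAbs u (ball p r))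
    (h : 2 ^ N * supAbs u (ball p r) ≤ supAbs u (ball p (2 * r))) : N ≤ dbIdx u p r := by
  have hpos₂ : 0 < supAbs u (ball p (2 * r)) := lt_of_lt_of_le (by positivity) h
  rwa [dbIdx, Real.le_logb_iff_rpow_le one_lt_two (div_pos hpos₂ hpos), le_div_iff₀ hpos]

/-- Growth of `|u|` of order at least `N₀` on concentric balls propagates to larger balls inside `Ω`
of radius at most `ρ₀`, up to the factor `(1 - ε) ^ 2` in the exponent. -/
def PropagatesGrowth (u : Euc n → ℝ) (Ω : Set (Euc n)) (ε N₀ ρ₀ : ℝ) : Prop :=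
  ∀ (p : Euc n) (a s R κ N : ℝ), 0 < a → 2 * a ≤ s → 2 * s ≤ R → 2 ≤ κ → κ * R ≤ ρ₀ → N₀ ≤ N →
    ball p (κ * R) ⊆ Ω → 0 < supAbs u (ball p a) →
    (s / a) ^ N * supAbs u (ball p a) ≤ supAbs u (ball p s) →
    κ ^ ((1 - ε) ^ 2 * N) * supAbs u (ball p R) ≤ supAbs u (ball p (κ * R))

theorem exists_propagatesGrowth (hn : 2 ≤ n) {ε : ℝ} (hε : 0 < ε) (hε₁ : ε ≤ 1 / 2) :
    ∃ N₀ ρ₀ : ℝ, 0 < N₀ ∧ 0 < ρ₀ ∧ ρ₀ ≤ 1 ∧ ∀ (u : Euc n → ℝ) (Ω : Set (Euc n)), IsSmooth u →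
      (∀ x ∈ Ω, |lap (lap u) x| ≤ |u x|) → PropagatesGrowth u Ω ε N₀ ρ₀ := by
  obtain ⟨N₀, ρ₀, hN₀, hρ₀, hρ₁, hgrowth⟩ := exists_rpow_mul_supAbs_le hn hε (by linarith : ε ≤ 1)
  refine ⟨2 * N₀, ρ₀, by positivity, hρ₀, hρ₁,
    fun u Ω hu hlap p a s R κ N ha has hsR hκ hκR hN hΩ hpos h => ?_⟩
  have hs : 0 < s := by linarith
  have hR : 0 < R := by linarith
  have hRκ : R ≤ κ * R := by nlinarith
  have hsa : 1 ≤ s / a := (le_div_iff₀ ha).2 (by linarith)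
  have hR₁ := hgrowth u p a s R N hu ha has hsR (by linarith) (by linarith)
    (fun x hx => hlap x (hΩ (ball_subset_ball hRκ hx))) hpos h
  have hR₂ : (R / a) ^ ((1 - ε) * N) * supAbs u (ball p a) ≤ supAbs u (ball p R) :=
    calc _ = (R / s) ^ ((1 - ε) * N) * ((s / a) ^ ((1 - ε) * N) * supAbs u (ball p a)) := by
          rw [← mul_assoc, ← Real.mul_rpow (by positivity) (by positivity),
            div_mul_div_cancel₀ hs.ne']
      _ ≤ (R / s) ^ ((1 - ε) * N) * ((s / a) ^ N * supAbs u (ball p a)) := by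
          gcongr
          nlinarith
      _ ≤ (R / s) ^ ((1 - ε) * N) * supAbs u (ball p s) := by gcongr
      _ ≤ _ := hR₁
  have hκR' := hgrowth u p a R (κ * R) ((1 - ε) * N) hu ha (by linarith) (by nlinarith) hκR
    (by nlinarith) (fun x hx => hlap x (hΩ hx)) hpos hR₂
  rwa [mul_div_cancel_right₀ _ hR.ne', ← mul_assoc, ← sq] at hκR'

variable {Ω : Set (Euc n)} {ε N₀ ρ₀ : ℝ}

lemma PropagatesGrowth.rpow_mul_supAbs_le_of_lt_dbIdx (h : PropagatesGrowth u Ω ε N₀ ρ₀) {R t : ℝ}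
    (hr : 0 < r) (hrR : 4 * r ≤ R) (ht : 2 ≤ t) (htR : t * R ≤ ρ₀) (hN₀ : N₀ ≤ N) (hN : 0 ≤ N)
    (hΩ : ball p (t * R) ⊆ Ω) (hdb : N < dbIdx u p r) :
    t ^ ((1 - ε) ^ 2 * N) * supAbs u (ball p R) ≤ supAbs u (ball p (t * R)) := by
  refine h p r (2 * r) R t N hr le_rfl (by linarith) ht htR hN₀ hΩ
    (supAbs_pos_of_lt_dbIdx hN hdb).1 ?_
  rw [mul_div_cancel_right₀ _ hr.ne']
  exact _root_.rpow_mul_supAbs_le_of_lt_dbIdx hN hdb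

lemma PropagatesGrowth.le_dbIdx (h : PropagatesGrowth u Ω ε N₀ ρ₀) (hu : Continuous u) {a s : ℝ}
    (ha : 0 < a) (has : 2 * a ≤ s) (hs : 2 * (2 * s) ≤ ρ₀) (hN : N₀ ≤ N)
    (hΩ : ball p (2 * (2 * s)) ⊆ Ω) (hpos : 0 < supAbs u (ball p a))
    (hgrowth : (s / a) ^ N * supAbs u (ball p a) ≤ supAbs u (ball p s)) :
    (1 - ε) ^ 2 * N ≤ dbIdx u p (2 * s) :=
  le_dbIdx_of_rpow_mul_supAbs_le
    (hpos.trans_le (supAbs_ball_mono hu ha (ball_subset_ball (by linarith))))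
    (h p a s (2 * s) 2 N ha has le_rfl le_rfl hs hN hΩ hpos hgrowth)

/- Compare the supremum over the large ball with the one around the best vertex: the ratio of the
central radii is smaller than `t`, so the exponent of growth has increased. -/
lemma rpow_mul_supAbs_le_of_ball_subset_iUnion {ι : Type*} [Finite ι] [Nonempty ι] {x : ι → Euc n}
    {d δ ρ t M : ℝ} (hu : Continuous u) (hρ : 0 < ρ) (hδ : 0 ≤ δ) (ht : 0 < t)
    (hdist : ∀ i, dist (x i) p ≤ d) (hd : 2 * d ≤ t * δ * ρ)
    (hcover : ball p ((1 + δ) * ρ) ⊆ ⋃ i, ball (x i) ρ)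
    (hgrowth : ∀ i, t ^ M * supAbs u (ball (x i) ρ) ≤ supAbs u (ball (x i) (t * ρ))) :
    t ^ M * supAbs u (ball p ((1 + δ) * ρ)) ≤ supAbs u (ball p ((1 + δ / 2) * t * ρ)) := by
  obtain ⟨j, hj⟩ := Finite.exists_max fun i => supAbs u (ball (x i) ρ)
  calc t ^ M * supAbs u (ball p ((1 + δ) * ρ)) ≤ t ^ M * supAbs u (ball (x j) ρ) := by
        gcongr
        refine supAbs_ball_le (by positivity) fun z hz => ?_
        obtain ⟨i, hi⟩ := mem_iUnion.1 (hcover hz)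
        exact (abs_le_supAbs_ball hu hi).trans (hj i)
    _ ≤ supAbs u (ball (x j) (t * ρ)) := hgrowth j
    _ ≤ _ := supAbs_ball_mono hu (by positivity) (ball_subset_ball' (by linarith [hdist j]))

lemma PropagatesGrowth.le_dbIdx_of_ball_subset_iUnion {ι : Type*} [Finite ι] [Nonempty ι]
    (h : PropagatesGrowth u Ω ε N₀ ρ₀) (hu : Continuous u) {x : ι → Euc n} {d δ ρ t Λ : ℝ}
    (hε : ε ≤ 1 / 2) (hN₀ : 0 ≤ N₀) (hN : 4 * N₀ ≤ N) (hρ : 0 < ρ) (hδ : 0 ≤ δ) (ht : 2 ≤ t)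
    (hΛ : 1 ≤ Λ) (hratio : 2 ≤ (1 + δ / 2) * t / (1 + δ))
    (hpow : ((1 + δ / 2) * t / (1 + δ)) ^ Λ = t) (hdist : ∀ i, dist (x i) p ≤ d)
    (hdρ : 2 * d ≤ ρ) (hd : 2 * d ≤ t * δ * ρ) (hcover : ball p ((1 + δ) * ρ) ⊆ ⋃ i, ball (x i) ρ)
    (hρ₀ : 2 * (2 * ((1 + δ / 2) * t * ρ)) ≤ ρ₀)
    (hpΩ : ball p (2 * (2 * ((1 + δ / 2) * t * ρ))) ⊆ Ω) (hxΩ : ∀ i, ball (x i) (t * ρ) ⊆ Ω)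
    (hdb : ∀ i, ∃ r, 0 < r ∧ 4 * r ≤ ρ ∧ N < dbIdx u (x i) r) :
    (1 - ε) ^ 4 * Λ * N ≤ dbIdx u p (2 * ((1 + δ / 2) * t * ρ)) := by
  have htρ : t * ρ ≤ (1 + δ / 2) * t * ρ := by nlinarith [mul_pos (by linarith : 0 < t) hρ]
  have hgrowth : t ^ ((1 - ε) ^ 2 * N) * supAbs u (ball p ((1 + δ) * ρ)) ≤
      supAbs u (ball p ((1 + δ / 2) * t * ρ)) := by
    refine rpow_mul_supAbs_le_of_ball_subset_iUnion hu hρ hδ (by linarith) hdist hd hcover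
      fun i => ?_
    obtain ⟨r, hr, hrρ, hdbr⟩ := hdb i
    exact h.rpow_mul_supAbs_le_of_lt_dbIdx hr hrρ ht (by nlinarith) (by linarith) (by linarith)
      (hxΩ i) hdbr
  have hpos : 0 < supAbs u (ball p ((1 + δ) * ρ)) := by
    obtain ⟨i⟩ := ‹Nonempty ι›
    obtain ⟨r, hr, hrρ, hdbr⟩ := hdb i
    refine (supAbs_pos_of_lt_dbIdx (by linarith) hdbr).1.trans_le
      (supAbs_ball_mono hu hr (ball_subset_ball' ?_))
    nlinarith [hdist i]
  have hN' : N₀ ≤ Λ * ((1 - ε) ^ 2 * N) := by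
    have : 1 / 4 ≤ (1 - ε) ^ 2 := by nlinarith
    nlinarith [mul_nonneg (sq_nonneg (1 - ε)) (by linarith : 0 ≤ N)]
  have hquot : (1 + δ / 2) * t * ρ / ((1 + δ) * ρ) = (1 + δ / 2) * t / (1 + δ) :=
    mul_div_mul_right _ _ hρ.ne'
  have hdouble := h.le_dbIdx hu (a := (1 + δ) * ρ) (by positivity)
    (by rwa [← hquot, le_div_iff₀ (by positivity)] at hratio) hρ₀ hN' hpΩ hpos
    (by rwa [hquot, Real.rpow_mul (by linarith), hpow])
  linarith

end Doubling

section Barycenter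

variable {n : ℕ} {x : Fin (n + 1) → Euc n} {d γ : ℝ}

/-- The barycenter of the simplex with vertices `x i`. -/
abbrev barycenter {n : ℕ} (x : Fin (n + 1) → Euc n) : Euc n :=
  (n + 1 : ℝ)⁻¹ • ∑ i, x i

lemma barycenter_mem_convexHull (x : Fin (n + 1) → Euc n) :
    barycenter x ∈ convexHull ℝ (range x) := by
  rw [barycenter, Finset.smul_sum]
  refine (convex_convexHull ℝ _).sum_mem (fun _ _ => by positivity) ?_
    fun i _ => subset_convexHull ℝ _ (mem_range_self i)
  simp [mul_inv_cancel₀ (by positivity : (n + 1 : ℝ) ≠ 0)]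

lemma sub_le_mul_max_sub_average {a : Fin (n + 1) → ℝ} {m : ℝ} (hm : ∀ k, a k ≤ m)
    (j : Fin (n + 1)) : m - a j ≤ (n + 1) * m - ∑ k, a k := by
  calc m - a j ≤ ∑ k, (m - a k) :=
        Finset.single_le_sum (fun k _ => sub_nonneg.2 (hm k)) (Finset.mem_univ j)
    _ = (n + 1) * m - ∑ k, a k := by simp [Finset.sum_sub_distrib]

lemma exists_simplexWidth_div_le_inner (x : Fin (n + 1) → Euc n) {v : Euc n} (hv : ‖v‖ = 1) :
    ∃ i, simplexWidth x / (n + 1) ≤ ⟪x i - barycenter x, v⟫ := by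
  have hwidth : simplexWidth x ≤ Finset.univ.sup' Finset.univ_nonempty (fun i => ⟪x i, v⟫) -
      Finset.univ.inf' Finset.univ_nonempty fun i => ⟪x i, v⟫ := by
    refine csInf_le ⟨0, forall_mem_image.2 fun w _ => sub_nonneg.2 ?_⟩
      ⟨v, mem_sphere_zero_iff_norm.2 hv, rfl⟩
    exact (Finset.inf'_le _ (Finset.mem_univ 0)).trans
      (Finset.le_sup' (fun i => ⟪x i, w⟫) (Finset.mem_univ 0))
  obtain ⟨i, -, hi⟩ := Finset.exists_mem_eq_sup' Finset.univ_nonempty fun i => ⟪x i, v⟫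
  obtain ⟨j, -, hj⟩ := Finset.exists_mem_eq_inf' Finset.univ_nonempty fun i => ⟪x i, v⟫
  have hle := sub_le_mul_max_sub_average (a := fun k => ⟪x k, v⟫)
    (fun k => hi ▸ Finset.le_sup' (fun i => ⟪x i, v⟫) (Finset.mem_univ k)) j
  have hn : (0 : ℝ) < n + 1 := by positivity
  refine ⟨i, ?_⟩
  rw [div_le_iff₀ hn, inner_sub_left, real_inner_smul_left, sum_inner, sub_mul, mul_comm _⁻¹,
    mul_assoc, inv_mul_cancel₀ hn.ne', mul_one]
  linarith

lemma norm_sub_lt_of_le_inner {q w : Euc n} {g ρ : ℝ} (hg : 0 < g) (hg₁ : g ≤ 1)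
    (hq : ρ / 2 ≤ ‖q‖) (hqρ : ‖q‖ < (1 + g ^ 2 / 12) * ρ) (hw : ‖w‖ ≤ ρ * g / 2)
    (hinner : g * (ρ * g / 2) * ‖q‖ ≤ ⟪w, q⟫) : ‖q - w‖ < ρ := by
  have hρ : 0 < ρ := by
    by_contra! hρ
    nlinarith [norm_nonneg q, sq_nonneg g]
  refine lt_of_pow_lt_pow_left₀ 2 hρ.le ?_
  calc ‖q - w‖ ^ 2 = ‖q‖ ^ 2 - 2 * ⟪w, q⟫ + ‖w‖ ^ 2 := by
        rw [norm_sub_sq_real, real_inner_comm]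
    _ ≤ ((1 + g ^ 2 / 12) * ρ) ^ 2 - 2 * (g * (ρ * g / 2) * (ρ / 2)) + (ρ * g / 2) ^ 2 := by
      gcongr
      exact (mul_le_mul_of_nonneg_left hq (by positivity)).trans hinner
    _ = ρ ^ 2 - ρ ^ 2 * g ^ 2 * (12 - g ^ 2) / 144 := by ring
    _ < ρ ^ 2 := sub_lt_self _ (div_pos (mul_pos (by positivity) (by nlinarith)) (by norm_num))

/- Some vertex lies at distance at least `width / (n + 1)` from the barycenter in the direction of
`z`, and is therefore closer to `z` than the barycenter is. -/
lemma ball_barycenter_subset_iUnion {g : ℝ} (hg : 0 < g) (hg₁ : g ≤ 1)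
    (hwidth : g * d ≤ simplexWidth x / (n + 1)) (hdist : ∀ i, dist (x i) (barycenter x) ≤ d) :
    ball (barycenter x) ((1 + g ^ 2 / 12) * (2 / g * d)) ⊆ ⋃ i, ball (x i) (2 / g * d) := by
  set ρ := 2 / g * d with hρd
  have hdρ : d = ρ * g / 2 := by
    rw [hρd]
    field_simp
  intro z hz
  rw [mem_ball] at hz
  simp only [mem_iUnion, mem_ball]
  have hρ : 0 < ρ := pos_of_mul_pos_right (dist_nonneg.trans_lt hz) (by positivity)
  rcases lt_or_ge (dist z (barycenter x)) (ρ / 2) with hlt | hge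
  · exact ⟨0, by nlinarith [dist_triangle_right z (x 0) (barycenter x), hdist 0]⟩
  rw [dist_eq_norm] at hz hge
  set q := z - barycenter x
  have hq₀ : 0 < ‖q‖ := by linarith
  obtain ⟨i, hi⟩ := exists_simplexWidth_div_le_inner x (v := ‖q‖⁻¹ • q)
    (by rw [norm_smul, norm_inv, norm_norm, inv_mul_cancel₀ hq₀.ne'])
  replace hi := hwidth.trans hi
  rw [real_inner_smul_right, inv_mul_eq_div, le_div_iff₀ hq₀, hdρ] at hi
  refine ⟨i, ?_⟩
  rw [dist_eq_norm, ← sub_sub_sub_cancel_right z (x i) (barycenter x)]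
  exact norm_sub_lt_of_le_inner hg hg₁ hge hz (by rw [← dist_eq_norm, ← hdρ]; exact hdist i) hi

end Barycenter

section Constants

lemma exists_ratio_exponent {δ : ℝ} (hδ : 0 < δ) (T : ℝ) :
    ∃ t Λ : ℝ, T ≤ t ∧ 1 < Λ ∧ 2 ≤ (1 + δ / 2) * t / (1 + δ) ∧
      ((1 + δ / 2) * t / (1 + δ)) ^ Λ = t := by
  have ht : 4 ≤ max 4 T := le_max_left _ _
  set t := max 4 T
  have hQ : 2 ≤ (1 + δ / 2) * t / (1 + δ) := by
    rw [le_div_iff₀ (by linarith)]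
    nlinarith
  have hQt : (1 + δ / 2) * t / (1 + δ) < t := by
    rw [div_lt_iff₀ (by linarith)]
    nlinarith
  exact ⟨t, Real.logb _ t, le_max_right _ _,
    (Real.lt_logb_iff_rpow_lt (by linarith) (by linarith)).2 (by rwa [Real.rpow_one]), hQ,
    Real.rpow_logb (by linarith) (by linarith) (by linarith)⟩

lemma exists_one_add_lt_one_sub_pow_mul {Λ : ℝ} (hΛ : 1 < Λ) :
    ∃ c ε : ℝ, 0 < c ∧ 0 < ε ∧ ε ≤ 1 / 2 ∧ 1 + c < (1 - ε) ^ 4 * Λ := by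
  have hε : (Λ - 1) / (8 * Λ) ≤ 1 / 8 := by
    rw [div_le_iff₀ (by linarith)]
    linarith
  refine ⟨(Λ - 1) / 4, (Λ - 1) / (8 * Λ), by linarith, div_pos (by linarith) (by linarith),
    by linarith, ?_⟩
  calc 1 + (Λ - 1) / 4 < (1 + (4 : ℕ) * -((Λ - 1) / (8 * Λ))) * Λ := by
        field_simp
        push_cast
        linarith
    _ ≤ (1 + -((Λ - 1) / (8 * Λ))) ^ 4 * Λ := by
      gcongr
      exact one_add_mul_le_pow (by linarith) 4
    _ = _ := by rw [← sub_eq_add_neg]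

end Constants

section Main

variable {n : ℕ} {u v f g : Euc n → ℝ} {Ω : Set (Euc n)}

theorem exists_lt_dbIdx_of_ball_subset_iUnion (ι : Type*) [Finite ι] [Nonempty ι] (hn : 2 ≤ n)
    {κ δ : ℝ} (hκ : 2 ≤ κ) (hδ : 0 < δ) :
    ∃ c C r N₀ : ℝ, 0 < c ∧ κ ≤ C ∧ 0 < r ∧
      ∀ (u : Euc n → ℝ) (x : ι → Euc n) (p : Euc n) (d N : ℝ), IsSmooth u → 0 < d → d ≤ r →
        (∀ y ∈ ball p (2 * C * d), |lap (lap u) y| ≤ |u y|) → (∀ i, dist (x i) p ≤ d) →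
        ball p ((1 + δ) * (κ * d)) ⊆ ⋃ i, ball (x i) (κ * d) → N₀ < N →
        (∀ i, ∃ s, 0 < s ∧ 4 * s ≤ κ * d ∧ N < dbIdx u (x i) s) →
        (1 + c) * N < dbIdx u p (C * d) := by
  obtain ⟨t, Λ, ht, hΛ, hratio, hpow⟩ := exists_ratio_exponent hδ (max 2 (2 / (δ * κ)))
  obtain ⟨c, ε, hc, hε, hε₁, hcε⟩ := exists_one_add_lt_one_sub_pow_mul hΛ
  obtain ⟨N₀, ρ₀, hN₀, hρ₀, -, hgrowth⟩ := exists_propagatesGrowth hn hε hε₁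
  obtain ⟨ht₂, htκ⟩ := max_le_iff.1 ht
  rw [div_le_iff₀ (by positivity)] at htκ
  have htκ₀ : 2 * κ ≤ t * κ := by gcongr
  have hκC : κ + 2 * (t * κ) ≤ 2 * (2 * ((1 + δ / 2) * t * κ)) := by
    nlinarith [mul_pos hδ (by linarith : 0 < t * κ)]
  generalize hC : 2 * ((1 + δ / 2) * t * κ) = C at hκC
  have hC₀ : 0 < C := by linarith [mul_pos (by linarith : 0 < t) (by linarith : 0 < κ)]
  refine ⟨c, C, ρ₀ / (2 * C), 4 * N₀, hc, by linarith, by positivity, ?_⟩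
  intro u x p d N hu hd hdr hlap hdist hcover hN hdb
  rw [le_div_iff₀ (by positivity)] at hdr
  have hCd : 2 * ((1 + δ / 2) * t * (κ * d)) = C * d := by rw [← hC]; ring
  have hball : ball p (2 * (2 * ((1 + δ / 2) * t * (κ * d)))) = ball p (2 * C * d) := by
    rw [hCd, mul_assoc]
  calc (1 + c) * N < (1 - ε) ^ 4 * Λ * N := by gcongr; linarith
    _ ≤ dbIdx u p (2 * ((1 + δ / 2) * t * (κ * d))) :=
      (hgrowth u _ hu hlap).le_dbIdx_of_ball_subset_iUnion hu.continuous hε₁ hN₀.le hN.le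
        (by positivity) hδ.le ht₂ hΛ.le hratio hpow hdist (by nlinarith)
        (by nlinarith) hcover (by linarith) hball.subset
        (fun i => ball_subset_ball' (by nlinarith [hdist i])) hdb
    _ = _ := by rw [hCd]

lemma eqOn_lap (hΩ : IsOpen Ω) (h : EqOn f g Ω) : EqOn (lap f) (lap g) Ω :=
  fun _ hx => lap_congr (Filter.eventuallyEq_of_mem (hΩ.mem_nhds hx) h)

lemma exists_isSmooth_eqOn_ball {s R : ℝ} (hs : 0 < s) (hsR : s < R)
    (hu : ContDiffOn ℝ ∞ u (ball 0 R)) : ∃ v : Euc n → ℝ, IsSmooth v ∧ EqOn v u (ball 0 s) := by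
  obtain ⟨C, -, hψ⟩ := exists_isCutoff n hs (left_lt_add_div_two.2 hsR)
  obtain ⟨ψ, hψ⟩ := hψ 1 one_pos
  have hψR : IsTestFun (ball 0 R) ψ := hψ.isTestFun (by linarith)
  refine ⟨fun x => u x * ψ x, (IsTestFun.contDiffOn_mul isOpen_ball hu hψR).smooth, fun x hx => ?_⟩
  have hx' : ‖x‖ ≤ s * 1 := by simpa using (mem_ball_zero_iff.1 hx).le
  simp only [hψ.eq_one x hx', mul_one]

lemma dbIdx_congr {p : Euc n} {r : ℝ} (hr : 0 ≤ r) (h : EqOn v u (ball p (2 * r))) :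
    dbIdx v p r = dbIdx u p r := by
  have hsup {s : Set (Euc n)} (hs : s ⊆ ball p (2 * r)) : supAbs v s = supAbs u s :=
    congrArg sSup (image_congr fun x hx => by rw [h (hs hx)])
  rw [dbIdx, dbIdx, hsup subset_rfl, hsup (ball_subset_ball (by linarith))]

lemma diam_le_two_mul_of_subset_ball {s : Set (Euc n)} {o : Euc n} {r : ℝ} (hr : 0 ≤ r)
    (hs : s ⊆ ball o r) : diam s ≤ 2 * r :=
  (diam_mono hs isBounded_ball).trans (diam_ball hr)

lemma ball_mul_diam_subset {s : Set (Euc n)} {o p : Euc n} {c r : ℝ} (hs : s ⊆ ball o r)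
    (hp : p ∈ s) (hc : 0 ≤ c) : ball p (c * diam s) ⊆ ball o ((1 + 2 * c) * r) := by
  have hdiam := diam_le_two_mul_of_subset_ball (pos_of_mem_ball (hs hp)).le hs
  exact ball_subset_ball' (by nlinarith [mem_ball.1 (hs hp)])

theorem exists_lt_dbIdx_barycenter (hn : 2 ≤ n) {γ : ℝ} (hγ : γ ∈ Ioo (0 : ℝ) 1) :
    ∃ K c C r N₀ : ℝ, 0 < K ∧ 0 < c ∧ K ≤ C ∧ 0 < r ∧ (1 + 4 * C) * r ≤ 1 / 2 ∧
      ∀ (x : Fin (n + 1) → Euc n) (u : Euc n → ℝ) (N : ℝ),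
        γ < simplexWidth x / diam (convexHull ℝ (range x)) → IsSmooth u →
        convexHull ℝ (range x) ⊆ ball 0 r →
        (∀ y ∈ ball (0 : Euc n) (1 / 2), |lap (lap u) y| ≤ |u y|) → N₀ < N →
        (∀ i, ∃ s, 0 < s ∧ s ≤ K * diam (convexHull ℝ (range x)) / 2 ∧ N < dbIdx u (x i) s) →
        (1 + c) * N < dbIdx u (barycenter x) (C * diam (convexHull ℝ (range x))) := by
  obtain ⟨hγ₀, hγ₁⟩ := hγ
  set g := γ / (n + 1) with hg
  have hg₀ : 0 < g := by positivity
  have hg₁ : g ≤ 1 := (div_le_one (by positivity)).2 (by linarith [n.cast_nonneg (α := ℝ)])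
  have hκ : 2 ≤ 2 / g := (le_div_iff₀ hg₀).2 (by linarith)
  obtain ⟨c, C, r, N₀, hc, hκC, hr, h⟩ := exists_lt_dbIdx_of_ball_subset_iUnion (Fin (n + 1)) hn hκ
    (δ := g ^ 2 / 12) (by positivity)
  obtain ⟨ρ, hρ, hρr, hρC⟩ : ∃ ρ : ℝ, 0 < ρ ∧ 2 * ρ ≤ r ∧ (1 + 4 * C) * ρ ≤ 1 / 2 := by
    have hC : 0 < 1 + 4 * C := by linarith
    refine ⟨min (r / 2) (1 / 2 / (1 + 4 * C)), by positivity, ?_, ?_⟩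
    · linarith [min_le_left (r / 2) (1 / 2 / (1 + 4 * C))]
    · exact (le_div_iff₀' hC).1 (min_le_right _ _)
  refine ⟨2 / g / 2, c, C, ρ, N₀, by positivity, hc, by linarith, hρ, hρC,
    fun x u N hwidth hu hsub hlap hN hdb => ?_⟩
  have hball := ball_mul_diam_subset hsub (barycenter_mem_convexHull x)
    (by linarith : 0 ≤ 2 * C)
  have hdr := (diam_le_two_mul_of_subset_ball hρ.le hsub).trans hρr
  set d := diam (convexHull ℝ (range x))
  have hd₀ : 0 ≤ d := diam_nonneg
  have hd : 0 < d := hd₀.lt_of_ne' fun h₀ => by simp [h₀, hγ₀.not_gt] at hwidth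
  have hdist (i) : dist (x i) (barycenter x) ≤ d :=
    dist_le_diam_of_mem (isBounded_ball.subset hsub) (subset_convexHull ℝ _ (mem_range_self i))
      (barycenter_mem_convexHull x)
  have hcover := ball_barycenter_subset_iUnion hg₀ hg₁ (d := d) (by
    rw [hg, div_mul_eq_mul_div]
    gcongr
    exact ((lt_div_iff₀ hd).1 hwidth).le) hdist
  refine h u x _ d N hu hd hdr
    (fun y hy => hlap y (ball_subset_ball (by linarith) (hball hy))) hdist hcover hN fun i => ?_
  obtain ⟨s, hs, hsK, hNs⟩ := hdb i
  exact ⟨s, hs, by linarith, hNs⟩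

end Main

theorem stmt_9 (n : ℕ) (hn : 2 ≤ n) (γ : ℝ) (hγ : γ ∈ Set.Ioo (0 : ℝ) 1) :
    ∃ K c C r N₀ : ℝ, 0 < K ∧ 0 < c ∧ K ≤ C ∧ 0 < r ∧
      ∀ x : Fin (n + 1) → EuclideanSpace ℝ (Fin n), AffineIndependent ℝ x →
        γ < simplexWidth x / diam (convexHull ℝ (Set.range x)) →
      ∀ (W : EuclideanSpace ℝ (Fin n) → ℝ), Measurable W → (∀ y, |W y| ≤ 1) →
      ∀ (u : EuclideanSpace ℝ (Fin n) → ℝ),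
        ContDiffOn ℝ (⊤ : ℕ∞) u (ball (0 : EuclideanSpace ℝ (Fin n)) 1) →
        (∀ y ∈ ball (0 : EuclideanSpace ℝ (Fin n)) 1, lap (lap u) y = W y * u y) →
        (∃ y ∈ ball (0 : EuclideanSpace ℝ (Fin n)) 1, u y ≠ 0) →
        convexHull ℝ (Set.range x) ⊆ ball (0 : EuclideanSpace ℝ (Fin n)) r →
      ∀ N : ℝ, N₀ < N →
        (∀ i : Fin (n + 1), ∃ ri : ℝ, 0 < ri ∧
          ri ≤ K * diam (convexHull ℝ (Set.range x)) / 2 ∧ N < dbIdx u (x i) ri) →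
        (1 + c) * N
          < dbIdx u ((n + 1 : ℝ)⁻¹ • ∑ i, x i) (C * diam (convexHull ℝ (Set.range x))) := by
  obtain ⟨K, c, C, r, N₀, hK, hc, hKC, hr, hCr, h⟩ := exists_lt_dbIdx_barycenter hn hγ
  refine ⟨K, c, C, r, N₀, hK, hc, hKC, hr, fun x _ hwidth W _ hW u hu hlap _ hsub N hN hdb => ?_⟩
  obtain ⟨v, hv, hvu⟩ := exists_isSmooth_eqOn_ball one_half_pos one_half_lt_one hu
  have hvlap := eqOn_lap isOpen_ball (eqOn_lap isOpen_ball hvu)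
  have hd : 0 ≤ diam (convexHull ℝ (range x)) := diam_nonneg
  have hdb_eq {p : Euc n} {s : ℝ} (hp : p ∈ convexHull ℝ (range x)) (hs : 0 ≤ s)
      (hsC : s ≤ C * diam (convexHull ℝ (range x))) : dbIdx v p s = dbIdx u p s := by
    refine dbIdx_congr hs (hvu.mono (((ball_subset_ball ?_).trans (ball_mul_diam_subset hsub hp
      (c := 2 * C) (by linarith))).trans (ball_subset_ball ?_))) <;> linarith
  rw [← hdb_eq (barycenter_mem_convexHull x) (mul_nonneg (hK.le.trans hKC) hd) le_rfl]
  refine h x v N hwidth hv hsub (fun y hy => ?_) hN fun i => ?_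
  · have hy₁ : y ∈ ball (0 : Euc n) 1 := ball_subset_ball one_half_lt_one.le hy
    rw [hvlap hy, hvu hy, hlap y hy₁, abs_mul]
    exact mul_le_of_le_one_left (abs_nonneg _) (hW y)
  · obtain ⟨s, hs, hsK, hNs⟩ := hdb i
    refine ⟨s, hs, hsK, ?_⟩
    rwa [hdb_eq (subset_convexHull ℝ _ (mem_range_self i)) hs.le (by nlinarith)]
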